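/- (Theorem 3, upper bound) There exists an absolute constant c > 0 such that for every n ≥ 2, p ≥ 1, and every origin-symmetric convex body K in ℝⁿ, d_ovr(K, L_p^n) ≤ c·√((n+p)/p). Concretely: with C = K°/|K°|^{1/n} and L = |K°|^{−1/n} Z_p°(C), one has K ⊆ L, L is a unit ball of a subspace of L_p, and (|L|/|K|)^{1/n} ≤ c·√((n+p)/p). -/

import Mathlib

open MeasureTheory Set Metric
open scoped ENNReal RealInnerProductSpace NNReal Pointwise

noncomputable section

abbrev E (n : ℕ) := EuclideanSpace ℝ (Fin n)

/-- A star body: compact, origin in the interior, star-shaped with respect to the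
origin, and with continuous Minkowski functional (gauge). -/
def IsStarBody {n : ℕ} (K : Set (E n)) : Prop :=
  IsCompact K ∧ 0 ∈ interior K ∧
    (∀ x ∈ K, ∀ t : ℝ, 0 ≤ t → t ≤ 1 → t • x ∈ K) ∧ Continuous (gauge K)

/-- An origin-symmetric convex body. -/
def IsSymmetricConvexBody {n : ℕ} (K : Set (E n)) : Prop :=
  IsCompact K ∧ Convex ℝ K ∧ 0 ∈ interior K ∧ ∀ x ∈ K, -x ∈ K


/-- D is the unit ball of an n-dimensional subspace of L_p: its gauge to the p-th power
is given by integration of |<x,th>|^p against a finite Borel measure on the sphere. -/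
def IsLpBall (n : ℕ) (p : ℝ) (D : Set (E n)) : Prop :=
  IsSymmetricConvexBody D ∧
    ∃ ν : Measure (sphere (0 : E n) 1), IsFiniteMeasure ν ∧
      ∀ x : E n, gauge D x ^ p = ∫ θ : sphere (0 : E n) 1, |⟪x, (θ : E n)⟫| ^ p ∂ν

/-- Outer volume ratio distance from M to the class of unit balls of subspaces of L_p. -/
def dovrLp (n : ℕ) (p : ℝ) (M : Set (E n)) : ℝ :=
  sInf {r | ∃ D : Set (E n), M ⊆ D ∧ IsLpBall n p D ∧
    r = ((volume D).toReal / (volume M).toReal) ^ ((1 : ℝ) / n)}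

/-- The body Z_p(C), defined via its support function
h_{Z_p(C)}(th) = (∫_C |<x,th>|^p dx)^{1/p}. -/
def Zp (n : ℕ) (p : ℝ) (C : Set (E n)) : Set (E n) :=
  {y | ∀ θ : E n, ⟪y, θ⟫ ≤ (∫ x in C, |⟪x, θ⟫| ^ p) ^ (1 / p)}

/-- The polar set of K with respect to the standard inner product. -/
def polarSet {n : ℕ} (K : Set (E n)) : Set (E n) :=
  {x | ∀ y ∈ K, ⟪x, y⟫ ≤ 1}

/-- The Fourier integral of the restriction of Lebesgue measure to `C`, at frequency `l • y`. -/
def fourierInt {n : ℕ} (C : Set (E n)) (l : ℝ) (y : E n) : ℂ :=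
  ∫ x in C, Complex.exp (Complex.I * (l * ⟪x, y⟫ : ℝ))

theorem continuous_fourierInt {n : ℕ} {C : Set (E n)} (hCfin : volume C ≠ ∞) (l : ℝ) :
    Continuous (fourierInt C l) := by
  have : IsFiniteMeasure (volume.restrict C) := ⟨by simpa using hCfin.lt_top⟩
  refine continuous_of_dominated (bound := fun _ => 1) ?_ ?_ ?_ ?_
  · intro y
    exact (by fun_prop : Continuous fun x : E n =>
      Complex.exp (Complex.I * (l * ⟪x, y⟫ : ℝ))).aestronglyMeasurable
  · intro y
    filter_upwards with x
    rw [mul_comm, Complex.norm_exp_ofReal_mul_I]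
  · exact integrable_const _
  · filter_upwards with x
    fun_prop

theorem normSq_fourierInt {n : ℕ} (C : Set (E n)) (l : ℝ) (y : E n) :
    ((‖fourierInt C l y‖ ^ 2 : ℝ) : ℂ) =
      ∫ z, Complex.exp (Complex.I * (l * ⟪z.1 - z.2, y⟫ : ℝ))
        ∂((volume.restrict C).prod (volume.restrict C)) := by
  have h1 : ∀ z : E n × E n, Complex.exp (Complex.I * (l * ⟪z.1 - z.2, y⟫ : ℝ)) =
      Complex.exp (Complex.I * (l * ⟪z.1, y⟫ : ℝ)) *
        (starRingEnd ℂ) (Complex.exp (Complex.I * (l * ⟪z.2, y⟫ : ℝ))) := by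
    intro z
    rw [← Complex.exp_conj, ← Complex.exp_add, inner_sub_left]
    congr 1
    simp
    ring
  simp_rw [h1]
  rw [integral_prod_mul (f := fun x : E n => Complex.exp (Complex.I * (l * ⟪x, y⟫ : ℝ)))
    (g := fun x : E n => (starRingEnd ℂ) (Complex.exp (Complex.I * (l * ⟪x, y⟫ : ℝ)))),
    integral_conj]
  rw [Complex.mul_conj, Complex.normSq_eq_norm_sq]
  rfl

theorem integrable_gaussian {n : ℕ} {b : ℝ} (hb : 0 < b) :
    Integrable (fun v : E n => Real.exp (-b * ‖v‖ ^ 2)) := by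
  have := GaussianFourier.integrable_cexp_neg_mul_sq_norm_add (V := E n) (b := (b : ℂ))
    (by simpa using hb) 0 0
  refine this.norm.congr ?_
  filter_upwards with v
  rw [Complex.norm_exp]
  congr 1
  simp [← Complex.ofReal_pow]

theorem integral_gaussian_euclidean {n : ℕ} {b : ℝ} (hb : 0 < b) :
    ∫ v : E n, Real.exp (-b * ‖v‖ ^ 2) = (Real.pi / b) ^ ((n : ℝ) / 2) := by
  rw [GaussianFourier.integral_rexp_neg_mul_sq_norm hb]
  simp

/-- A Gaussian-regularised Plancherel inequality for the indicator of `C`. -/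
theorem integral_gaussian_mul_normSq_fourierInt_le {n : ℕ} {C : Set (E n)}
    (hCfin : volume C ≠ ∞) {l ε : ℝ} (hl : 0 < l) (hε : 0 < ε) :
    ∫ y : E n, Real.exp (-ε * ‖y‖ ^ 2) * ‖fourierInt C l y‖ ^ 2 ≤
      (2 * Real.pi / l) ^ n * (volume C).toReal := by
  have : IsFiniteMeasure (volume.restrict C) := ⟨by simpa using hCfin.lt_top⟩
  set μ := volume.restrict C with hμ
  have hpi := Real.pi_pos
  have key : ((∫ y : E n, Real.exp (-ε * ‖y‖ ^ 2) * ‖fourierInt C l y‖ ^ 2 : ℝ) : ℂ) =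
      ∫ z, ((Real.pi / ε : ℝ) ^ ((n : ℝ) / 2) *
        Real.exp (-(l ^ 2 / (4 * ε)) * ‖z.1 - z.2‖ ^ 2) : ℝ) ∂(μ.prod μ) := by
    rw [← integral_complex_ofReal]
    have h1 : ∀ y : E n, ((Real.exp (-ε * ‖y‖ ^ 2) * ‖fourierInt C l y‖ ^ 2 : ℝ) : ℂ) =
        ∫ z, Complex.exp (-ε * ‖y‖ ^ 2 + (Complex.I * l) * (⟪z.1 - z.2, y⟫ : ℝ)) ∂(μ.prod μ) := by
      intro y
      rw [Complex.ofReal_mul, normSq_fourierInt, ← integral_const_mul]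
      refine integral_congr_ae ?_
      filter_upwards with z
      rw [Complex.ofReal_exp, ← Complex.exp_add]
      congr 1
      push_cast
      ring
    simp_rw [h1]
    rw [integral_integral_swap]
    · rw [← integral_complex_ofReal]
      refine integral_congr_ae ?_
      filter_upwards with z
      have h2 := GaussianFourier.integral_cexp_neg_mul_sq_norm_add (V := E n) (b := (ε : ℂ))
        (by simpa using hε) (Complex.I * l) (z.1 - z.2)
      simp only [finrank_euclideanSpace, Fintype.card_fin] at h2
      rw [h2]
      rw [Complex.ofReal_mul, Complex.ofReal_exp, Complex.ofReal_cpow (by positivity)]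
      congr 1
      · push_cast; rfl
      · congr 1
        push_cast
        rw [mul_pow, Complex.I_sq]
        ring
    · have hg : Integrable (fun w : E n × (E n × E n) => Real.exp (-ε * ‖w.1‖ ^ 2) * (1 : ℝ))
          (volume.prod (μ.prod μ)) :=
        (integrable_gaussian hε).mul_prod (integrable_const (1 : ℝ))
      refine hg.mono' ?_ ?_
      · refine Continuous.aestronglyMeasurable ?_
        unfold Function.uncurry
        fun_prop
      · filter_upwards with w
        simp only [Function.uncurry]
        rw [Complex.norm_exp]
        simp [← Complex.ofReal_pow]
  have key' := Complex.ofReal_injective key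
  rw [key']
  have hb : 0 < l ^ 2 / (4 * ε) := by positivity
  have h_int : Integrable (fun z : E n × E n => (Real.pi / ε : ℝ) ^ ((n : ℝ) / 2) *
        Real.exp (-(l ^ 2 / (4 * ε)) * ‖z.1 - z.2‖ ^ 2)) (μ.prod μ) := by
    refine Integrable.const_mul ?_ _
    refine (integrable_const (1 : ℝ)).mono' ?_ ?_
    · exact Continuous.aestronglyMeasurable (by fun_prop)
    · filter_upwards with z
      rw [Real.norm_eq_abs, Real.abs_exp, Real.exp_le_one_iff]
      have : 0 ≤ ‖z.1 - z.2‖ ^ 2 := by positivity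
      nlinarith
  rw [integral_prod _ h_int]
  have h3 : ∀ x : E n, ∫ y, (Real.pi / ε : ℝ) ^ ((n : ℝ) / 2) *
        Real.exp (-(l ^ 2 / (4 * ε)) * ‖x - y‖ ^ 2) ∂μ ≤ (2 * Real.pi / l) ^ n := by
    intro x
    rw [integral_const_mul]
    have hi : Integrable (fun y : E n => Real.exp (-(l ^ 2 / (4 * ε)) * ‖x - y‖ ^ 2)) :=
      (integrable_gaussian hb).comp_sub_left x
    have h4 : ∫ y, Real.exp (-(l ^ 2 / (4 * ε)) * ‖x - y‖ ^ 2) ∂μ ≤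
        (Real.pi / (l ^ 2 / (4 * ε))) ^ ((n : ℝ) / 2) := by
      rw [← integral_gaussian_euclidean hb,
        ← integral_sub_left_eq_self (fun y : E n => Real.exp (-(l ^ 2 / (4 * ε)) * ‖y‖ ^ 2))
            volume x]
      exact setIntegral_le_integral hi (by filter_upwards with y using (Real.exp_pos _).le)
    calc _ ≤ (Real.pi / ε : ℝ) ^ ((n : ℝ) / 2) * (Real.pi / (l ^ 2 / (4 * ε))) ^ ((n : ℝ) / 2) := by
          gcongr
      _ = ((2 * Real.pi / l) ^ (2 : ℝ)) ^ ((n : ℝ) / 2) := by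
          rw [← Real.mul_rpow (by positivity) (by positivity)]
          congr 1
          rw [Real.rpow_two]
          field_simp
          ring
      _ = (2 * Real.pi / l) ^ n := by
          rw [← Real.rpow_mul (by positivity), ← Real.rpow_natCast]
          congr 1
          ring
  calc _ ≤ ∫ x, (2 * Real.pi / l) ^ n ∂μ :=
        integral_mono h_int.integral_prod_left (integrable_const _) h3
    _ = _ := by
        rw [integral_const, smul_eq_mul, mul_comm, hμ]
        simp [Measure.real]

theorem setIntegral_normSq_fourierInt_le {n : ℕ} {C D : Set (E n)}
    (hCfin : volume C ≠ ∞) (hD : MeasurableSet D) (hDb : Bornology.IsBounded D)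
    {l : ℝ} (hl : 0 < l) :
    ∫ y in D, ‖fourierInt C l y‖ ^ 2 ≤ (2 * Real.pi / l) ^ n * (volume C).toReal := by
  obtain ⟨R, hR⟩ := hDb.exists_norm_le
  have hpi := Real.pi_pos
  have hcont := continuous_fourierInt (n := n) hCfin l
  have hbd : ∀ y, ‖fourierInt C l y‖ ≤ (volume C).toReal := by
    intro y
    have h := norm_setIntegral_le_of_norm_le_const (μ := volume) (s := C) (C := 1)
      (f := fun x : E n => Complex.exp (Complex.I * (l * ⟪x, y⟫ : ℝ))) hCfin.lt_top
      (fun x _ => by rw [mul_comm, Complex.norm_exp_ofReal_mul_I])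
    simpa [fourierInt, Measure.real] using h
  have hDfin : volume D < ∞ := hDb.measure_lt_top
  have hb : ∀ ε : ℝ, 0 < ε → ∫ y in D, ‖fourierInt C l y‖ ^ 2 ≤
      Real.exp (ε * R ^ 2) * ((2 * Real.pi / l) ^ n * (volume C).toReal) := by
    intro ε hε
    have h_int : Integrable (fun y : E n => Real.exp (-ε * ‖y‖ ^ 2) * ‖fourierInt C l y‖ ^ 2) := by
      refine (integrable_gaussian hε).mul_bdd (c := (volume C).toReal ^ 2)
        (by fun_prop) ?_
      filter_upwards with y
      rw [Real.norm_of_nonneg (by positivity)]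
      gcongr
      exact hbd y
    calc ∫ y in D, ‖fourierInt C l y‖ ^ 2
        ≤ ∫ y in D, Real.exp (ε * R ^ 2) * (Real.exp (-ε * ‖y‖ ^ 2) * ‖fourierInt C l y‖ ^ 2) := by
          refine setIntegral_mono_on ?_ (h_int.const_mul _).integrableOn hD ?_
          · refine Measure.integrableOn_of_bounded (M := (volume C).toReal ^ 2) hDfin.ne
              (by fun_prop) ?_
            filter_upwards with y
            rw [Real.norm_of_nonneg (by positivity)]
            gcongr
            exact hbd y
          · intro y hy
            rw [← mul_assoc, ← Real.exp_add]
            have : 1 ≤ Real.exp (ε * R ^ 2 + -ε * ‖y‖ ^ 2) := by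
              rw [Real.one_le_exp_iff]
              have := pow_le_pow_left₀ (norm_nonneg y) (hR y hy) 2
              nlinarith
            nlinarith [sq_nonneg ‖fourierInt C l y‖]
      _ = Real.exp (ε * R ^ 2) * ∫ y in D, (Real.exp (-ε * ‖y‖ ^ 2) * ‖fourierInt C l y‖ ^ 2) := by
          rw [integral_const_mul]
      _ ≤ _ := by
          gcongr
          refine (setIntegral_le_integral h_int ?_).trans
            (integral_gaussian_mul_normSq_fourierInt_le hCfin hl hε)
          filter_upwards with y
          positivity
  have hlim : Filter.Tendsto (fun ε : ℝ =>
      Real.exp (ε * R ^ 2) * ((2 * Real.pi / l) ^ n * (volume C).toReal))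
      (nhdsWithin 0 (Ioi 0)) (nhds ((2 * Real.pi / l) ^ n * (volume C).toReal)) := by
    have : Continuous (fun ε : ℝ =>
      Real.exp (ε * R ^ 2) * ((2 * Real.pi / l) ^ n * (volume C).toReal)) := by fun_prop
    have h := (this.tendsto 0).mono_left (nhdsWithin_le_nhds (s := Ioi 0))
    simpa using h
  exact ge_of_tendsto hlim (by filter_upwards [self_mem_nhdsWithin] with ε hε using hb ε hε)

theorem norm_setIntegral_fourierInt_sq_le {n : ℕ} {C D : Set (E n)}
    (hCfin : volume C ≠ ∞) (hD : MeasurableSet D) (hDb : Bornology.IsBounded D)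
    {l : ℝ} (hl : 0 < l) :
    ‖∫ y in D, fourierInt C l y‖ ^ 2 ≤
      (2 * Real.pi / l) ^ n * (volume C).toReal * (volume D).toReal := by
  have hDfin : volume D < ∞ := hDb.measure_lt_top
  have : IsFiniteMeasure (volume.restrict D) := ⟨by simpa using hDfin⟩
  have hcont := continuous_fourierInt (n := n) hCfin l
  have hbd : ∀ y, ‖fourierInt C l y‖ ≤ (volume C).toReal := by
    intro y
    have h := norm_setIntegral_le_of_norm_le_const (μ := volume) (s := C) (C := 1)
      (f := fun x : E n => Complex.exp (Complex.I * (l * ⟪x, y⟫ : ℝ))) hCfin.lt_top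
      (fun x _ => by rw [mul_comm, Complex.norm_exp_ofReal_mul_I])
    simpa [fourierInt, Measure.real] using h
  have hcs := integral_mul_le_Lp_mul_Lq_of_nonneg (μ := volume.restrict D)
    Real.HolderConjugate.two_two (f := fun y => ‖fourierInt C l y‖) (g := fun _ => (1 : ℝ))
    (by filter_upwards with y using norm_nonneg _) (by filter_upwards with y using zero_le_one)
    (by
      refine MemLp.of_bound (by fun_prop) (volume C).toReal ?_
      filter_upwards with y
      simpa using hbd y)
    (memLp_const _)
  simp only [mul_one, Real.rpow_two, one_pow, integral_const, smul_eq_mul,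
    measureReal_restrict_apply_univ] at hcs
  have h2 := setIntegral_normSq_fourierInt_le hCfin hD hDb hl
  have h0 : 0 ≤ ∫ y in D, ‖fourierInt C l y‖ ^ 2 := integral_nonneg fun y => by positivity
  calc ‖∫ y in D, fourierInt C l y‖ ^ 2 ≤ (∫ y in D, ‖fourierInt C l y‖) ^ 2 := by
        gcongr
        exact norm_integral_le_integral_norm _
    _ ≤ ((∫ y in D, ‖fourierInt C l y‖ ^ 2) ^ ((1:ℝ)/2) * (volume.real D) ^ ((1:ℝ)/2)) ^ 2 := by
        gcongr
    _ = (∫ y in D, ‖fourierInt C l y‖ ^ 2) * (volume.real D) := by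
        rw [mul_pow, ← Real.sqrt_eq_rpow, ← Real.sqrt_eq_rpow, Real.sq_sqrt h0,
          Real.sq_sqrt measureReal_nonneg]
    _ ≤ _ := by
        rw [Measure.real]
        gcongr

/-- A trigonometric polynomial with frequencies at least `n` that is close to `1` near the
point `z = 1`. -/
def highPass (n : ℕ) (z : ℂ) : ℂ :=
  ∑ j ∈ Finset.Icc n (2 * n), ∑ i ∈ Finset.range (2 * n - j + 1),
    (((2 * n).choose j * (2 * n - j).choose i : ℕ) : ℂ) * ((-1) ^ i * z ^ (j + i))

theorem highPass_eq (n : ℕ) (z : ℂ) :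
    highPass n z = ∑ j ∈ Finset.Icc n (2 * n), ((2 * n).choose j : ℂ) *
      (z ^ j * (1 - z) ^ (2 * n - j)) := by
  unfold highPass
  refine Finset.sum_congr rfl fun j _ => ?_
  rw [show (1 - z) = (-z + 1) by ring, add_pow, Finset.mul_sum, Finset.mul_sum]
  refine Finset.sum_congr rfl fun i _ => ?_
  rw [neg_pow, pow_add]
  push_cast
  ring

theorem sum_highPass_coeff_le (n : ℕ) :
    ∑ j ∈ Finset.Icc n (2 * n), ∑ i ∈ Finset.range (2 * n - j + 1),
      (((2 * n).choose j * (2 * n - j).choose i : ℕ) : ℝ) ≤ 9 ^ n := by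
  have h1 : ∀ j ∈ Finset.Icc n (2 * n), ∑ i ∈ Finset.range (2 * n - j + 1),
      (((2 * n).choose j * (2 * n - j).choose i : ℕ) : ℝ) =
      (1 : ℝ) ^ j * 2 ^ (2 * n - j) * ((2 * n).choose j : ℝ) := by
    intro j _
    have := Nat.sum_range_choose (2 * n - j)
    push_cast
    rw [← Finset.mul_sum]
    have h2 : (∑ i ∈ Finset.range (2 * n - j + 1), ((2 * n - j).choose i : ℝ)) =
        2 ^ (2 * n - j) := by
      exact_mod_cast this
    rw [h2]
    ring
  rw [Finset.sum_congr rfl h1]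
  calc _ ≤ ∑ j ∈ Finset.range (2 * n + 1),
        (1 : ℝ) ^ j * 2 ^ (2 * n - j) * ((2 * n).choose j : ℝ) := by
        refine Finset.sum_le_sum_of_subset_of_nonneg ?_ (fun _ _ _ => by positivity)
        intro j hj
        simp at hj ⊢
        omega
    _ = (1 + 2) ^ (2 * n) := (add_pow _ _ _).symm
    _ = 9 ^ n := by rw [pow_mul]; norm_num

theorem norm_one_sub_highPass_le {n : ℕ} {z : ℂ} (hz : ‖z‖ = 1) (h : ‖1 - z‖ ≤ 1 / 8) :
    ‖1 - highPass n z‖ ≤ 1 / 2 := by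
  have h1 : (1 : ℂ) = ∑ j ∈ Finset.range (2 * n + 1), z ^ j * (1 - z) ^ (2 * n - j) *
      ((2 * n).choose j : ℂ) := by
    rw [← add_pow]; simp
  have h2 : Finset.range (2 * n + 1) = Finset.range n ∪ Finset.Icc n (2 * n) := by
    ext j; simp; omega
  have hd : Disjoint (Finset.range n) (Finset.Icc n (2 * n)) := by
    rw [Finset.disjoint_left]; intro j; simp; omega
  rw [h2, Finset.sum_union hd] at h1
  have h3 : 1 - highPass n z = ∑ j ∈ Finset.range n, z ^ j * (1 - z) ^ (2 * n - j) *
      ((2 * n).choose j : ℂ) := by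
    rw [highPass_eq, sub_eq_iff_eq_add]
    convert h1 using 2
    refine Finset.sum_congr rfl fun j _ => by ring
  rw [h3]
  calc _ ≤ ∑ j ∈ Finset.range n, ‖z ^ j * (1 - z) ^ (2 * n - j) * ((2 * n).choose j : ℂ)‖ :=
        norm_sum_le _ _
    _ ≤ ∑ j ∈ Finset.range n, (1 / 8 : ℝ) ^ (n + 1) * ((2 * n).choose j : ℝ) := by
        refine Finset.sum_le_sum fun j hj => ?_
        rw [norm_mul, norm_mul, norm_pow, norm_pow, hz, one_pow, one_mul, Complex.norm_natCast]
        gcongr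
        calc ‖1 - z‖ ^ (2 * n - j) ≤ (1 / 8 : ℝ) ^ (2 * n - j) := by gcongr
          _ ≤ (1 / 8 : ℝ) ^ (n + 1) := by
              refine pow_le_pow_of_le_one (by norm_num) (by norm_num) ?_
              simp at hj; omega
    _ = (1 / 8 : ℝ) ^ (n + 1) * ∑ j ∈ Finset.range n, ((2 * n).choose j : ℝ) := by
        rw [Finset.mul_sum]
    _ ≤ (1 / 8 : ℝ) ^ (n + 1) * 4 ^ n := by
        gcongr
        have h4 : ∑ j ∈ Finset.range (2 * n + 1), ((2 * n).choose j : ℝ) = 4 ^ n := by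
          have := Nat.sum_range_choose (2 * n)
          rw [pow_mul] at this
          exact_mod_cast this
        rw [← h4]
        refine Finset.sum_le_sum_of_subset_of_nonneg ?_ (fun _ _ _ => by positivity)
        intro j; simp; omega
    _ = (1 / 2) ^ n / 8 := by
        rw [pow_succ, mul_right_comm, ← mul_pow]; norm_num; ring
    _ ≤ 1 / 2 := by
        have : (1 / 2 : ℝ) ^ n ≤ 1 := pow_le_one₀ (by norm_num) (by norm_num)
        linarith

/-- An isomorphic Blaschke–Santaló inequality for arbitrary pairs of bounded sets. -/
theorem volume_mul_volume_le {n : ℕ} (hn : 1 ≤ n) {C D : Set (E n)}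
    (hCb : Bornology.IsBounded C)
    (hD : MeasurableSet D) (hDb : Bornology.IsBounded D)
    (h : ∀ x ∈ C, ∀ y ∈ D, |⟪x, y⟫| ≤ 1) :
    (volume C).toReal * (volume D).toReal ≤ (20000 / n) ^ n := by
  have hCfin : volume C < ∞ := hCb.measure_lt_top
  have hDfin : volume D < ∞ := hDb.measure_lt_top
  have hpi := Real.pi_pos
  have hn0 : (0 : ℝ) < n := by exact_mod_cast hn
  set V := (volume C).toReal * (volume D).toReal with hV
  have hV0 : 0 ≤ V := by positivity
  set B := Real.sqrt ((2 * Real.pi * 8 / n) ^ n * V) with hB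
  have hfour : ∀ m : ℕ, n ≤ m → ‖∫ y in D, fourierInt C (m / 8) y‖ ≤ B := by
    intro m hm
    have hm0 : (0 : ℝ) < m := lt_of_lt_of_le hn0 (by exact_mod_cast hm)
    refine Real.le_sqrt_of_sq_le ((norm_setIntegral_fourierInt_sq_le hCfin.ne hD hDb
      (by positivity)).trans ?_)
    have e : 2 * Real.pi / ((m : ℝ) / 8) ≤ 2 * Real.pi * 8 / n := by
      rw [div_div_eq_mul_div]
      gcongr
    rw [hV, ← mul_assoc]
    have e' := pow_le_pow_left₀ (by positivity) e n
    gcongr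
  set k : E n → ℂ := fun y => ∫ x in C, highPass n (Complex.exp (Complex.I * (1 / 8 * ⟪x, y⟫ : ℝ)))
    with hk
  have hpow : ∀ (m : ℕ) (s : ℝ), Complex.exp (Complex.I * (1 / 8 * s : ℝ)) ^ m =
      Complex.exp (Complex.I * (m / 8 * s : ℝ)) := by
    intro m s
    rw [← Complex.exp_nat_mul]
    congr 1
    push_cast
    ring
  have hInt : ∀ (l : ℝ) (y : E n), IntegrableOn
      (fun x : E n => Complex.exp (Complex.I * (l * ⟪x, y⟫ : ℝ))) C := by
    intro l y
    refine Measure.integrableOn_of_bounded (M := 1) hCfin.ne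
      (Continuous.aestronglyMeasurable (by fun_prop)) ?_
    filter_upwards with x
    rw [mul_comm, Complex.norm_exp_ofReal_mul_I]
  have hkeq : ∀ y, k y = ∑ j ∈ Finset.Icc n (2 * n), ∑ i ∈ Finset.range (2 * n - j + 1),
      (((2 * n).choose j * (2 * n - j).choose i : ℕ) : ℂ) *
        ((-1) ^ i * fourierInt C ((j + i : ℕ) / 8) y) := by
    intro y
    simp only [hk, highPass, hpow]
    rw [integral_finsetSum]
    · refine Finset.sum_congr rfl fun j _ => ?_
      rw [integral_finsetSum]
      · refine Finset.sum_congr rfl fun i _ => ?_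
        rw [integral_const_mul, integral_const_mul]
        rfl
      · intro i _
        exact ((hInt _ y).const_mul _).const_mul _
    · intro j _
      exact integrable_finsetSum _ fun i _ => ((hInt _ y).const_mul _).const_mul _
  have hFi : ∀ l : ℝ, IntegrableOn (fourierInt C l) D := by
    intro l
    refine Measure.integrableOn_of_bounded (M := (volume C).toReal) hDfin.ne
      (continuous_fourierInt hCfin.ne l).aestronglyMeasurable ?_
    filter_upwards with y
    have h := norm_setIntegral_le_of_norm_le_const (μ := volume) (s := C) (C := 1)
      (f := fun x : E n => Complex.exp (Complex.I * (l * ⟪x, y⟫ : ℝ))) hCfin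
      (fun x _ => by rw [mul_comm, Complex.norm_exp_ofReal_mul_I])
    simpa [fourierInt, Measure.real] using h
  have hkint : IntegrableOn k D := by
    have : k = _ := funext hkeq
    rw [this]
    exact integrable_finsetSum _ fun j _ => integrable_finsetSum _ fun i _ =>
      ((hFi _).const_mul _).const_mul _
  have hupper : ‖∫ y in D, k y‖ ≤ 9 ^ n * B := by
    simp_rw [hkeq]
    rw [integral_finsetSum _ fun j _ => integrable_finsetSum _ fun i _ =>
      ((hFi _).const_mul _).const_mul _]
    calc _ ≤ ∑ j ∈ Finset.Icc n (2 * n), ∑ i ∈ Finset.range (2 * n - j + 1),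
          (((2 * n).choose j * (2 * n - j).choose i : ℕ) : ℝ) * B := by
          refine norm_sum_le_of_le _ fun j hj => ?_
          rw [integral_finsetSum _ fun i _ => ((hFi _).const_mul _).const_mul _]
          refine norm_sum_le_of_le _ fun i _ => ?_
          rw [integral_const_mul, integral_const_mul, norm_mul, norm_mul, norm_pow, norm_neg,
            norm_one, one_pow, one_mul, Complex.norm_natCast]
          gcongr
          exact hfour _ (by simp at hj; omega)
      _ = (∑ j ∈ Finset.Icc n (2 * n), ∑ i ∈ Finset.range (2 * n - j + 1),
          (((2 * n).choose j * (2 * n - j).choose i : ℕ) : ℝ)) * B := by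
          simp_rw [Finset.sum_mul]
      _ ≤ _ := by
          gcongr
          exact sum_highPass_coeff_le n
  have hclose : ∀ y ∈ D, ‖((volume C).toReal : ℂ) - k y‖ ≤ 1 / 2 * (volume C).toReal := by
    intro y hy
    have e1 : ((volume C).toReal : ℂ) = ∫ x in C, (1 : ℂ) := by
      simp [Measure.real]
    have hi : IntegrableOn (fun x : E n =>
        highPass n (Complex.exp (Complex.I * (1 / 8 * ⟪x, y⟫ : ℝ)))) C := by
      simp only [highPass, hpow]
      exact integrable_finsetSum _ fun j _ => integrable_finsetSum _ fun i _ =>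
        ((hInt _ y).const_mul _).const_mul _
    have hc1 : IntegrableOn (fun _ : E n => (1 : ℂ)) C := integrableOn_const hCfin.ne
    rw [e1, hk, ← integral_sub hc1 hi]
    have := norm_setIntegral_le_of_norm_le_const (μ := volume) (s := C) (C := 1 / 2)
      (f := fun x : E n => 1 - highPass n (Complex.exp (Complex.I * (1 / 8 * ⟪x, y⟫ : ℝ))))
      hCfin (fun x hx => ?_)
    · simpa [Measure.real] using this
    · refine norm_one_sub_highPass_le ?_ ?_
      · rw [mul_comm, Complex.norm_exp_ofReal_mul_I]
      · rw [norm_sub_rev]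
        refine (Real.norm_exp_I_mul_ofReal_sub_one_le).trans ?_
        rw [Real.norm_eq_abs, abs_mul]
        have := h x hx y hy
        rw [abs_of_pos (by norm_num : (0 : ℝ) < 1 / 8)]
        linarith
  have hlower : ‖(V : ℂ) - ∫ y in D, k y‖ ≤ 1 / 2 * V := by
    have e1 : (V : ℂ) = ∫ y in D, ((volume C).toReal : ℂ) := by
      simp [Measure.real, hV, mul_comm]
    have hc1 : IntegrableOn (fun _ : E n => ((volume C).toReal : ℂ)) D :=
      integrableOn_const hDfin.ne
    rw [e1, ← integral_sub hc1 hkint]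
    have := norm_setIntegral_le_of_norm_le_const (μ := volume) (s := D)
      (f := fun y => ((volume C).toReal : ℂ) - k y) hDfin hclose
    refine this.trans (le_of_eq ?_)
    rw [hV, Measure.real]
    ring
  have h5 : V ≤ 2 * (9 ^ n * B) := by
    have h6 : ‖(V : ℂ)‖ ≤ ‖(V : ℂ) - ∫ y in D, k y‖ + ‖∫ y in D, k y‖ := by
      simpa using norm_add_le ((V : ℂ) - ∫ y in D, k y) (∫ y in D, k y)
    rw [Complex.norm_real, Real.norm_of_nonneg hV0] at h6
    linarith
  have h7 : V ^ 2 ≤ (4 * 81 ^ n * (2 * Real.pi * 8 / n) ^ n) * V := by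
    calc V ^ 2 ≤ (2 * (9 ^ n * B)) ^ 2 := by gcongr
      _ = 4 * (9 ^ 2) ^ n * B ^ 2 := by rw [← pow_mul, mul_comm 2 n, pow_mul]; ring
      _ = _ := by rw [hB, Real.sq_sqrt (by positivity)]; norm_num; ring
  have h8 : V ≤ 4 * 81 ^ n * (2 * Real.pi * 8 / n) ^ n := by
    rcases hV0.eq_or_lt with h0 | h0
    · rw [← h0]; positivity
    · rw [sq] at h7
      exact le_of_mul_le_mul_right h7 h0
  refine h8.trans ?_
  calc 4 * 81 ^ n * (2 * Real.pi * 8 / n) ^ n ≤ 4 ^ n * 81 ^ n * (2 * Real.pi * 8 / n) ^ n := by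
        gcongr
        exact le_self_pow₀ (by norm_num) (by omega)
    _ = (4 * 81 * (2 * Real.pi * 8 / n)) ^ n := by rw [mul_pow, mul_pow]
    _ ≤ _ := by
        gcongr
        rw [← mul_div_assoc]
        gcongr
        nlinarith [Real.pi_lt_d2]

namespace IsSymmetricConvexBody

variable {n : ℕ} {K : Set (E n)}

theorem mem_nhds_zero (hK : IsSymmetricConvexBody K) : K ∈ nhds (0 : E n) :=
  mem_interior_iff_mem_nhds.1 hK.2.2.1

theorem absorbent (hK : IsSymmetricConvexBody K) : Absorbent ℝ K :=
  absorbent_nhds_zero hK.mem_nhds_zero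

theorem continuous_gauge (hK : IsSymmetricConvexBody K) : Continuous (gauge K) :=
  _root_.continuous_gauge hK.2.1 hK.mem_nhds_zero

theorem gauge_neg (hK : IsSymmetricConvexBody K) (x : E n) : gauge K (-x) = gauge K x :=
  _root_.gauge_neg hK.2.2.2 x

theorem gauge_add_le (hK : IsSymmetricConvexBody K) (x y : E n) :
    gauge K (x + y) ≤ gauge K x + gauge K y :=
  _root_.gauge_add_le hK.2.1 hK.absorbent x y

theorem gauge_smul (hK : IsSymmetricConvexBody K) (r : ℝ) (x : E n) :
    gauge K (r • x) = |r| * gauge K x := by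
  rcases le_total 0 r with h | h
  · rw [gauge_smul_of_nonneg h, abs_of_nonneg h, smul_eq_mul]
  · rw [← hK.gauge_neg, ← neg_smul, gauge_smul_of_nonneg (neg_nonneg.2 h), abs_of_nonpos h,
      smul_eq_mul]

theorem gauge_le_one_iff (hK : IsSymmetricConvexBody K) {x : E n} : gauge K x ≤ 1 ↔ x ∈ K := by
  rw [gauge_le_one_iff_mem_closure hK.2.1 hK.mem_nhds_zero, hK.1.isClosed.closure_eq]

theorem exists_norm_le (hK : IsSymmetricConvexBody K) :
    ∃ R : ℝ, 0 < R ∧ ∀ x : E n, ‖x‖ ≤ R * gauge K x := by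
  obtain ⟨R, hR0, hR⟩ := hK.1.isBounded.subset_closedBall_lt 0 0
  refine ⟨R, hR0, fun x => ?_⟩
  have := le_gauge_of_subset_closedBall hK.absorbent hR0.le hR (x := x)
  rwa [div_le_iff₀' hR0] at this

theorem exists_gauge_le (hK : IsSymmetricConvexBody K) :
    ∃ R : ℝ, 0 < R ∧ ∀ x : E n, gauge K x ≤ R * ‖x‖ := by
  obtain ⟨r, hr0, hr⟩ := Metric.mem_nhds_iff.1 hK.mem_nhds_zero
  refine ⟨r⁻¹, by positivity, fun x => ?_⟩
  have := mul_gauge_le_norm hr (x := x)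
  rw [inv_mul_eq_div, le_div_iff₀' hr0]
  exact this

theorem eq_zero_of_gauge_eq_zero (hK : IsSymmetricConvexBody K) {x : E n}
    (hx : gauge K x = 0) : x = 0 := by
  obtain ⟨R, _, hR⟩ := hK.exists_norm_le
  have := hR x
  rw [hx, mul_zero] at this
  exact norm_le_zero_iff.1 this

theorem zero_mem (hK : IsSymmetricConvexBody K) : (0 : E n) ∈ K := interior_subset hK.2.2.1

theorem inner_le_gauge_mul_gauge_polarSet (hK : IsSymmetricConvexBody K)
    (hP : IsSymmetricConvexBody (polarSet K)) (x y : E n) :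
    ⟪x, y⟫ ≤ gauge K y * gauge (polarSet K) x := by
  rcases eq_or_ne (gauge K y) 0 with h | h
  · rw [hK.eq_zero_of_gauge_eq_zero h]; simp
  rcases eq_or_ne (gauge (polarSet K) x) 0 with h' | h'
  · rw [hP.eq_zero_of_gauge_eq_zero h']; simp
  have h0 : 0 < gauge K y := lt_of_le_of_ne (gauge_nonneg _) h.symm
  have h0' : 0 < gauge (polarSet K) x := lt_of_le_of_ne (gauge_nonneg _) h'.symm
  have hy : (gauge K y)⁻¹ • y ∈ K := by
    rw [← hK.gauge_le_one_iff, hK.gauge_smul, abs_of_pos (by positivity), inv_mul_cancel₀ h]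
  have hx : (gauge (polarSet K) x)⁻¹ • x ∈ polarSet K := by
    rw [← hP.gauge_le_one_iff, hP.gauge_smul, abs_of_pos (by positivity), inv_mul_cancel₀ h']
  have := hx _ hy
  rw [real_inner_smul_left, real_inner_smul_right] at this
  field_simp at this
  linarith

theorem polarSet (hK : IsSymmetricConvexBody K) : IsSymmetricConvexBody (polarSet K) := by
  have hcl : IsClosed (_root_.polarSet K) := by
    have : _root_.polarSet K = ⋂ y ∈ K, {x | ⟪x, y⟫ ≤ 1} := by
      ext x; simp [_root_.polarSet]
    rw [this]
    exact isClosed_biInter fun y _ => isClosed_le (by fun_prop) continuous_const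
  refine ⟨?_, ?_, ?_, ?_⟩
  · obtain ⟨r, hr0, hr⟩ := Metric.mem_nhds_iff.1 hK.mem_nhds_zero
    refine Metric.isCompact_of_isClosed_isBounded hcl ?_
    refine (Metric.isBounded_closedBall (x := (0 : E n)) (r := 2 / r)).subset fun x hx => ?_
    rw [mem_closedBall_zero_iff]
    rcases eq_or_ne x 0 with rfl | hx0
    · simp; positivity
    have hx1 : 0 < ‖x‖ := norm_pos_iff.2 hx0
    have := hx ((r / 2 / ‖x‖) • x) (hr ?_)
    · rw [real_inner_smul_right, real_inner_self_eq_norm_sq] at this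
      rw [le_div_iff₀ hr0]
      field_simp at this
      linarith
    · rw [mem_ball_zero_iff, norm_smul, Real.norm_of_nonneg (by positivity)]
      field_simp
      linarith
  · intro x hx y hy a b ha hb hab z hz
    rw [inner_add_left, real_inner_smul_left, real_inner_smul_left]
    nlinarith [hx z hz, hy z hz]
  · obtain ⟨R, hR0, hR⟩ := hK.1.isBounded.subset_closedBall_lt 0 0
    rw [mem_interior_iff_mem_nhds, Metric.mem_nhds_iff]
    refine ⟨R⁻¹, by positivity, fun x hx y hy => ?_⟩
    rw [mem_ball_zero_iff] at hx
    have hy' := mem_closedBall_zero_iff.1 (hR hy)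
    calc ⟪x, y⟫ ≤ ‖x‖ * ‖y‖ := real_inner_le_norm _ _
      _ ≤ R⁻¹ * R := by gcongr
      _ = 1 := inv_mul_cancel₀ hR0.ne'
  · intro x hx y hy
    have := hx _ (hK.2.2.2 y hy)
    rwa [inner_neg_right, ← inner_neg_left] at this

theorem gauge_polarSet_le {y : E n} {r : ℝ} (hr : 0 ≤ r)
    (h : ∀ z ∈ K, ⟪y, z⟫ ≤ r) : gauge (_root_.polarSet K) y ≤ r := by
  refine le_of_forall_pos_le_add fun ε hε => gauge_le_of_mem (by positivity) ?_
  rw [mem_smul_set_iff_inv_smul_mem₀ (by positivity)]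
  intro z hz
  rw [real_inner_smul_left, inv_mul_le_iff₀ (by positivity)]
  linarith [h z hz]

theorem volume_toReal_pos (hK : IsSymmetricConvexBody K) : 0 < (volume K).toReal :=
  ENNReal.toReal_pos (Measure.measure_pos_of_mem_nhds volume hK.mem_nhds_zero).ne'
    hK.1.measure_lt_top.ne

theorem lintegral_exp_neg_gauge_sq_le (hK : IsSymmetricConvexBody K) {c : ℝ} (hc : 0 < c) :
    ∫⁻ x : E n, ENNReal.ofReal (Real.exp (-(gauge K x / c) ^ 2)) ≤
      ENNReal.ofReal (c ^ n * Real.Gamma (n / 2 + 1) * (volume K).toReal) := by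
  have hG : 0 < Real.Gamma ((n : ℝ) / 2 + 1) := Real.Gamma_pos_of_pos (by positivity)
  have h := measure_lt_one_eq_integral_div_gamma (volume : Measure (E n))
    (g := fun x => gauge K x / c) (by simp) (fun x => by rw [hK.gauge_neg])
    (fun x y => by rw [← add_div]; gcongr; exact hK.gauge_add_le x y)
    (fun {x} hx => hK.eq_zero_of_gauge_eq_zero (by simpa [hc.ne'] using hx))
    (fun r x => by rw [hK.gauge_smul, mul_div_assoc]) (p := 2) two_pos
  simp only [Real.rpow_two, finrank_euclideanSpace, Fintype.card_fin] at h
  have hsub : {x : E n | gauge K x / c < 1} ⊆ c • K := by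
    intro x hx
    rw [mem_ofPred_eq, div_lt_one hc] at hx
    rw [mem_smul_set_iff_inv_smul_mem₀ hc.ne', ← hK.gauge_le_one_iff, hK.gauge_smul,
      abs_of_pos (by positivity), inv_mul_le_iff₀ hc, mul_one]
    exact hx.le
  have hv := measure_mono (μ := volume) hsub
  rw [h, Measure.addHaar_smul, finrank_euclideanSpace, Fintype.card_fin,
    abs_of_pos (by positivity), ← ENNReal.ofReal_toReal hK.1.measure_lt_top.ne,
    ← ENNReal.ofReal_mul (by positivity), ENNReal.ofReal_le_ofReal_iff (by positivity),
    div_le_iff₀ hG] at hv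
  obtain ⟨R, hR0, hR⟩ := hK.exists_norm_le
  have h_int : Integrable fun x : E n => Real.exp (-(gauge K x / c) ^ 2) := by
    refine (integrable_gaussian (b := ((R * c) ^ 2)⁻¹) (by positivity)).mono'
      (Continuous.aestronglyMeasurable ?_) (Filter.Eventually.of_forall fun x => ?_)
    · have := hK.continuous_gauge
      fun_prop
    · rw [Real.norm_of_nonneg (Real.exp_pos _).le, Real.exp_le_exp, neg_mul, neg_le_neg_iff,
        inv_mul_eq_div, ← div_pow]
      gcongr ?_ ^ 2
      rw [← div_div]
      gcongr
      rw [div_le_iff₀' hR0]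
      exact hR x
  rw [← ofReal_integral_eq_lintegral_ofReal h_int
    (Filter.Eventually.of_forall fun x => (Real.exp_pos _).le)]
  refine ENNReal.ofReal_le_ofReal (hv.trans (le_of_eq (by ring)))

end IsSymmetricConvexBody

namespace IsSymmetricConvexBody

variable {n : ℕ} {K : Set (E n)}

/-- The proximal point of the squared gauge, characterised by the subgradient inequality. -/
theorem exists_proximal_point (hK : IsSymmetricConvexBody K) (w : E n) :
    ∃ x : E n, ∀ z : E n,
      gauge K x ^ 2 / 2 + ⟪w - x, z - x⟫ ≤ gauge K z ^ 2 / 2 := by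
  have hg := hK.continuous_gauge
  have hcont : Continuous fun z : E n => gauge K z ^ 2 / 2 + ‖z - w‖ ^ 2 / 2 := by fun_prop
  have hco : Filter.Tendsto (fun z : E n => gauge K z ^ 2 / 2 + ‖z - w‖ ^ 2 / 2)
      (Filter.cocompact _) Filter.atTop := by
    have h1 : Filter.Tendsto (fun z : E n => ‖z‖ - (‖w‖ + 1 / 2)) (Filter.cocompact _)
        Filter.atTop :=
      Filter.tendsto_atTop_add_const_right _ (-(‖w‖ + 1 / 2))
        (tendsto_norm_cocompact_atTop (E := E n))
    refine Filter.tendsto_atTop_mono (fun z => ?_) h1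
    have h2 := norm_sub_norm_le z w
    nlinarith [sq_nonneg (gauge K z), sq_nonneg (‖z - w‖ - 1)]
  obtain ⟨x, hx⟩ := hcont.exists_forall_le hco
  refine ⟨x, fun z => ?_⟩
  have key : ∀ s : ℝ, 0 < s → s ≤ 1 →
      gauge K x ^ 2 / 2 + ⟪w - x, z - x⟫ ≤ gauge K z ^ 2 / 2 + s * (‖z - x‖ ^ 2 / 2) := by
    intro s hs hs1
    have h := hx ((1 - s) • x + s • z)
    have h1 : gauge K ((1 - s) • x + s • z) ≤ (1 - s) * gauge K x + s * gauge K z := by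
      refine (hK.gauge_add_le _ _).trans (le_of_eq ?_)
      rw [hK.gauge_smul, hK.gauge_smul, abs_of_nonneg (by linarith), abs_of_pos hs]
    have h2 : gauge K ((1 - s) • x + s • z) ^ 2 ≤
        (1 - s) * gauge K x ^ 2 + s * gauge K z ^ 2 := by
      calc _ ≤ ((1 - s) * gauge K x + s * gauge K z) ^ 2 :=
            pow_le_pow_left₀ (gauge_nonneg _) h1 2
        _ ≤ _ := by
          have := mul_nonneg (mul_nonneg hs.le (sub_nonneg.2 hs1))
            (sq_nonneg (gauge K x - gauge K z))
          nlinarith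
    have h3 : ‖(1 - s) • x + s • z - w‖ ^ 2 =
        ‖x - w‖ ^ 2 - 2 * s * ⟪w - x, z - x⟫ + s ^ 2 * ‖z - x‖ ^ 2 := by
      have : (1 - s) • x + s • z - w = s • (z - x) - (w - x) := by module
      rw [this, norm_sub_sq_real, norm_smul, mul_pow, Real.norm_eq_abs, sq_abs,
        real_inner_smul_left, real_inner_comm, norm_sub_rev x w]
      ring
    rw [h3] at h
    have h4 : s * (gauge K x ^ 2 / 2 + ⟪w - x, z - x⟫) ≤
        s * (gauge K z ^ 2 / 2 + s * (‖z - x‖ ^ 2 / 2)) := by nlinarith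
    exact le_of_mul_le_mul_left h4 hs
  refine le_of_forall_pos_le_add fun ε hε => ?_
  set m := ‖z - x‖ ^ 2 / 2 with hm
  have hm0 : 0 ≤ m := by positivity
  refine (key (min 1 (ε / (m + 1))) (by positivity) (min_le_left _ _)).trans ?_
  have : min 1 (ε / (m + 1)) * m ≤ ε := by
    calc _ ≤ ε / (m + 1) * (m + 1) := by gcongr; exact min_le_right _ _; linarith
      _ = ε := by field_simp
  linarith

/-- The reflected proximal map `N = 2P - 1` of the squared gauge. -/
theorem exists_reflected_proximal_map (hK : IsSymmetricConvexBody K) :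
    ∃ N : E n → E n, LipschitzWith 1 N ∧ N 0 = 0 ∧
      ∀ w, gauge K ((1 / 2 : ℝ) • (w + N w)) ^ 2 ≤ (‖w‖ ^ 2 - ‖N w‖ ^ 2) / 4 ∧
        gauge (_root_.polarSet K) ((1 / 2 : ℝ) • (w - N w)) ^ 2 ≤ (‖w‖ ^ 2 - ‖N w‖ ^ 2) / 4 := by
  choose P hP using hK.exists_proximal_point
  have hx : ∀ w, gauge K (P w) ^ 2 ≤ ⟪w - P w, P w⟫ := by
    intro w
    have key : ∀ s : ℝ, 0 < s → s ≤ 1 → gauge K (P w) ^ 2 * (1 - s / 2) ≤ ⟪w - P w, P w⟫ := by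
      intro s hs hs1
      have h := hP w ((1 - s) • P w)
      rw [hK.gauge_smul, abs_of_nonneg (by linarith),
        show (1 - s) • P w - P w = (-s) • P w by module,
        real_inner_smul_right] at h
      refine le_of_mul_le_mul_left (a := s) ?_ hs
      nlinarith
    refine le_of_forall_pos_le_add fun ε hε => ?_
    set m := gauge K (P w) ^ 2
    have hm0 : 0 ≤ m := by positivity
    have := key (min 1 (ε / (m + 1))) (by positivity) (min_le_left _ _)
    have : min 1 (ε / (m + 1)) * m ≤ ε := by
      calc _ ≤ ε / (m + 1) * (m + 1) := by gcongr; exact min_le_right _ _; linarith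
        _ = ε := by field_simp
    linarith
  have hy : ∀ w, gauge (_root_.polarSet K) (w - P w) ≤ gauge K (P w) := by
    intro w
    refine le_of_forall_pos_le_add fun ε hε => ?_
    have hr : 0 < gauge K (P w) + ε := add_pos_of_nonneg_of_pos (gauge_nonneg _) hε
    refine gauge_polarSet_le hr.le fun z hz => ?_
    have h := hP w ((gauge K (P w) + ε) • z)
    rw [hK.gauge_smul, abs_of_pos hr, inner_sub_right, real_inner_smul_right] at h
    have h1 := hK.gauge_le_one_iff.2 hz
    have h0 := gauge_nonneg (s := K) z
    have h2 : ((gauge K (P w) + ε) * gauge K z) ^ 2 ≤ (gauge K (P w) + ε) ^ 2 :=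
      pow_le_pow_left₀ (by positivity) (mul_le_of_le_one_right hr.le h1) 2
    -- the reverse Young-type inequality `⟪w - P w, P w⟫ ≤ gauge K (P w) ^ 2`
    have h3 : ⟪w - P w, P w⟫ ≤ gauge K (P w) ^ 2 := by
      refine le_of_forall_pos_le_add fun δ hδ => ?_
      set m := gauge K (P w) ^ 2 with hm
      have hm0 : 0 ≤ m := by positivity
      set s := δ / (m + 1) with hs
      have hs0 : 0 < s := by positivity
      have h := hP w ((1 + s) • P w)
      rw [hK.gauge_smul, abs_of_nonneg (by linarith), show (1 + s) • P w - P w = s • P w by module,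
        real_inner_smul_right] at h
      have h5 : ⟪w - P w, P w⟫ ≤ m + s * m / 2 := by
        refine le_of_mul_le_mul_left (a := s) ?_ hs0
        nlinarith
      have : s * m ≤ δ := by
        calc _ ≤ δ / (m + 1) * (m + 1) := by gcongr; linarith
          _ = δ := by field_simp
      linarith
    refine le_of_mul_le_mul_left (a := gauge K (P w) + ε) ?_ hr
    nlinarith [gauge_nonneg (s := K) (P w)]
  have hmono : ∀ w w', 0 ≤ ⟪P w - P w', (w - P w) - (w' - P w')⟫ := by
    intro w w'
    have h1 := hP w (P w')
    have h2 := hP w' (P w)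
    rw [← neg_sub (P w) (P w'), inner_neg_right] at h1
    rw [inner_sub_right, real_inner_comm (w - P w), real_inner_comm (w' - P w')]
    linarith
  have hq : ∀ w, (‖w‖ ^ 2 - ‖(2 : ℝ) • P w - w‖ ^ 2) / 4 = ⟪w - P w, P w⟫ := by
    intro w
    rw [norm_sub_sq_real, norm_smul, real_inner_smul_left, inner_sub_left, mul_pow,
      real_inner_self_eq_norm_sq, real_inner_comm]
    norm_num
    ring
  refine ⟨fun w => (2 : ℝ) • P w - w, ?_, ?_, fun w => ?_⟩
  · refine LipschitzWith.of_dist_le_mul fun w w' => ?_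
    rw [dist_eq_norm, dist_eq_norm, NNReal.coe_one, one_mul]
    refine le_of_sq_le_sq ?_ (norm_nonneg _)
    have h := hmono w w'
    have e : (2 : ℝ) • P w - w - ((2 : ℝ) • P w' - w') = (2 : ℝ) • (P w - P w') - (w - w') := by
      module
    have e2 : w - P w - (w' - P w') = (w - w') - (P w - P w') := by module
    rw [e2, inner_sub_right, real_inner_self_eq_norm_sq] at h
    rw [e, norm_sub_sq_real, norm_smul, real_inner_smul_left, mul_pow]
    norm_num
    linarith
  · have h := hx 0
    have h0 : P 0 = 0 := by
      rw [zero_sub, inner_neg_left, real_inner_self_eq_norm_sq] at h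
      have : ‖P 0‖ ^ 2 ≤ 0 := by nlinarith [sq_nonneg (gauge K (P 0))]
      simpa using le_antisymm this (sq_nonneg _)
    simp [h0]
  · rw [hq]
    have e1 : (1 / 2 : ℝ) • (w + ((2 : ℝ) • P w - w)) = P w := by module
    have e2 : (1 / 2 : ℝ) • (w - ((2 : ℝ) • P w - w)) = w - P w := by module
    rw [e1, e2]
    exact ⟨hx w, (pow_le_pow_left₀ (gauge_nonneg _) (hy w) 2).trans (hx w)⟩

end IsSymmetricConvexBody

/-- Dominated holomorphic families of functions have holomorphic integrals. -/
theorem differentiableOn_integral_of_dominated {α : Type*} [MeasurableSpace α] {μ : Measure α}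
    {U : Set ℂ} (hU : IsOpen U) {F : ℂ → α → ℂ} {g : α → ℝ}
    (hF : ∀ t ∈ U, AEStronglyMeasurable (F t) μ)
    (hd : ∀ a, Differentiable ℂ fun t => F t a)
    (hb : ∀ t ∈ U, ∀ a, ‖F t a‖ ≤ g a) (hg : Integrable g μ) :
    DifferentiableOn ℂ (fun t => ∫ a, F t a ∂μ) U := by
  intro t ht
  obtain ⟨ε, hε, hball⟩ := Metric.isOpen_iff.1 hU t ht
  have hder : ∀ s ∈ ball t (ε / 2), ∀ a, ‖deriv (fun t => F t a) s‖ ≤ g a / (ε / 2) := by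
    intro s hs a
    refine Complex.norm_deriv_le_of_forall_mem_sphere_norm_le (by positivity)
      (hd a).diffContOnCl fun z hz => hb z (hball ?_) a
    rw [mem_ball] at hs ⊢
    rw [mem_sphere] at hz
    linarith [dist_triangle z s t]
  have hlim : AEStronglyMeasurable (fun a => deriv (fun t => F t a) t) μ := by
    set u : ℕ → ℝ := fun k => ε / (k + 2) with hu
    have hu0 : ∀ k, 0 < u k := fun k => by positivity
    have hut : Filter.Tendsto u Filter.atTop (nhds 0) :=
      tendsto_const_nhds.div_atTop
        (Filter.tendsto_atTop_add_const_right _ _ tendsto_natCast_atTop_atTop)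
    refine aestronglyMeasurable_of_tendsto_ae Filter.atTop
      (f := fun (k : ℕ) a => ((u k : ℂ))⁻¹ • (F (t + u k) a - F t a)) (fun k => ?_)
      (Filter.Eventually.of_forall fun a => ?_)
    · refine ((hF _ (hball ?_)).sub (hF t ht)).const_smul ((u k : ℂ))⁻¹
      rw [mem_ball, dist_eq_norm, add_sub_cancel_left, Complex.norm_real,
        Real.norm_of_nonneg (hu0 k).le, hu, div_lt_iff₀ (by positivity)]
      nlinarith [Nat.cast_nonneg (α := ℝ) k]
    · have h1 := (hasDerivAt_iff_tendsto_slope_zero.1 (hd a t).hasDerivAt)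
      refine h1.comp (tendsto_nhdsWithin_iff.2 ⟨?_, Filter.Eventually.of_forall fun k => ?_⟩)
      · have := (Complex.continuous_ofReal.tendsto 0).comp hut
        simpa [Function.comp_def] using this
      · simpa using (hu0 k).ne'
  have := hasDerivAt_integral_of_dominated_loc_of_deriv_le (μ := μ) (F := F)
    (F' := fun s a => deriv (fun t => F t a) s) (bound := fun a => g a / (ε / 2))
    (ball_mem_nhds t (half_pos hε))
    (Filter.eventually_of_mem (hU.mem_nhds ht) hF)
    (hg.mono' (hF t ht) (Filter.Eventually.of_forall (hb t ht)))
    hlim (Filter.Eventually.of_forall fun a s hs => hder s hs a) (hg.div_const _)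
    (Filter.Eventually.of_forall fun a s _ => (hd a s).hasDerivAt)
  exact this.2.differentiableAt.differentiableWithinAt

/-- The matrix of an endomorphism of `E n` in the standard basis. -/
def stdMatrix {n : ℕ} (B : E n →L[ℝ] E n) : Matrix (Fin n) (Fin n) ℝ :=
  LinearMap.toMatrix (EuclideanSpace.basisFun (Fin n) ℝ).toBasis
    (EuclideanSpace.basisFun (Fin n) ℝ).toBasis B

theorem stdMatrix_apply {n : ℕ} (B : E n →L[ℝ] E n) (i j : Fin n) :
    stdMatrix B i j = (B (EuclideanSpace.single j 1)) i := by
  simp [stdMatrix, LinearMap.toMatrix_apply]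

theorem stdMatrix_mul {n : ℕ} (B C : E n →L[ℝ] E n) :
    stdMatrix B * stdMatrix C = stdMatrix (B.comp C) := by
  simp only [stdMatrix]
  rw [← LinearMap.toMatrix_comp]
  rfl

theorem abs_stdMatrix_le {n : ℕ} {B : E n →L[ℝ] E n} (hB : ‖B‖ ≤ 1) (i j : Fin n) :
    |stdMatrix B i j| ≤ 1 := by
  rw [stdMatrix_apply]
  have h1 := PiLp.norm_apply_le (B (EuclideanSpace.single j 1)) i
  have h2 := B.le_of_opNorm_le hB (EuclideanSpace.single j 1)
  simp at h1 h2
  linarith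

/-- The block map `(a, b) ↦ (a + s B b, b + r C a)`. -/
def blockMap {n : ℕ} (s r : ℝ) (B C : E n →L[ℝ] E n) : E n × E n →L[ℝ] E n × E n :=
  (ContinuousLinearMap.fst ℝ _ _ + s • B.comp (ContinuousLinearMap.snd ℝ _ _)).prod
    (ContinuousLinearMap.snd ℝ _ _ + r • C.comp (ContinuousLinearMap.fst ℝ _ _))

theorem det_blockMap {n : ℕ} (s r : ℝ) (B C : E n →L[ℝ] E n) :
    (blockMap s r B C).det = (1 - (s * r) • (stdMatrix B * stdMatrix C)).det := by
  set e := (EuclideanSpace.basisFun (Fin n) ℝ).toBasis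
  have h : LinearMap.toMatrix (e.prod e) (e.prod e) (blockMap s r B C : _ →ₗ[ℝ] _) =
      Matrix.fromBlocks 1 (s • stdMatrix B) (r • stdMatrix C) 1 := by
    ext i j
    rcases i with i | i <;> rcases j with j | j <;>
      simp [LinearMap.toMatrix_apply, blockMap, stdMatrix, e, Matrix.one_apply]
  rw [ContinuousLinearMap.det, ← LinearMap.det_toMatrix (e.prod e), h,
    Matrix.det_fromBlocks_one₂₂]
  simp [smul_smul, mul_comm]

theorem det_one_add_pos {n : ℕ} {B C : E n →L[ℝ] E n} (hB : ‖B‖ ≤ 1) (hC : ‖C‖ ≤ 1) {u : ℝ}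
    (hu : 0 ≤ u) (hu1 : u < 1) : 0 < (1 + u • (stdMatrix B * stdMatrix C)).det := by
  have hne : ∀ v ∈ Icc 0 u, (1 + v • (stdMatrix B * stdMatrix C)).det ≠ 0 := by
    intro v hv h0
    set e := (EuclideanSpace.basisFun (Fin n) ℝ).toBasis
    have h1 : (1 + v • (stdMatrix B * stdMatrix C)) =
        LinearMap.toMatrix e e (LinearMap.id + v • (B.comp C : E n →ₗ[ℝ] E n)) := by
      rw [stdMatrix_mul, map_add, map_smul, LinearMap.toMatrix_id]
      rfl
    rw [h1, LinearMap.det_toMatrix, LinearMap.det_eq_zero_iff_ker_ne_bot] at h0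
    obtain ⟨x, hx, hx0⟩ := (Submodule.ne_bot_iff _).1 h0
    have h2 : x = -(v • B (C x)) := by
      have : x + v • B (C x) = 0 := by simpa using hx
      exact eq_neg_of_add_eq_zero_left this
    have h3 : ‖x‖ ≤ v * ‖x‖ := by
      calc ‖x‖ = v * ‖B (C x)‖ := by
            conv_lhs => rw [h2]
            rw [norm_neg, norm_smul, Real.norm_of_nonneg hv.1]
        _ ≤ v * ‖x‖ := by
            have h4 := B.le_of_opNorm_le hB (C x)
            have h5 := C.le_of_opNorm_le hC x
            exact mul_le_mul_of_nonneg_left (by linarith) hv.1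
    have h4 : 0 < ‖x‖ := norm_pos_iff.2 hx0
    nlinarith [hv.2]
  have hcont : Continuous fun v : ℝ => (1 + v • (stdMatrix B * stdMatrix C)).det := by
    fun_prop
  by_contra! hneg
  obtain ⟨v, hv, hv0⟩ := intermediate_value_Icc' hu hcont.continuousOn
    (show (0 : ℝ) ∈ Icc _ _ from ⟨hneg, by simp⟩)
  exact hne v hv hv0

/-- The map `(a, b) ↦ (a + s N b, b + r N a)`. -/
def skewMap {n : ℕ} (N : E n → E n) (s r : ℝ) (w : E n × E n) : E n × E n :=
  (w.1 + s • N w.2, w.2 + r • N w.1)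

/-- The set of pairs of points of differentiability of `N`. -/
def diffSet {n : ℕ} (N : E n → E n) : Set (E n × E n) :=
  {a | DifferentiableAt ℝ N a} ×ˢ {a | DifferentiableAt ℝ N a}

section

variable {n : ℕ} {N : E n → E n} {s r : ℝ}

theorem skewMap_injective (hN : LipschitzWith 1 N) (hs : |s| < 1) (hr : |r| < 1) :
    Function.Injective (skewMap N s r) := by
  rintro ⟨a, b⟩ ⟨a', b'⟩ h
  simp only [skewMap, Prod.mk.injEq] at h
  have h1 : a - a' = -(s • (N b - N b')) := by
    have := h.1
    rw [smul_sub, ← sub_eq_zero]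
    rw [← sub_eq_zero] at this
    rw [← this]; module
  have h2 : b - b' = -(r • (N a - N a')) := by
    have := h.2
    rw [smul_sub, ← sub_eq_zero]
    rw [← sub_eq_zero] at this
    rw [← this]; module
  have l1 := hN.norm_sub_le b b'
  have l2 := hN.norm_sub_le a a'
  have e1 : ‖a - a'‖ ≤ |s| * ‖b - b'‖ := by
    rw [h1, norm_neg, norm_smul, Real.norm_eq_abs]
    gcongr
    simpa using l1
  have e2 : ‖b - b'‖ ≤ |r| * ‖a - a'‖ := by
    rw [h2, norm_neg, norm_smul, Real.norm_eq_abs]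
    gcongr
    simpa using l2
  have h0a := norm_nonneg (a - a')
  have h0b := norm_nonneg (b - b')
  have ha : ‖a - a'‖ ≤ 0 := by
    by_contra! hpos
    nlinarith [abs_nonneg s, abs_nonneg r]
  have hb : ‖b - b'‖ ≤ 0 := by
    by_contra! hpos
    nlinarith [abs_nonneg s, abs_nonneg r]
  rw [norm_le_zero_iff, sub_eq_zero] at ha hb
  rw [ha, hb]

theorem skewMap_surjective (hN : LipschitzWith 1 N) (hs : |s| < 1) (hr : |r| < 1) :
    Function.Surjective (skewMap N s r) := by
  rintro ⟨A, B⟩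
  set T : E n × E n → E n × E n := fun w => (A - s • N w.2, B - r • N w.1) with hT
  have hc : ContractingWith (Real.toNNReal (max |s| |r|)) T := by
    refine ⟨?_, LipschitzWith.of_dist_le_mul fun w w' => ?_⟩
    · rw [Real.toNNReal_lt_one]
      exact max_lt hs hr
    · rw [Real.coe_toNNReal _ (le_max_of_le_left (abs_nonneg s)), Prod.dist_eq, Prod.dist_eq]
      refine max_le ?_ ?_
      · rw [hT, dist_sub_left, dist_smul₀, Real.norm_eq_abs]
        have := hN.dist_le_mul w.2 w'.2
        rw [NNReal.coe_one, one_mul] at this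
        exact mul_le_mul (le_max_left _ _) (this.trans (le_max_right _ _)) dist_nonneg
          (le_max_of_le_left (abs_nonneg s))
      · rw [hT, dist_sub_left, dist_smul₀, Real.norm_eq_abs]
        have := hN.dist_le_mul w.1 w'.1
        rw [NNReal.coe_one, one_mul] at this
        exact mul_le_mul (le_max_right _ _) (this.trans (le_max_left _ _)) dist_nonneg
          (le_max_of_le_left (abs_nonneg s))
  obtain ⟨w, hw, -⟩ := hc.exists_fixedPoint 0 (edist_ne_top _ _)
  refine ⟨w, ?_⟩
  have h1 : A - s • N w.2 = w.1 := congrArg Prod.fst hw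
  have h2 : B - r • N w.1 = w.2 := congrArg Prod.snd hw
  simp only [skewMap]
  rw [Prod.mk.injEq]
  exact ⟨by rw [← h1]; module, by rw [← h2]; module⟩

theorem lipschitzWith_skewMap (hN : LipschitzWith 1 N) (hs : |s| < 1) (hr : |r| < 1) :
    LipschitzWith 2 (skewMap N s r) := by
  refine LipschitzWith.of_dist_le_mul fun w w' => ?_
  have h1 := hN.dist_le_mul w.2 w'.2
  have h2 := hN.dist_le_mul w.1 w'.1
  rw [NNReal.coe_one, one_mul] at h1 h2
  have m1 := le_max_left (dist w.1 w'.1) (dist w.2 w'.2)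
  have m2 := le_max_right (dist w.1 w'.1) (dist w.2 w'.2)
  rw [Prod.dist_eq, Prod.dist_eq, NNReal.coe_ofNat]
  refine max_le ?_ ?_
  · refine (dist_add_add_le _ _ _ _).trans ?_
    rw [dist_smul₀, Real.norm_eq_abs]
    nlinarith [abs_nonneg s, dist_nonneg (x := N w.2) (y := N w'.2)]
  · refine (dist_add_add_le _ _ _ _).trans ?_
    rw [dist_smul₀, Real.norm_eq_abs]
    nlinarith [abs_nonneg r, dist_nonneg (x := N w.1) (y := N w'.1)]

theorem measurableSet_diffSet : MeasurableSet (diffSet N) :=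
  (measurableSet_of_differentiableAt ℝ N).prod (measurableSet_of_differentiableAt ℝ N)

theorem volume_compl_diffSet (hN : LipschitzWith 1 N) : volume (diffSet N)ᶜ = 0 := by
  have h : volume {a | DifferentiableAt ℝ N a}ᶜ = 0 := hN.ae_differentiableAt
  rw [diffSet, compl_prod_eq_union, Measure.volume_eq_prod]
  refine measure_union_null ?_ ?_ <;> simp [Measure.prod_prod, h]

theorem hasFDerivAt_skewMap {w : E n × E n} (hw : w ∈ diffSet N) :
    HasFDerivAt (skewMap N s r) (blockMap s r (fderiv ℝ N w.2) (fderiv ℝ N w.1)) w := by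
  have h1 : HasFDerivAt (fun w : E n × E n => N w.1) _ w :=
    hw.1.hasFDerivAt.comp w hasFDerivAt_fst
  have h2 : HasFDerivAt (fun w : E n × E n => N w.2) _ w :=
    hw.2.hasFDerivAt.comp w hasFDerivAt_snd
  exact (hasFDerivAt_fst.add (h2.const_smul s)).prodMk (hasFDerivAt_snd.add (h1.const_smul r))

theorem volume_image_eq_zero_of_lipschitzWith {V : Type*} [NormedAddCommGroup V] [NormedSpace ℝ V]
    [FiniteDimensional ℝ V] [MeasurableSpace V] [BorelSpace V] {μ : Measure V}
    [μ.IsAddHaarMeasure] {f : V → V} {K : ℝ≥0} (hf : LipschitzWith K f) {S : Set V}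
    (hS : μ S = 0) : μ (f '' S) = 0 := by
  have h1 := Measure.absolutelyContinuous_isAddHaarMeasure
    (μH[Module.finrank ℝ V] : Measure V) μ
  have h2 := Measure.absolutelyContinuous_isAddHaarMeasure μ
    (μH[Module.finrank ℝ V] : Measure V)
  refine h2 (le_antisymm ?_ zero_le)
  refine (hf.hausdorffMeasure_image_le (by positivity) S).trans ?_
  rw [h1 hS, mul_zero]

instance isAddHaarMeasure_volume_prod :
    (volume : Measure (E n × E n)).IsAddHaarMeasure := by
  rw [Measure.volume_eq_prod]
  infer_instance

theorem ae_mem_image_diffSet (hN : LipschitzWith 1 N) (hs : |s| < 1) (hr : |r| < 1) :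
    ∀ᵐ w, w ∈ skewMap N s r '' diffSet N := by
  have h := volume_image_eq_zero_of_lipschitzWith (μ := (volume : Measure (E n × E n)))
    (lipschitzWith_skewMap hN hs hr) (volume_compl_diffSet hN)
  refine measure_mono_null (fun w hw => ?_) h
  obtain ⟨v, rfl⟩ := skewMap_surjective hN hs hr w
  exact ⟨v, fun hv => hw ⟨v, hv, rfl⟩, rfl⟩

end

/-- The complex deformation of the Gaussian pulled back by `skewMap N`. -/
def twistedGaussian {n : ℕ} (N : E n → E n) (t : ℂ) (w : E n × E n) : ℂ :=
  Complex.exp (-((‖w.1‖ ^ 2 + ‖w.2‖ ^ 2) / 4 : ℝ) + t ^ 2 * ((‖N w.1‖ ^ 2 + ‖N w.2‖ ^ 2) / 4 : ℝ) +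
      Complex.I * t * ((⟪w.1, N w.2⟫ - ⟪N w.1, w.2⟫) / 2 : ℝ)) *
    (1 - t ^ 2 • (stdMatrix (fderiv ℝ N w.2) * stdMatrix (fderiv ℝ N w.1)).map
      (Complex.ofReal)).det

section

variable {n : ℕ} {N : E n → E n}

theorem det_one_sub_smul_map_ofReal (M : Matrix (Fin n) (Fin n) ℝ) (u : ℝ) :
    (1 - (u : ℂ) • M.map Complex.ofReal).det = ((1 - u • M).det : ℝ) := by
  have := RingHom.map_det Complex.ofRealHom (1 - u • M)
  rw [Complex.ofRealHom_eq_coe] at this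
  rw [this]
  congr 1
  ext i j
  simp [Matrix.one_apply]
  split_ifs <;> simp

theorem integral_gaussian_prod :
    ∫ w : E n × E n, Real.exp (-((‖w.1‖ ^ 2 + ‖w.2‖ ^ 2) / 4)) = (4 * Real.pi) ^ n := by
  have h : ∀ w : E n × E n, Real.exp (-((‖w.1‖ ^ 2 + ‖w.2‖ ^ 2) / 4)) =
      Real.exp (-(1 / 4) * ‖w.1‖ ^ 2) * Real.exp (-(1 / 4) * ‖w.2‖ ^ 2) := by
    intro w
    rw [← Real.exp_add]
    ring_nf
  simp_rw [h]
  rw [Measure.volume_eq_prod, integral_prod_mul (fun x : E n => Real.exp (-(1 / 4) * ‖x‖ ^ 2))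
    (fun x : E n => Real.exp (-(1 / 4) * ‖x‖ ^ 2)), integral_gaussian_euclidean (by norm_num),
    ← Real.rpow_add (by positivity), add_halves, Real.rpow_natCast]
  congr 1
  ring

theorem integral_twistedGaussian_I_mul (hN : LipschitzWith 1 N) {τ : ℝ} (hτ : |τ| < 1) :
    ∫ w, twistedGaussian N (Complex.I * τ) w = ((4 * Real.pi) ^ n : ℝ) := by
  have hτ' : |-τ| < 1 := by rwa [abs_neg]
  have hfd : ∀ x, ‖fderiv ℝ N x‖ ≤ 1 := fun x => by
    simpa using norm_fderiv_le_of_lipschitz ℝ hN (x₀ := x)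
  rw [← integral_gaussian_prod, ← integral_complex_ofReal]
  have h1 := integral_image_eq_integral_abs_det_fderiv_smul
    (μ := (volume : Measure (E n × E n))) (measurableSet_diffSet (N := N))
    (fun w hw => (hasFDerivAt_skewMap (s := τ) (r := -τ) hw).hasFDerivWithinAt)
    (skewMap_injective hN hτ hτ').injOn
    (fun w => ((Real.exp (-((‖w.1‖ ^ 2 + ‖w.2‖ ^ 2) / 4)) : ℝ) : ℂ))
  have h2 : ∀ᵐ w, w ∈ diffSet N := volume_compl_diffSet hN
  rw [Measure.restrict_eq_self_of_ae_mem (ae_mem_image_diffSet hN hτ hτ'),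
    Measure.restrict_eq_self_of_ae_mem h2] at h1
  rw [h1]
  refine integral_congr_ae (Filter.Eventually.of_forall fun w => ?_)
  simp only [twistedGaussian]
  have hsq : (Complex.I * (τ : ℂ)) ^ 2 = ((-τ ^ 2 : ℝ) : ℂ) := by
    rw [mul_pow, Complex.I_sq]; push_cast; ring
  have hI : Complex.I * (Complex.I * (τ : ℂ)) = ((-τ : ℝ) : ℂ) := by
    rw [← mul_assoc, Complex.I_mul_I]; push_cast; ring
  have hpos := det_one_add_pos (hfd w.2) (hfd w.1) (sq_nonneg τ) (by
    rw [← sq_abs]; exact pow_lt_one₀ (abs_nonneg _) hτ two_ne_zero)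
  rw [hsq, hI, det_one_sub_smul_map_ofReal, det_blockMap,
    show (1 - (-τ ^ 2) • (stdMatrix (fderiv ℝ N w.2) * stdMatrix (fderiv ℝ N w.1))) =
      1 + τ ^ 2 • (stdMatrix (fderiv ℝ N w.2) * stdMatrix (fderiv ℝ N w.1)) by
      rw [neg_smul, sub_neg_eq_add],
    show (1 - (τ * -τ) • (stdMatrix (fderiv ℝ N w.2) * stdMatrix (fderiv ℝ N w.1))) =
      1 + τ ^ 2 • (stdMatrix (fderiv ℝ N w.2) * stdMatrix (fderiv ℝ N w.1)) by
      rw [mul_neg, neg_smul, sub_neg_eq_add, sq], abs_of_pos hpos]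
  rw [Complex.real_smul, mul_comm, ← Complex.ofReal_mul (-τ ^ 2), ← Complex.ofReal_mul (-τ),
    ← Complex.ofReal_neg, ← Complex.ofReal_add, ← Complex.ofReal_add, ← Complex.ofReal_exp]
  congr 3
  simp only [skewMap]
  rw [norm_add_sq_real, norm_add_sq_real, norm_smul, norm_smul, mul_pow, mul_pow,
    Real.norm_eq_abs, Real.norm_eq_abs, sq_abs, sq_abs, real_inner_smul_right,
    real_inner_smul_right, real_inner_comm (N w.1)]
  ring

theorem norm_twistedGaussian_ofReal (t : ℝ) (w : E n × E n) :
    ‖twistedGaussian N t w‖ = Real.exp (-((‖w.1‖ ^ 2 + ‖w.2‖ ^ 2) / 4) +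
      t ^ 2 * ((‖N w.1‖ ^ 2 + ‖N w.2‖ ^ 2) / 4)) *
      |(blockMap t t (fderiv ℝ N w.2) (fderiv ℝ N w.1)).det| := by
  rw [twistedGaussian, norm_mul, Complex.norm_exp, ← Complex.ofReal_pow,
    det_one_sub_smul_map_ofReal, det_blockMap, Complex.norm_real, ← sq, Real.norm_eq_abs]
  congr 2
  simp [-Complex.ofReal_pow, -Complex.ofReal_div, -Complex.ofReal_add,
    -Complex.ofReal_sub, -Complex.ofReal_mul]

theorem norm_twistedGaussian_le (hN : LipschitzWith 1 N) (hN0 : N 0 = 0) {r δ : ℝ} (hr : r < 1)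
    (hδ1 : δ ≤ 1) {t : ℂ} (htr : |t.re| ≤ r) (hti : |t.im| ≤ δ) (w : E n × E n) :
    ‖twistedGaussian N t w‖ ≤ (n.factorial * 3 ^ n) *
      (Real.exp (-((1 - r ^ 2 - 2 * δ) / 4) * ‖w.1‖ ^ 2) *
       Real.exp (-((1 - r ^ 2 - 2 * δ) / 4) * ‖w.2‖ ^ 2)) := by
  have hfd : ∀ x, ‖fderiv ℝ N x‖ ≤ 1 := fun x => by
    simpa using norm_fderiv_le_of_lipschitz ℝ hN (x₀ := x)
  have hNle : ∀ x, ‖N x‖ ≤ ‖x‖ := fun x => by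
    have := hN.norm_sub_le x 0
    simpa [hN0] using this
  have hre : t.re ^ 2 ≤ r ^ 2 := by rw [← sq_abs]; gcongr
  have hr0 : 0 ≤ r := (abs_nonneg _).trans htr
  have him : t.im ^ 2 ≤ δ ^ 2 := by rw [← sq_abs]; gcongr
  have hδ0 : 0 ≤ δ := (abs_nonneg _).trans hti
  rw [twistedGaussian, norm_mul, mul_comm, ← Real.exp_add, Complex.norm_exp]
  refine mul_le_mul ?_ ?_ (Real.exp_pos _).le (by positivity)
  · have h := Matrix.det_le (abv := IsAbsoluteValue.toAbsoluteValue (norm : ℂ → ℝ)) (x := 3)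
      (A := 1 - t ^ 2 • (stdMatrix (fderiv ℝ N w.2) * stdMatrix (fderiv ℝ N w.1)).map
        (Complex.ofReal)) (fun i j => ?_)
    · simpa using h
    · rw [stdMatrix_mul]
      have h1 : ‖(fderiv ℝ N w.2).comp (fderiv ℝ N w.1)‖ ≤ 1 :=
        (ContinuousLinearMap.opNorm_comp_le _ _).trans
          (mul_le_one₀ (hfd _) (norm_nonneg _) (hfd _))
      have h2 := abs_stdMatrix_le h1 i j
      have h3 : ‖t ^ 2‖ ≤ 2 := by
        rw [norm_pow, Complex.sq_norm, Complex.normSq_apply]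
        nlinarith
      have h4 : ‖(1 : Matrix (Fin n) (Fin n) ℂ) i j‖ ≤ 1 := by
        rw [Matrix.one_apply]; split_ifs <;> simp
      change ‖(_ : ℂ)‖ ≤ (3 : ℝ)
      rw [Matrix.sub_apply, Matrix.smul_apply, Matrix.map_apply]
      refine (norm_sub_le _ _).trans ?_
      rw [smul_eq_mul, norm_mul, Complex.norm_real, Real.norm_eq_abs]
      nlinarith [norm_nonneg (t ^ 2),
        abs_nonneg (stdMatrix ((fderiv ℝ N w.2).comp (fderiv ℝ N w.1)) i j)]
  · rw [Real.exp_le_exp]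
    have e : (-(((‖w.1‖ ^ 2 + ‖w.2‖ ^ 2) / 4 : ℝ) : ℂ) +
        t ^ 2 * ((‖N w.1‖ ^ 2 + ‖N w.2‖ ^ 2) / 4 : ℝ) +
        Complex.I * t * ((⟪w.1, N w.2⟫ - ⟪N w.1, w.2⟫) / 2 : ℝ)).re =
        -((‖w.1‖ ^ 2 + ‖w.2‖ ^ 2) / 4) + (t.re ^ 2 - t.im ^ 2) * ((‖N w.1‖ ^ 2 + ‖N w.2‖ ^ 2) / 4)
        - t.im * ((⟪w.1, N w.2⟫ - ⟪N w.1, w.2⟫) / 2) := by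
      rw [Complex.add_re, Complex.add_re, Complex.re_mul_ofReal, Complex.re_mul_ofReal,
        Complex.neg_re, Complex.ofReal_re, sq t, Complex.mul_re, Complex.I_mul_re]
      ring
    rw [e]
    have h1 : |⟪w.1, N w.2⟫ - ⟪N w.1, w.2⟫| ≤ ‖w.1‖ ^ 2 + ‖w.2‖ ^ 2 := by
      have a1 := abs_real_inner_le_norm w.1 (N w.2)
      have a2 := abs_real_inner_le_norm (N w.1) w.2
      have b1 := mul_le_mul_of_nonneg_left (hNle w.2) (norm_nonneg w.1)
      have b2 := mul_le_mul_of_nonneg_right (hNle w.1) (norm_nonneg w.2)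
      refine (abs_sub _ _).trans ?_
      nlinarith [sq_nonneg (‖w.1‖ - ‖w.2‖)]
    have h2 : -(t.im * ((⟪w.1, N w.2⟫ - ⟪N w.1, w.2⟫) / 2)) ≤
        δ * ((‖w.1‖ ^ 2 + ‖w.2‖ ^ 2) / 2) := by
      refine (neg_le_abs _).trans ?_
      rw [abs_mul, abs_div, abs_of_pos (two_pos : (0 : ℝ) < 2)]
      gcongr
    have h3 : (t.re ^ 2 - t.im ^ 2) * ((‖N w.1‖ ^ 2 + ‖N w.2‖ ^ 2) / 4) ≤
        r ^ 2 * ((‖w.1‖ ^ 2 + ‖w.2‖ ^ 2) / 4) := by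
      calc _ ≤ r ^ 2 * ((‖N w.1‖ ^ 2 + ‖N w.2‖ ^ 2) / 4) := by
            gcongr; linarith [sq_nonneg t.im]
        _ ≤ _ := by gcongr <;> exact hNle _
    linarith

theorem measurable_twistedGaussian (hN : LipschitzWith 1 N) (t : ℂ) :
    Measurable (twistedGaussian N t) := by
  have hc := hN.continuous
  have h1 : Measurable fun w : E n × E n => (fderiv ℝ N w.2, fderiv ℝ N w.1) :=
    ((measurable_fderiv ℝ N).comp measurable_snd).prodMk
      ((measurable_fderiv ℝ N).comp measurable_fst)
  have hstd : Continuous (stdMatrix (n := n)) := by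
    refine continuous_matrix fun i j => ?_
    simp_rw [stdMatrix_apply]
    fun_prop
  have h2 : Continuous fun p : (E n →L[ℝ] E n) × (E n →L[ℝ] E n) =>
      (1 - t ^ 2 • (stdMatrix p.1 * stdMatrix p.2).map (Complex.ofReal)).det := by
    have h3 : Continuous fun p : (E n →L[ℝ] E n) × (E n →L[ℝ] E n) =>
        (stdMatrix p.1 * stdMatrix p.2).map Complex.ofReal :=
      ((hstd.comp continuous_fst).matrix_mul (hstd.comp continuous_snd)).matrix_map
        Complex.continuous_ofReal
    exact Continuous.matrix_det (continuous_const.sub (h3.const_smul (t ^ 2)))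
  have h4 : Continuous fun w : E n × E n => Complex.exp (-((‖w.1‖ ^ 2 + ‖w.2‖ ^ 2) / 4 : ℝ) +
      t ^ 2 * ((‖N w.1‖ ^ 2 + ‖N w.2‖ ^ 2) / 4 : ℝ) +
      Complex.I * t * ((⟪w.1, N w.2⟫ - ⟪N w.1, w.2⟫) / 2 : ℝ)) := by
    fun_prop
  have h5 := h2.measurable.comp h1
  unfold twistedGaussian
  exact h4.measurable.mul h5

theorem differentiable_twistedGaussian (w : E n × E n) :
    Differentiable ℂ fun t => twistedGaussian N t w := by
  unfold twistedGaussian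
  refine Differentiable.mul (by fun_prop) ?_
  simp_rw [Matrix.det_apply]
  refine Differentiable.fun_sum fun σ _ => Differentiable.const_smul ?_ _
  refine Differentiable.fun_finsetProd fun i _ => ?_
  simp only [Matrix.sub_apply, Matrix.smul_apply, smul_eq_mul]
  fun_prop

end

section

variable {n : ℕ} {N : E n → E n}

theorem integral_twistedGaussian_ofReal (hN : LipschitzWith 1 N) (hN0 : N 0 = 0) {t : ℝ}
    (ht0 : 0 ≤ t) (ht : t < 1) :
    ∫ w, twistedGaussian N t w = ((4 * Real.pi) ^ n : ℝ) := by
  set r := (1 + t) / 2 with hr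
  have hr1 : r < 1 := by linarith
  have htr : t < r := by linarith
  set δ := (1 - r ^ 2) / 4 with hδ
  have hr2 : r ^ 2 < 1 := pow_lt_one₀ (by linarith) hr1 two_ne_zero
  have hδ0 : 0 < δ := by linarith
  have hκ : 0 < (1 - r ^ 2 - 2 * δ) / 4 := by linarith
  set U : Set ℂ := Complex.re ⁻¹' Ioo (-r) r ∩ Complex.im ⁻¹' Ioo (-δ) δ with hU
  have hUo : IsOpen U := (isOpen_Ioo.preimage Complex.continuous_re).inter
    (isOpen_Ioo.preimage Complex.continuous_im)
  have hUc : Convex ℝ U := ((convex_Ioo _ _).linear_preimage Complex.reLm).inter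
    ((convex_Ioo _ _).linear_preimage Complex.imLm)
  have hdiff : DifferentiableOn ℂ (fun z => ∫ w, twistedGaussian N z w) U := by
    refine differentiableOn_integral_of_dominated hUo
      (fun z _ => (measurable_twistedGaussian hN z).aestronglyMeasurable)
      differentiable_twistedGaussian
      (fun z hz w => norm_twistedGaussian_le hN hN0 hr1 (by nlinarith)
        (abs_le.2 ⟨hz.1.1.le, hz.1.2.le⟩) (abs_le.2 ⟨hz.2.1.le, hz.2.2.le⟩) w) ?_
    exact (Integrable.mul_prod (integrable_gaussian hκ) (integrable_gaussian hκ)).const_mul _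
  have hfreq : ∃ᶠ z in nhdsWithin (0 : ℂ) {0}ᶜ, (∫ w, twistedGaussian N z w) =
      (fun _ : ℂ => (((4 * Real.pi) ^ n : ℝ) : ℂ)) z := by
    have hlim : Filter.Tendsto (fun k : ℕ => Complex.I * ((1 / (k + 2) : ℝ) : ℂ)) Filter.atTop
        (nhdsWithin (0 : ℂ) {0}ᶜ) := by
      refine tendsto_nhdsWithin_iff.2 ⟨?_, Filter.Eventually.of_forall fun k => ?_⟩
      · have h1 : Filter.Tendsto (fun k : ℕ => (1 / (k + 2) : ℝ)) Filter.atTop (nhds 0) :=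
          tendsto_const_nhds.div_atTop
            (Filter.tendsto_atTop_add_const_right _ _ tendsto_natCast_atTop_atTop)
        have h2 := ((Complex.continuous_ofReal.tendsto 0).comp h1).const_mul Complex.I
        simpa [Function.comp_def] using h2
      · have : (k : ℝ) + 2 ≠ 0 := by positivity
        simp only [mem_compl_iff, mem_singleton_iff, mul_eq_zero, Complex.I_ne_zero,
          Complex.ofReal_eq_zero, false_or]
        positivity
    refine hlim.frequently (Filter.Frequently.of_forall fun k => ?_)
    refine integral_twistedGaussian_I_mul hN ?_
    rw [abs_of_pos (by positivity), div_lt_one (by positivity)]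
    linarith [Nat.cast_nonneg (α := ℝ) k]
  have heq := (hdiff.analyticOnNhd hUo).eqOn_of_preconnected_of_frequently_eq
    (analyticOnNhd_const (v := (((4 * Real.pi) ^ n : ℝ) : ℂ))) hUc.isPreconnected
    (z₀ := 0) (by simp [hU, hδ0]; linarith) hfreq
  exact heq (x := (t : ℂ)) (by simp [hU, hδ0]; constructor <;> linarith)

theorem four_mul_pi_pow_le_lintegral (hN : LipschitzWith 1 N) (hN0 : N 0 = 0) {t : ℝ}
    (ht0 : 0 ≤ t) (ht : t < 1) {G : E n × E n → ℝ≥0∞}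
    (hG : ∀ w : E n × E n, ENNReal.ofReal (Real.exp (-((‖w.1‖ ^ 2 + ‖w.2‖ ^ 2) / 4) +
      t ^ 2 * ((‖N w.1‖ ^ 2 + ‖N w.2‖ ^ 2) / 4))) ≤ G (skewMap N t t w)) :
    ENNReal.ofReal ((4 * Real.pi) ^ n) ≤ ∫⁻ w, G w := by
  have htabs : |t| < 1 := by rwa [abs_of_nonneg ht0]
  have h2 : ∀ᵐ w, w ∈ diffSet N := volume_compl_diffSet hN
  calc ENNReal.ofReal ((4 * Real.pi) ^ n) = ‖∫ w, twistedGaussian N t w‖ₑ := by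
        rw [integral_twistedGaussian_ofReal hN hN0 ht0 ht, ← ofReal_norm, Complex.norm_real,
          Real.norm_of_nonneg (by positivity)]
    _ ≤ ∫⁻ w, ‖twistedGaussian N t w‖ₑ := enorm_integral_le_lintegral_enorm _
    _ ≤ ∫⁻ w, ENNReal.ofReal |(blockMap t t (fderiv ℝ N w.2) (fderiv ℝ N w.1)).det| *
          G (skewMap N t t w) := by
        refine lintegral_mono fun w => ?_
        rw [← ofReal_norm, norm_twistedGaussian_ofReal, mul_comm,
          ENNReal.ofReal_mul (abs_nonneg _)]
        gcongr
        exact hG w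
    _ = ∫⁻ w in diffSet N, ENNReal.ofReal
          |(blockMap t t (fderiv ℝ N w.2) (fderiv ℝ N w.1)).det| * G (skewMap N t t w) := by
        rw [Measure.restrict_eq_self_of_ae_mem h2]
    _ = ∫⁻ w in skewMap N t t '' diffSet N, G w :=
        (lintegral_image_eq_lintegral_abs_det_fderiv_mul _ measurableSet_diffSet
          (fun w hw => (hasFDerivAt_skewMap hw).hasFDerivWithinAt)
          (skewMap_injective hN htabs htabs).injOn G).symm
    _ ≤ ∫⁻ w, G w := setLIntegral_le_lintegral _ _

theorem lintegral_half_add_mul_half_sub {f g : E n → ℝ≥0∞} (hf : Measurable f)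
    (hg : Measurable g) :
    ∫⁻ w : E n × E n, f ((1 / 2 : ℝ) • (w.1 + w.2)) * g ((1 / 2 : ℝ) • (w.1 - w.2)) =
      2 ^ n * ((∫⁻ x, f x) * ∫⁻ y, g y) := by
  have hm : Measurable fun w : E n × E n =>
      f ((1 / 2 : ℝ) • (w.1 + w.2)) * g ((1 / 2 : ℝ) • (w.1 - w.2)) := by
    fun_prop
  rw [Measure.volume_eq_prod, lintegral_prod_symm _ hm.aemeasurable]
  have h1 : ∀ b : E n, ∫⁻ a, f ((1 / 2 : ℝ) • (a + b)) * g ((1 / 2 : ℝ) • (a - b)) =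
      2 ^ n * ∫⁻ x, f x * g (x - b) := by
    intro b
    have h2 := lintegral_add_right_eq_self (μ := (volume : Measure (E n)))
      (fun a => f ((1 / 2 : ℝ) • a) * g ((1 / 2 : ℝ) • a - b)) b
    have h3 : ∀ a : E n, f ((1 / 2 : ℝ) • (a + b)) * g ((1 / 2 : ℝ) • (a - b)) =
        f ((1 / 2 : ℝ) • (a + b)) * g ((1 / 2 : ℝ) • (a + b) - b) := by
      intro a
      congr 2
      module
    simp_rw [h3]
    rw [h2]
    have h4 : Measurable fun x : E n => f x * g (x - b) := by fun_prop
    have h5 := lintegral_map (μ := (volume : Measure (E n))) h4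
      (measurable_const_smul (1 / 2 : ℝ))
    rw [← h5, Measure.map_addHaar_smul _ (by norm_num), lintegral_smul_measure,
      finrank_euclideanSpace, Fintype.card_fin, smul_eq_mul]
    congr 1
    rw [one_div, inv_pow, inv_inv, abs_of_pos (by positivity), ENNReal.ofReal_pow (by norm_num)]
    simp
  simp_rw [h1]
  have hm2 : Measurable fun w : E n × E n => f w.2 * g (w.2 - w.1) := by fun_prop
  rw [lintegral_const_mul _ (Measurable.lintegral_prod_right' hm2), lintegral_lintegral_swap
    hm2.aemeasurable]
  congr 1
  have h6 : ∀ x : E n, ∫⁻ b, f x * g (x - b) = f x * ∫⁻ y, g y := by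
    intro x
    rw [lintegral_const_mul _ (by fun_prop), lintegral_sub_left_eq_self]
  simp_rw [h6]
  rw [lintegral_mul_const _ hf]

end

theorem gauge_half_add_skew_le {n : ℕ} {K : Set (E n)} (hK : IsSymmetricConvexBody K)
    {R t s₁ s₂ : ℝ}
    {x₁ x₂ y₁ y₂ : E n} (ht0 : 0 ≤ t) (ht1 : t ≤ 1) (htR : (1 - t) * R ≤ 2)
    (hs₁ : 0 ≤ s₁) (hs₂ : 0 ≤ s₂)
    (hx₁ : gauge K x₁ ≤ s₁) (hx₂ : gauge K x₂ ≤ s₂) (hy₁ : gauge K y₁ ≤ R * s₁)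
    (hy₂ : gauge K y₂ ≤ R * s₂) :
    gauge K (((1 + t) / 2) • (x₁ + x₂) + ((1 - t) / 2) • (y₁ + y₂)) ≤ 2 * (s₁ + s₂) := by
  have h1 := hK.gauge_add_le (((1 + t) / 2) • (x₁ + x₂)) (((1 - t) / 2) • (y₁ + y₂))
  rw [hK.gauge_smul, hK.gauge_smul, abs_of_nonneg (by linarith), abs_of_nonneg (by linarith)] at h1
  have h2 := hK.gauge_add_le x₁ x₂
  have h3 := hK.gauge_add_le y₁ y₂
  have h4 : (1 + t) / 2 * gauge K (x₁ + x₂) ≤ 1 * (s₁ + s₂) := by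
    refine mul_le_mul (by linarith) (by linarith) (gauge_nonneg _) zero_le_one
  have h5 : (1 - t) / 2 * gauge K (y₁ + y₂) ≤ (1 - t) / 2 * (R * s₁ + R * s₂) :=
    mul_le_mul_of_nonneg_left (by linarith) (by linarith)
  have h6 : (1 - t) * R * (s₁ + s₂) ≤ 2 * (s₁ + s₂) :=
    mul_le_mul_of_nonneg_right htR (by linarith)
  linarith

theorem four_mul_pi_pow_le_volume_mul_volume_polarSet {n : ℕ} {K : Set (E n)}
    (hK : IsSymmetricConvexBody K) :
    (4 * Real.pi) ^ n ≤ 2 ^ n * ((4 ^ n * Real.Gamma (n / 2 + 1) * (volume K).toReal) *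
      (4 ^ n * Real.Gamma (n / 2 + 1) * (volume (polarSet K)).toReal)) := by
  have hP := hK.polarSet
  obtain ⟨N, hN, hN0, hNq⟩ := hK.exists_reflected_proximal_map
  obtain ⟨R₁, hR₁, h₁⟩ := hK.exists_gauge_le
  obtain ⟨R₂, hR₂, h₂⟩ := hP.exists_norm_le
  obtain ⟨R₃, hR₃, h₃⟩ := hP.exists_gauge_le
  obtain ⟨R₄, hR₄, h₄⟩ := hK.exists_norm_le
  set R := R₁ * R₂ + R₃ * R₄ with hR
  have hR0 : 0 < R := by positivity
  have hKP : ∀ x, gauge K x ≤ R * gauge (polarSet K) x := fun x => by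
    have : R₁ * ‖x‖ ≤ R₁ * (R₂ * gauge (polarSet K) x) := mul_le_mul_of_nonneg_left (h₂ x) hR₁.le
    have h5 : 0 ≤ R₃ * R₄ * gauge (polarSet K) x :=
      mul_nonneg (by positivity) (gauge_nonneg _)
    have := h₁ x
    rw [hR]
    linarith
  have hPK : ∀ x, gauge (polarSet K) x ≤ R * gauge K x := fun x => by
    have : R₃ * ‖x‖ ≤ R₃ * (R₄ * gauge K x) := mul_le_mul_of_nonneg_left (h₄ x) hR₃.le
    have h5 : 0 ≤ R₁ * R₂ * gauge K x :=
      mul_nonneg (by positivity) (gauge_nonneg _)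
    have := h₃ x
    rw [hR]
    linarith
  set t := R / (R + 1) with ht
  have ht0 : 0 ≤ t := by positivity
  have ht1 : t < 1 := by rw [ht, div_lt_one (by positivity)]; linarith
  have htR : (1 - t) * R ≤ 2 := by
    have : (1 - t) * R = R / (R + 1) := by rw [ht]; field_simp; ring
    rw [this, ← ht]
    linarith
  set f : E n → ℝ≥0∞ := fun x => ENNReal.ofReal (Real.exp (-(gauge K x / 4) ^ 2)) with hf
  set g : E n → ℝ≥0∞ := fun x => ENNReal.ofReal (Real.exp (-(gauge (polarSet K) x / 4) ^ 2))
    with hg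
  have hfm : Measurable f := by
    have := hK.continuous_gauge
    exact (Continuous.measurable (by fun_prop)).ennreal_ofReal
  have hgm : Measurable g := by
    have := hP.continuous_gauge
    exact (Continuous.measurable (by fun_prop)).ennreal_ofReal
  have hmain := four_mul_pi_pow_le_lintegral hN hN0 ht0 ht1
    (G := fun w => f ((1 / 2 : ℝ) • (w.1 + w.2)) * g ((1 / 2 : ℝ) • (w.1 - w.2))) ?_
  · rw [lintegral_half_add_mul_half_sub hfm hgm] at hmain
    have hf1 := hK.lintegral_exp_neg_gauge_sq_le (c := 4) (by norm_num)
    have hg1 := hP.lintegral_exp_neg_gauge_sq_le (c := 4) (by norm_num)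
    have h2 : ENNReal.ofReal ((4 * Real.pi) ^ n) ≤ ENNReal.ofReal (2 ^ n *
        ((4 ^ n * Real.Gamma (n / 2 + 1) * (volume K).toReal) *
        (4 ^ n * Real.Gamma (n / 2 + 1) * (volume (polarSet K)).toReal))) := by
      have hΓ : 0 < Real.Gamma (n / 2 + 1) := Real.Gamma_pos_of_pos (by positivity)
      rw [ENNReal.ofReal_mul (by positivity), ENNReal.ofReal_mul (p := _ * _ * _) (by positivity),
        ENNReal.ofReal_pow (p := 2) (by norm_num)]
      refine hmain.trans ?_
      rw [ENNReal.ofReal_ofNat]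
      gcongr
    have hΓ : 0 < Real.Gamma (n / 2 + 1) := Real.Gamma_pos_of_pos (by positivity)
    exact (ENNReal.ofReal_le_ofReal_iff (by positivity)).1 h2
  · rintro ⟨a, b⟩
    simp only [hf, hg, skewMap]
    rw [← ENNReal.ofReal_mul (Real.exp_nonneg _), ← Real.exp_add]
    refine ENNReal.ofReal_le_ofReal (Real.exp_le_exp.2 ?_)
    obtain ⟨ha1, ha2⟩ := hNq a
    obtain ⟨hb1, hb2⟩ := hNq b
    set q₁ := (‖a‖ ^ 2 - ‖N a‖ ^ 2) / 4 with hq₁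
    set q₂ := (‖b‖ ^ 2 - ‖N b‖ ^ 2) / 4 with hq₂
    have hq₁0 : 0 ≤ q₁ := (sq_nonneg _).trans ha1
    have hq₂0 : 0 ≤ q₂ := (sq_nonneg _).trans hb1
    replace ha1 := Real.le_sqrt_of_sq_le ha1
    replace ha2 := Real.le_sqrt_of_sq_le ha2
    replace hb1 := Real.le_sqrt_of_sq_le hb1
    replace hb2 := Real.le_sqrt_of_sq_le hb2
    have hs₁ := Real.sqrt_nonneg q₁
    have hs₂ := Real.sqrt_nonneg q₂
    have e1 : (1 / 2 : ℝ) • (a + t • N b + (b + t • N a)) =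
        ((1 + t) / 2) • ((1 / 2 : ℝ) • (a + N a) + (1 / 2 : ℝ) • (b + N b)) +
        ((1 - t) / 2) • ((1 / 2 : ℝ) • (a - N a) + (1 / 2 : ℝ) • (b - N b)) := by module
    have e2 : (1 / 2 : ℝ) • (a + t • N b - (b + t • N a)) =
        ((1 + t) / 2) • ((1 / 2 : ℝ) • (a - N a) + -((1 / 2 : ℝ) • (b - N b))) +
        ((1 - t) / 2) • ((1 / 2 : ℝ) • (a + N a) + -((1 / 2 : ℝ) • (b + N b))) := by module
    have hX := gauge_half_add_skew_le hK ht0 ht1.le htR hs₁ hs₂ ha1 hb1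
      ((hKP _).trans (mul_le_mul_of_nonneg_left ha2 hR0.le))
      ((hKP _).trans (mul_le_mul_of_nonneg_left hb2 hR0.le))
    have hY := gauge_half_add_skew_le hP ht0 ht1.le htR hs₁ hs₂ ha2
      ((hP.gauge_neg _).trans_le hb2)
      ((hPK _).trans (mul_le_mul_of_nonneg_left ha1 hR0.le))
      ((hPK _).trans (mul_le_mul_of_nonneg_left ((hK.gauge_neg _).trans_le hb1) hR0.le))
    rw [← e1] at hX
    rw [← e2] at hY
    have hX2 := pow_le_pow_left₀ (gauge_nonneg _) hX 2
    have hY2 := pow_le_pow_left₀ (gauge_nonneg _) hY 2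
    have hs : (2 * (√q₁ + √q₂)) ^ 2 ≤ 8 * (q₁ + q₂) := by
      have := Real.sq_sqrt hq₁0
      have := Real.sq_sqrt hq₂0
      have := sq_nonneg (√q₁ - √q₂)
      linarith [add_sq (√q₁) (√q₂), sub_sq (√q₁) (√q₂)]
    have ht2 : t ^ 2 * ((‖N a‖ ^ 2 + ‖N b‖ ^ 2) / 4) ≤ 1 * ((‖N a‖ ^ 2 + ‖N b‖ ^ 2) / 4) :=
      mul_le_mul_of_nonneg_right (pow_le_one₀ ht0 ht1.le) (by positivity)
    simp only [div_pow]
    linarith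

theorem Gamma_half_add_one_sq_le {n : ℕ} (hn : 1 ≤ n) :
    Real.Gamma (n / 2 + 1) ^ 2 ≤ (n : ℝ) ^ n := by
  have h := Real.Gamma_mul_add_mul_le_rpow_Gamma_mul_rpow_Gamma (s := (n : ℝ) + 1) (t := 1)
    (a := 1 / 2) (b := 1 / 2) (by positivity) one_pos (by norm_num) (by norm_num) (by norm_num)
  rw [Real.Gamma_one, Real.one_rpow, mul_one, mul_one, Real.Gamma_nat_eq_factorial,
    ← Real.sqrt_eq_rpow,
    show 1 / 2 * ((n : ℝ) + 1) + 1 / 2 = n / 2 + 1 by ring] at h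
  have h0 : 0 ≤ Real.Gamma (n / 2 + 1) := (Real.Gamma_pos_of_pos (by positivity)).le
  calc Real.Gamma (n / 2 + 1) ^ 2 ≤ √(n.factorial : ℝ) ^ 2 := by gcongr
    _ = (n.factorial : ℝ) := Real.sq_sqrt (by positivity)
    _ ≤ (n : ℝ) ^ n := by exact_mod_cast n.factorial_le_pow

theorem pow_le_volume_mul_volume_polarSet {n : ℕ} (hn : 1 ≤ n) {K : Set (E n)}
    (hK : IsSymmetricConvexBody K) :
    (1 / (4 * n) : ℝ) ^ n ≤ (volume K).toReal * (volume (polarSet K)).toReal := by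
  have h := four_mul_pi_pow_le_volume_mul_volume_polarSet hK
  have hΓ := Gamma_half_add_one_sq_le hn
  have hn0 : (0 : ℝ) < n := by exact_mod_cast hn
  set V := (volume K).toReal * (volume (polarSet K)).toReal with hV
  have hV0 : 0 ≤ V := by positivity
  have h1 : (12 : ℝ) ^ n ≤ (4 * Real.pi) ^ n := by
    have := Real.pi_gt_three
    gcongr
    linarith
  have h2 : (12 : ℝ) ^ n ≤ (32 * n) ^ n * V := by
    calc (12 : ℝ) ^ n ≤ (2 ^ n * 4 ^ n * 4 ^ n) * (Real.Gamma (n / 2 + 1) ^ 2 * V) := by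
          refine h1.trans (h.trans_eq ?_)
          rw [hV]; ring
      _ ≤ (2 ^ n * 4 ^ n * 4 ^ n) * ((n : ℝ) ^ n * V) := by gcongr
      _ = (32 * n) ^ n * V := by
          rw [← mul_pow, ← mul_pow, ← mul_assoc, ← mul_pow]; norm_num
  have h3 : (8 : ℝ) ^ n ≤ 12 ^ n := by gcongr; norm_num
  rw [one_div, inv_pow, inv_le_iff_one_le_mul₀ (by positivity)]
  have h4 : (32 * (n : ℝ)) ^ n = 8 ^ n * (4 * n) ^ n := by rw [← mul_pow]; ring
  rw [h4] at h2
  have h5 : (8 : ℝ) ^ n * 1 ≤ 8 ^ n * (V * (4 * n) ^ n) := by linarith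
  exact le_of_mul_le_mul_left h5 (by positivity)

theorem volume_mul_volume_le_of_abs_inner_le {n : ℕ} (hn : 1 ≤ n) {C D : Set (E n)} {κ : ℝ}
    (hκ : 0 < κ) (hCb : Bornology.IsBounded C) (hD : MeasurableSet D)
    (hDb : Bornology.IsBounded D) (h : ∀ x ∈ C, ∀ y ∈ D, |⟪x, y⟫| ≤ κ) :
    (volume C).toReal * (volume D).toReal ≤ (20000 * κ / n) ^ n := by
  have h1 := volume_mul_volume_le hn (hCb.smul₀ κ⁻¹) hD hDb ?_
  · rw [Measure.addHaar_smul, finrank_euclideanSpace, Fintype.card_fin, ENNReal.toReal_mul,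
      ENNReal.toReal_ofReal (abs_nonneg _), abs_of_pos (by positivity), inv_pow] at h1
    calc (volume C).toReal * (volume D).toReal
        = κ ^ n * ((κ ^ n)⁻¹ * (volume C).toReal * (volume D).toReal) := by field_simp
      _ ≤ κ ^ n * (20000 / n) ^ n := by gcongr
      _ = (20000 * κ / n) ^ n := by rw [← mul_pow]; ring
  · rintro _ ⟨x, hx, rfl⟩ y hy
    simp only [inner_smul_left, conj_trivial, abs_mul]
    rw [abs_of_pos (by positivity), inv_mul_le_iff₀ hκ, mul_one]
    exact h x hx y hy

section MomentMatrix

variable {n : ℕ} {C : Set (E n)} {w : E n → ℝ} {A : E n →L[ℝ] E n}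

theorem sq_inner_map_le_mul_of_nonneg (hA : ∀ u v, ⟪A u, v⟫ = ⟪A v, u⟫)
    (hA0 : ∀ v, 0 ≤ ⟪A v, v⟫) (u v : E n) :
    ⟪A u, v⟫ ^ 2 ≤ ⟪A u, u⟫ * ⟪A v, v⟫ := by
  have h : ∀ t : ℝ, 0 ≤ ⟪A u, u⟫ * (t * t) + 2 * ⟪A u, v⟫ * t + ⟪A v, v⟫ := by
    intro t
    have := hA0 (t • u + v)
    simp only [map_add, map_smul, inner_add_left, inner_add_right, inner_smul_left,
      inner_smul_right, conj_trivial, hA v u] at this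
    linarith
  have := discrim_le_zero h
  rw [discrim] at this
  nlinarith

theorem sq_div_mul_pow_le_det (hn : 1 ≤ n) (hCb : Bornology.IsBounded C)
    (hw : Continuous w) (hw0 : ∀ x, 0 ≤ w x)
    (hA : ∀ u v, ⟪A u, v⟫ = ∫ x in C, w x * ⟪x, u⟫ * ⟪x, v⟫)
    (hpos : ∀ v, v ≠ 0 → 0 < ⟪A v, v⟫) {W μ : ℝ} (hW : 0 < W) (hμ : 0 < μ) {C' : Set (E n)}
    (hC'C : C' ⊆ C) (hC'm : MeasurableSet C') (hC'W : ∀ x ∈ C', w x ≤ W)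
    (hC'μ : μ ≤ ∫ x in C', w x) :
    (μ / (2 * W)) ^ 2 * (μ / 40000) ^ n ≤ |A.det| := by
  have hn0 : (0 : ℝ) < n := by exact_mod_cast hn
  have h_int : ∀ f : E n → ℝ, Continuous f → IntegrableOn f C := fun f hf =>
    (hf.continuousOn.integrableOn_compact hCb.isCompact_closure).mono_set subset_closure
  have hsymm : ∀ u v, ⟪A u, v⟫ = ⟪A v, u⟫ := fun u v => by
    rw [hA, hA]
    refine integral_congr_ae (.of_forall fun x => ?_)
    ring
  have hA0 : ∀ v, 0 ≤ ⟪A v, v⟫ := fun v => by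
    rcases eq_or_ne v 0 with rfl | hv
    · simp
    · exact (hpos v hv).le
  have hinj : Function.Injective A := by
    refine (injective_iff_map_eq_zero A).2 fun v hv => ?_
    by_contra h
    have := hpos v h
    simp [hv] at this
  set T := (LinearEquiv.ofInjectiveEndo (A : E n →ₗ[ℝ] E n) hinj).toContinuousLinearEquiv with hT
  have hTA : ∀ v, T v = A v := fun v => rfl
  set B : E n →L[ℝ] E n := (T.symm : E n →L[ℝ] E n) with hB
  have hAB : ∀ v, A (B v) = v := fun v => by rw [← hTA]; exact T.apply_symm_apply v
  have hBA : ∀ v, B (A v) = v := fun v => by rw [← hTA]; exact T.symm_apply_apply v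
  have hBsymm : ∀ u v, ⟪B u, v⟫ = ⟪B v, u⟫ := fun u v => by
    have := hsymm (B v) (B u)
    rw [hAB, hAB] at this
    rw [real_inner_comm, this, real_inner_comm]
  set s := 2 * n / μ with hs
  have hs0 : 0 < s := by positivity
  set P : Set (E n) := {y | ⟪A y, y⟫ ≤ s} with hP
  have hPm : MeasurableSet P := (isClosed_le (by fun_prop) continuous_const).measurableSet
  have hcs : ∀ u ∈ P, ∀ v ∈ P, |⟪A u, v⟫| ≤ s := fun u hu v hv => by
    refine abs_le_of_sq_le_sq ?_ hs0.le
    rw [sq s]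
    exact (sq_inner_map_le_mul_of_nonneg hsymm hA0 u v).trans
      (mul_le_mul hu hv (hA0 v) hs0.le)
  have hPb : Bornology.IsBounded P := by
    refine (isBounded_iff_forall_norm_le).2 ⟨‖B‖ * √(s * ‖A‖), fun y hy => ?_⟩
    have h1 := sq_inner_map_le_mul_of_nonneg hsymm hA0 y (A y)
    have h2 : ⟪A (A y), A y⟫ ≤ ‖A‖ * ‖A y‖ ^ 2 := by
      calc ⟪A (A y), A y⟫ ≤ ‖A (A y)‖ * ‖A y‖ := real_inner_le_norm _ _
        _ ≤ (‖A‖ * ‖A y‖) * ‖A y‖ := by gcongr; exact A.le_opNorm _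
        _ = _ := by ring
    have h3 : ‖A y‖ ^ 2 ≤ s * ‖A‖ := by
      rw [real_inner_self_eq_norm_sq] at h1
      have h4 : ⟪A y, y⟫ * ⟪A (A y), A y⟫ ≤ s * (‖A‖ * ‖A y‖ ^ 2) :=
        mul_le_mul hy h2 (hA0 _) hs0.le
      rcases (sq_nonneg ‖A y‖).eq_or_lt with h0 | h0
      · rw [← h0]; positivity
      · exact le_of_mul_le_mul_right (by nlinarith) h0
    calc ‖y‖ = ‖B (A y)‖ := by rw [hBA]
      _ ≤ ‖B‖ * ‖A y‖ := B.le_opNorm _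
      _ ≤ _ := by gcongr; exact Real.le_sqrt_of_sq_le h3
  have hvol : (volume (A '' P)).toReal = |A.det| * (volume P).toReal := by
    rw [Measure.addHaar_image_continuousLinearMap, ENNReal.toReal_mul,
      ENNReal.toReal_ofReal (abs_nonneg _)]
  have hAPb : Bornology.IsBounded (A '' P) := A.lipschitz.isBounded_image hPb
  have hsant := volume_mul_volume_le_of_abs_inner_le hn hs0 hAPb hPm hPb (by
    rintro _ ⟨u, hu, rfl⟩ v hv
    exact hcs u hu v hv)
  have htrace : ∫ x in C, w x * ⟪x, B x⟫ = n := by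
    let b := EuclideanSpace.basisFun (Fin n) ℝ
    have h1 : ∀ x, w x * ⟪x, B x⟫ = ∑ i, w x * ⟪x, B (b i)⟫ * ⟪x, b i⟫ := fun x => by
      rw [← b.sum_inner_mul_inner x (B x), Finset.mul_sum]
      refine Finset.sum_congr rfl fun i _ => ?_
      rw [real_inner_comm (B x) (b i), hBsymm x (b i), real_inner_comm x (B (b i))]
      ring
    simp_rw [h1]
    rw [integral_finsetSum _ fun i _ => h_int _ (by fun_prop)]
    have h2 : ∀ i, ∫ x in C, w x * ⟪x, B (b i)⟫ * ⟪x, b i⟫ = 1 := fun i => by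
      rw [← hA, hAB, real_inner_self_eq_norm_sq, b.norm_eq_one]
      norm_num
    simp [h2]
  have hB0 : ∀ x, 0 ≤ ⟪x, B x⟫ := fun x => by
    have := hA0 (B x)
    rwa [hAB] at this
  have hmem : ∀ x, ⟪x, B x⟫ ≤ s → x ∈ A '' P := fun x hx => by
    refine ⟨B x, ?_, hAB x⟩
    change ⟪A (B x), B x⟫ ≤ s
    rwa [hAB]
  have hpt : ∀ x ∈ C', w x ≤ (A '' P).indicator (fun _ => W) x + s⁻¹ * (w x * ⟪x, B x⟫) := by
    intro x hx
    by_cases hxs : ⟪x, B x⟫ ≤ s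
    · rw [indicator_of_mem (hmem x hxs)]
      have : 0 ≤ s⁻¹ * (w x * ⟪x, B x⟫) :=
        mul_nonneg (inv_nonneg.2 hs0.le) (mul_nonneg (hw0 x) (hB0 x))
      linarith [hC'W x hx]
    · have h1 : 0 ≤ (A '' P).indicator (fun _ => W) x := indicator_nonneg (fun _ _ => hW.le) x
      have h2 : w x ≤ s⁻¹ * (w x * ⟪x, B x⟫) := by
        rw [le_inv_mul_iff₀ hs0, mul_comm]
        exact mul_le_mul_of_nonneg_left (not_le.1 hxs).le (hw0 x)
      linarith
  have hAPm : MeasurableSet (A '' P) := by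
    have : A '' P = T '' P := rfl
    rw [this]
    exact (T.toHomeomorph.measurableEmbedding.measurableSet_image).2 hPm
  have hi1 : Integrable ((A '' P).indicator (fun _ => W)) :=
    (integrable_indicator_iff hAPm).2 (integrableOn_const hAPb.measure_lt_top.ne)
  have hi2 : IntegrableOn (fun x => w x * ⟪x, B x⟫) C := h_int _ (by fun_prop)
  have hmu : μ ≤ W * (volume (A '' P)).toReal + μ / 2 := by
    calc μ ≤ ∫ x in C', w x := hC'μ
      _ ≤ ∫ x in C', ((A '' P).indicator (fun _ => W) x + s⁻¹ * (w x * ⟪x, B x⟫)) :=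
          setIntegral_mono_on ((h_int w hw).mono_set hC'C)
            (hi1.integrableOn.add ((hi2.mono_set hC'C).const_mul _)) hC'm hpt
      _ = (∫ x in C', (A '' P).indicator (fun _ => W) x) + s⁻¹ * ∫ x in C', w x * ⟪x, B x⟫ := by
          rw [integral_add hi1.integrableOn ((hi2.mono_set hC'C).const_mul _),
            integral_const_mul]
      _ ≤ (∫ x, (A '' P).indicator (fun _ => W) x) + s⁻¹ * ∫ x in C, w x * ⟪x, B x⟫ := by
          gcongr
          · exact .of_forall fun x => indicator_nonneg (fun _ _ => hW.le) x
          · exact Measure.restrict_le_self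
          · exact .of_forall fun x => mul_nonneg (hw0 x) (hB0 x)
      _ = W * (volume (A '' P)).toReal + μ / 2 := by
          rw [integral_indicator hAPm, setIntegral_const, htrace, smul_eq_mul, mul_comm,
            measureReal_def, hs]
          congr 1
          field_simp
  have h1 : μ / (2 * W) ≤ (volume (A '' P)).toReal := by
    rw [div_le_iff₀ (by positivity)]
    linarith
  have h2 : (volume (A '' P)).toReal ^ 2 ≤ |A.det| * (40000 / μ) ^ n := by
    have e : 20000 * s / n = 40000 / μ := by rw [hs]; field_simp; norm_num
    rw [e] at hsant
    calc (volume (A '' P)).toReal ^ 2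
        = |A.det| * ((volume (A '' P)).toReal * (volume P).toReal) := by rw [hvol]; ring
      _ ≤ _ := by gcongr
  calc (μ / (2 * W)) ^ 2 * (μ / 40000) ^ n
      ≤ (|A.det| * (40000 / μ) ^ n) * (μ / 40000) ^ n := by
        gcongr
        exact (pow_le_pow_left₀ (by positivity) h1 2).trans h2
    _ = |A.det| := by
        rw [mul_assoc, ← mul_pow]
        field_simp
        simp

end MomentMatrix

theorem setIntegral_pos_of_continuous_of_ball_subset {n : ℕ} {C : Set (E n)} {r : ℝ}
    (hCb : Bornology.IsBounded C) (hrC : ball 0 r ⊆ C) {f : E n → ℝ} (hf : Continuous f)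
    (hf0 : ∀ x, 0 ≤ f x) {x : E n} (hx : x ∈ ball (0 : E n) r) (hfx : 0 < f x) :
    0 < ∫ x in C, f x := by
  rw [setIntegral_pos_iff_support_of_nonneg_ae (.of_forall hf0)
    ((hf.continuousOn.integrableOn_compact hCb.isCompact_closure).mono_set subset_closure)]
  refine lt_of_lt_of_le ?_ (measure_mono (inter_subset_inter_right _ hrC))
  exact (hf.isOpen_support.inter isOpen_ball).measure_pos volume ⟨x, hfx.ne', hx⟩

theorem exists_inner_ne_zero_of_ne_zero {n : ℕ} {r : ℝ} (hr : 0 < r) {u v : E n} (hu : u ≠ 0)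
    (hv : v ≠ 0) : ∃ x ∈ ball (0 : E n) r, ⟪x, u⟫ ≠ 0 ∧ ⟪x, v⟫ ≠ 0 := by
  obtain ⟨z, hz1, hz2⟩ : ∃ z : E n, ⟪z, u⟫ ≠ 0 ∧ ⟪z, v⟫ ≠ 0 := by
    by_cases h : ⟪u, v⟫ = 0
    · refine ⟨u + v, ?_, ?_⟩
      · rw [inner_add_left, real_inner_comm u v, h, add_zero]
        exact inner_self_ne_zero.2 hu
      · rw [inner_add_left, h, zero_add]
        exact inner_self_ne_zero.2 hv
    · exact ⟨u, inner_self_ne_zero.2 hu, h⟩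
  have hz : z ≠ 0 := by rintro rfl; simp at hz1
  have hz0 : 0 < ‖z‖ := norm_pos_iff.2 hz
  refine ⟨(r / (2 * ‖z‖)) • z, ?_, ?_, ?_⟩
  · rw [mem_ball_zero_iff, norm_smul, Real.norm_of_nonneg (by positivity)]
    have : r / (2 * ‖z‖) * ‖z‖ = r / 2 := by field_simp
    linarith
  · rw [inner_smul_left]
    exact mul_ne_zero (by simp; exact ⟨hr.ne', hz⟩) hz1
  · rw [inner_smul_left]
    exact mul_ne_zero (by simp; exact ⟨hr.ne', hz⟩) hz2

section MomentMap

variable {n : ℕ} {C : Set (E n)} {ψ ψ' : ℝ → ℝ}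

/-- The gradient of `ξ ↦ ∫ x in C, Ψ ⟪x, ξ⟫`, in terms of the derivative `ψ` of `Ψ`. -/
def momentMap (C : Set (E n)) (ψ : ℝ → ℝ) (ξ : E n) : E n := ∫ x in C, ψ ⟪x, ξ⟫ • x

/-- The Hessian of `ξ ↦ ∫ x in C, Ψ ⟪x, ξ⟫`, in terms of the second derivative of `Ψ`. -/
def momentDeriv (C : Set (E n)) (ψ' : ℝ → ℝ) (ξ : E n) : E n →L[ℝ] E n :=
  ∫ x in C, ψ' ⟪x, ξ⟫ • (innerSL ℝ x).smulRight x

theorem integrableOn_of_continuous_of_isBounded {F : Type*} [NormedAddCommGroup F]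
    (hCb : Bornology.IsBounded C) {f : E n → F} (hf : Continuous f) : IntegrableOn f C :=
  (hf.continuousOn.integrableOn_compact hCb.isCompact_closure).mono_set subset_closure

theorem continuous_smulRight_inner : Continuous fun x : E n => (innerSL ℝ x).smulRight x := by
  have : (fun x : E n => (innerSL ℝ x).smulRight x) = fun x : E n =>
      ContinuousLinearMap.smulRightL ℝ (E n) (E n) (innerSL ℝ x) x := rfl
  rw [this]
  fun_prop

theorem inner_momentMap (hCb : Bornology.IsBounded C) (hψ : Continuous ψ) (ξ η : E n) :
    ⟪momentMap C ψ ξ, η⟫ = ∫ x in C, ψ ⟪x, ξ⟫ * ⟪x, η⟫ := by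
  rw [real_inner_comm, momentMap, ← integral_inner]
  · refine integral_congr_ae (.of_forall fun x => ?_)
    simp only [inner_smul_right]
    rw [real_inner_comm x η]
  · exact integrableOn_of_continuous_of_isBounded hCb (by fun_prop)

theorem inner_momentDeriv (hCb : Bornology.IsBounded C) (hψ' : Continuous ψ') (ξ u v : E n) :
    ⟪momentDeriv C ψ' ξ u, v⟫ = ∫ x in C, ψ' ⟪x, ξ⟫ * ⟪x, u⟫ * ⟪x, v⟫ := by
  have hi : IntegrableOn (fun x : E n => ψ' ⟪x, ξ⟫ • (innerSL ℝ x).smulRight x) C :=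
    integrableOn_of_continuous_of_isBounded hCb
      ((show Continuous fun x : E n => ψ' ⟪x, ξ⟫ by fun_prop).smul continuous_smulRight_inner)
  rw [momentDeriv, ContinuousLinearMap.integral_apply hi, real_inner_comm, ← integral_inner]
  · refine integral_congr_ae (.of_forall fun x => ?_)
    simp only [smul_apply, ContinuousLinearMap.smulRight_apply,
      innerSL_apply_apply, inner_smul_right]
    rw [real_inner_comm x v]
    ring
  · refine integrableOn_of_continuous_of_isBounded hCb ?_
    simp only [smul_apply, ContinuousLinearMap.smulRight_apply,
      innerSL_apply_apply]
    fun_prop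

theorem hasFDerivAt_momentMap (hCm : MeasurableSet C) (hCb : Bornology.IsBounded C)
    (hψ : ∀ t, HasDerivAt ψ (ψ' t) t) (hψ' : Continuous ψ') (ξ : E n) :
    HasFDerivAt (momentMap C ψ) (momentDeriv C ψ' ξ) ξ := by
  have hψc : Continuous ψ := continuous_iff_continuousAt.2 fun t => (hψ t).continuousAt
  obtain ⟨R, hR0, hR⟩ : ∃ R > 0, ∀ x ∈ C, ‖x‖ ≤ R := by
    obtain ⟨R, hR0, hR⟩ := hCb.exists_pos_norm_le
    exact ⟨R, hR0, hR⟩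
  obtain ⟨M, hM⟩ :=
    (isCompact_Icc (a := -(R * (‖ξ‖ + 1))) (b := R * (‖ξ‖ + 1))).exists_bound_of_continuousOn
      hψ'.continuousOn
  refine hasFDerivAt_integral_of_dominated_of_fderiv_le (μ := volume.restrict C)
    (F := fun ξ x => ψ ⟪x, ξ⟫ • x) (F' := fun ξ x => ψ' ⟪x, ξ⟫ • (innerSL ℝ x).smulRight x)
    (bound := fun _ => M * (R * R)) (ball_mem_nhds ξ one_pos) ?_ ?_ ?_ ?_ ?_ ?_
  · exact .of_forall fun η => (show Continuous _ by fun_prop).aestronglyMeasurable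
  · exact integrableOn_of_continuous_of_isBounded hCb (by fun_prop)
  · exact ((show Continuous fun x : E n => ψ' ⟪x, ξ⟫ by fun_prop).smul
      continuous_smulRight_inner).aestronglyMeasurable
  · refine ae_restrict_of_forall_mem hCm fun x hx η hη => ?_
    have hη1 : ‖η‖ ≤ ‖ξ‖ + 1 := by
      have h1 := norm_le_norm_add_norm_sub' η ξ
      rw [mem_ball_iff_norm] at hη
      linarith
    have h1 : |⟪x, η⟫| ≤ R * (‖ξ‖ + 1) :=
      (abs_real_inner_le_norm x η).trans (mul_le_mul (hR x hx) hη1 (norm_nonneg _) hR0.le)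
    have h2 := hM _ (abs_le.1 h1)
    rw [norm_smul, ContinuousLinearMap.norm_smulRight_apply, innerSL_apply_norm]
    have := hR x hx
    have hM0 : 0 ≤ M := (norm_nonneg _).trans h2
    gcongr
  · exact integrableOn_const hCb.measure_lt_top.ne
  · refine .of_forall fun x η _ => ?_
    refine (((hψ ⟪x, η⟫).comp_hasFDerivAt η (innerSL ℝ x).hasFDerivAt).smul_const x).congr_fderiv
      (ContinuousLinearMap.ext fun v => ?_)
    simp [mul_smul]

theorem momentMap_injective {r : ℝ} (hr : 0 < r) (hCb : Bornology.IsBounded C)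
    (hrC : ball 0 r ⊆ C) (hψ : StrictMono ψ) (hψc : Continuous ψ) :
    Function.Injective (momentMap C ψ) := by
  intro u v huv
  by_contra hne
  have hne' : u - v ≠ 0 := sub_ne_zero.2 hne
  obtain ⟨x, hx, hx0, -⟩ := exists_inner_ne_zero_of_ne_zero hr hne' hne'
  have hi : ∀ η, IntegrableOn (fun x => ψ ⟪x, η⟫ * ⟪x, u - v⟫) C := fun η =>
    integrableOn_of_continuous_of_isBounded hCb (by fun_prop)
  have h1 : ∫ x in C, (ψ ⟪x, u⟫ - ψ ⟪x, v⟫) * ⟪x, u - v⟫ = 0 := by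
    have h2 := inner_momentMap hCb hψc u (u - v)
    rw [huv, inner_momentMap hCb hψc] at h2
    simp_rw [sub_mul]
    rw [integral_sub (hi u) (hi v), h2, sub_self]
  refine (setIntegral_pos_of_continuous_of_ball_subset hCb hrC
    (f := fun x => (ψ ⟪x, u⟫ - ψ ⟪x, v⟫) * ⟪x, u - v⟫) (by fun_prop) (fun x => ?_) hx ?_).ne' h1
  · rw [inner_sub_right]
    rcases le_total ⟪x, u⟫ ⟪x, v⟫ with h | h
    · exact mul_nonneg_of_nonpos_of_nonpos (sub_nonpos.2 (hψ.monotone h)) (sub_nonpos.2 h)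
    · exact mul_nonneg (sub_nonneg.2 (hψ.monotone h)) (sub_nonneg.2 h)
  · rw [inner_sub_right] at hx0 ⊢
    rcases lt_or_gt_of_ne (sub_ne_zero.1 hx0) with h | h
    · exact mul_pos_of_neg_of_neg (sub_neg.2 (hψ h)) (sub_neg.2 h)
    · exact mul_pos (sub_pos.2 (hψ h)) (sub_pos.2 h)

theorem volume_mul_volume_mul_le_of_momentMap (hn : 1 ≤ n) {r : ℝ} (hr : 0 < r)
    (hCm : MeasurableSet C) (hCb : Bornology.IsBounded C)
    (hrC : ball 0 r ⊆ C) (hψ : ∀ t, HasDerivAt ψ (ψ' t) t) (hψm : StrictMono ψ)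
    (hψ' : Continuous ψ')
    (hψ'0 : ∀ t, 0 ≤ ψ' t) (hpos : ∀ t, t ≠ 0 → 0 < ψ' t) {W μ κ : ℝ} (hW : 0 < W) (hμ : 0 < μ)
    (hκ : 0 < κ) {S D : Set (E n)} (hS : MeasurableSet S) (hSb : Bornology.IsBounded S)
    (hS0 : 0 ∉ S) (hD : MeasurableSet D) (hDb : Bornology.IsBounded D)
    (hC' : ∀ ξ ∈ S, ∃ C' ⊆ C, MeasurableSet C' ∧ (∀ x ∈ C', ψ' ⟪x, ξ⟫ ≤ W) ∧
      μ ≤ ∫ x in C', ψ' ⟪x, ξ⟫)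
    (hSD : ∀ ξ ∈ S, ∀ η ∈ D, |∫ x in C, ψ ⟪x, ξ⟫ * ⟪x, η⟫| ≤ κ) :
    ((μ / (2 * W)) ^ 2 * (μ / 40000) ^ n) * ((volume S).toReal * (volume D).toReal) ≤
      (20000 * κ / n) ^ n := by
  have hψc : Continuous ψ := continuous_iff_continuousAt.2 fun t => (hψ t).continuousAt
  have hfd := hasFDerivAt_momentMap hCm hCb hψ hψ'
  have hGc : Continuous (momentMap C ψ) :=
    continuous_iff_continuousAt.2 fun ξ => (hfd ξ).continuousAt
  have hGb : Bornology.IsBounded (momentMap C ψ '' S) :=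
    ((hSb.isCompact_closure.image hGc).isBounded).subset (image_mono subset_closure)
  set δ := (μ / (2 * W)) ^ 2 * (μ / 40000) ^ n with hδ
  have hδ0 : 0 ≤ δ := by positivity
  have hdet : ∀ ξ ∈ S, δ ≤ |(momentDeriv C ψ' ξ).det| := by
    intro ξ hξ
    have hξ0 : ξ ≠ 0 := fun h => hS0 (h ▸ hξ)
    obtain ⟨C', hC'C, hC'm, hC'W, hC'μ⟩ := hC' ξ hξ
    refine sq_div_mul_pow_le_det hn hCb (w := fun x => ψ' ⟪x, ξ⟫) (by fun_prop) (fun x => hψ'0 _)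
      (inner_momentDeriv hCb hψ' ξ) (fun v hv => ?_) hW hμ hC'C hC'm hC'W hC'μ
    obtain ⟨x, hx, hx1, hx2⟩ := exists_inner_ne_zero_of_ne_zero hr hξ0 hv
    rw [inner_momentDeriv hCb hψ']
    simp_rw [mul_assoc, ← sq]
    exact setIntegral_pos_of_continuous_of_ball_subset hCb hrC
      (f := fun x => ψ' ⟪x, ξ⟫ * ⟪x, v⟫ ^ 2) (by fun_prop)
      (fun x => mul_nonneg (hψ'0 _) (sq_nonneg _)) hx (mul_pos (hpos _ hx1) (by positivity))
  have hvol : δ * (volume S).toReal ≤ (volume (momentMap C ψ '' S)).toReal := by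
    have h1 := lintegral_abs_det_fderiv_eq_addHaar_image volume hS
      (fun ξ _ => (hfd ξ).hasFDerivWithinAt) (momentMap_injective hr hCb hrC hψm hψc).injOn
    have h2 : ENNReal.ofReal δ * volume S ≤ volume (momentMap C ψ '' S) := by
      rw [← h1, ← setLIntegral_const]
      exact setLIntegral_mono' hS fun ξ hξ => ENNReal.ofReal_le_ofReal (hdet ξ hξ)
    have h3 := ENNReal.toReal_mono hGb.measure_lt_top.ne h2
    rwa [ENNReal.toReal_mul, ENNReal.toReal_ofReal hδ0] at h3
  have h4 := volume_mul_volume_le_of_abs_inner_le hn hκ hGb hD hDb (by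
    rintro _ ⟨ξ, hξ, rfl⟩ η hη
    rw [inner_momentMap hCb hψc]
    exact hSD ξ hξ η hη)
  refine le_trans ?_ h4
  rw [← mul_assoc]
  gcongr

end MomentMap

/-- The `p`-th absolute moment of the linear functional `⟪·, ξ⟫` on `C`. -/
def absMoment {n : ℕ} (C : Set (E n)) (p : ℝ) (ξ : E n) : ℝ := ∫ x in C, |⟪x, ξ⟫| ^ p

/-- The unit ball of the norm `ξ ↦ ‖⟪·, ξ⟫‖_{L_p(C)}`. -/
def momentBody {n : ℕ} (C : Set (E n)) (p : ℝ) : Set (E n) := {ξ | absMoment C p ξ ≤ 1}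

theorem rpow_le_div_mul_rpow_add {q p a : ℝ} (hq : 0 ≤ q) (hp : 0 < p) (hqp : q ≤ p)
    (ha : 0 ≤ a) : a ^ q ≤ q / p * a ^ p + (1 - q / p) := by
  have h := Real.geom_mean_le_arith_mean2_weighted (w₁ := q / p) (w₂ := 1 - q / p)
    (p₁ := a ^ p) (p₂ := 1) (by positivity) (sub_nonneg.2 ((div_le_one hp).2 hqp))
    (by positivity) zero_le_one (by ring)
  rw [Real.one_rpow, mul_one, mul_one, ← Real.rpow_mul ha, mul_div_cancel₀ _ hp.ne'] at h
  exact h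

theorem rpow_sub_one_mul_le {p a b : ℝ} (hp : 1 ≤ p) (ha : 0 ≤ a) (hb : 0 ≤ b) :
    a ^ (p - 1) * b ≤ (p - 1) / p * a ^ p + 1 / p * b ^ p := by
  have hp0 : 0 < p := by linarith
  have h := Real.geom_mean_le_arith_mean2_weighted (w₁ := (p - 1) / p) (w₂ := 1 / p)
    (p₁ := a ^ p) (p₂ := b ^ p) (div_nonneg (by linarith) hp0.le) (by positivity)
    (by positivity) (by positivity) (by field_simp; ring)
  rwa [← Real.rpow_mul ha, ← Real.rpow_mul hb, mul_div_cancel₀ _ hp0.ne',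
    mul_div_cancel₀ _ hp0.ne', Real.rpow_one] at h

section AbsMoment

variable {n : ℕ} {C : Set (E n)}

theorem continuous_abs_inner_rpow {p : ℝ} (hp : 0 ≤ p) (ξ : E n) :
    Continuous fun x : E n => |⟪x, ξ⟫| ^ p :=
  (show Continuous fun x : E n => |⟪x, ξ⟫| by fun_prop).rpow_const fun _ => .inr hp

theorem continuous_absMoment (hC : IsCompact C) {p : ℝ} (hp : 0 ≤ p) :
    Continuous (absMoment C p) := by
  refine continuous_parametric_integral_of_continuous (f := fun ξ x => |⟪x, ξ⟫| ^ p) ?_ hC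
  exact (show Continuous fun z : E n × E n => |⟪z.2, z.1⟫| by fun_prop).rpow_const
    fun _ => .inr hp

theorem integrableOn_abs_inner_rpow (hC : IsCompact C) {p : ℝ} (hp : 0 ≤ p) (ξ : E n) :
    IntegrableOn (fun x => |⟪x, ξ⟫| ^ p) C :=
  (continuous_abs_inner_rpow hp ξ).continuousOn.integrableOn_compact hC

theorem absMoment_nonneg (p : ℝ) (ξ : E n) : 0 ≤ absMoment C p ξ :=
  integral_nonneg fun _ => Real.rpow_nonneg (abs_nonneg _) _

theorem absMoment_smul (p : ℝ) (a : ℝ) (ξ : E n) :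
    absMoment C p (a • ξ) = |a| ^ p * absMoment C p ξ := by
  unfold absMoment
  rw [← integral_const_mul]
  refine integral_congr_ae (.of_forall fun x => ?_)
  simp only [inner_smul_right, abs_mul]
  exact Real.mul_rpow (abs_nonneg _) (abs_nonneg _)

theorem absMoment_pos (hC : IsCompact C) {r : ℝ} (hr : 0 < r) (hrC : ball 0 r ⊆ C) {p : ℝ}
    (hp : 0 ≤ p) {ξ : E n} (hξ : ξ ≠ 0) : 0 < absMoment C p ξ := by
  obtain ⟨x, hx, hx0, -⟩ := exists_inner_ne_zero_of_ne_zero hr hξ hξ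
  exact setIntegral_pos_of_continuous_of_ball_subset hC.isBounded hrC
    (continuous_abs_inner_rpow hp ξ) (fun x => by positivity) hx
    (Real.rpow_pos_of_pos (abs_pos.2 hx0) _)

theorem isClosed_momentBody (hC : IsCompact C) {p : ℝ} (hp : 0 ≤ p) :
    IsClosed (momentBody C p) :=
  isClosed_le (continuous_absMoment hC hp) continuous_const

theorem absMoment_le_one_of_le (hC : IsCompact C) (hC1 : (volume C).toReal = 1) {q p : ℝ}
    (hq : 0 ≤ q) (hp : 0 < p) (hqp : q ≤ p) {ξ : E n} (h : absMoment C p ξ ≤ 1) :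
    absMoment C q ξ ≤ 1 := by
  have hi := integrableOn_abs_inner_rpow hC hp.le ξ
  calc absMoment C q ξ ≤ ∫ x in C, (q / p * |⟪x, ξ⟫| ^ p + (1 - q / p)) :=
        setIntegral_mono (integrableOn_abs_inner_rpow hC hq ξ)
          ((hi.const_mul _).add (integrableOn_const hC.measure_lt_top.ne))
          fun x => rpow_le_div_mul_rpow_add hq hp hqp (abs_nonneg _)
    _ = q / p * absMoment C p ξ + (1 - q / p) := by
        rw [integral_add (hi.const_mul _) (integrableOn_const hC.measure_lt_top.ne),
          integral_const_mul, setIntegral_const, measureReal_def, hC1, one_smul]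
        rfl
    _ ≤ q / p * 1 + (1 - q / p) := by gcongr
    _ = 1 := by ring

theorem momentBody_subset_of_le (hC : IsCompact C) (hC1 : (volume C).toReal = 1) {q p : ℝ}
    (hq : 0 ≤ q) (hp : 0 < p) (hqp : q ≤ p) : momentBody C p ⊆ momentBody C q :=
  fun _ h => absMoment_le_one_of_le hC hC1 hq hp hqp h

theorem exists_mul_norm_le_absMoment_one (hC : IsCompact C) {r : ℝ} (hr : 0 < r)
    (hrC : ball 0 r ⊆ C) : ∃ m > 0, ∀ ξ, m * ‖ξ‖ ≤ absMoment C 1 ξ := by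
  rcases (sphere (0 : E n) 1).eq_empty_or_nonempty with he | hne
  · refine ⟨1, one_pos, fun ξ => ?_⟩
    rcases eq_or_ne ξ 0 with rfl | hξ
    · simp [absMoment_nonneg]
    · have : (‖ξ‖⁻¹ • ξ) ∈ sphere (0 : E n) 1 := by
        rw [mem_sphere_zero_iff_norm, norm_smul, norm_inv, norm_norm,
          inv_mul_cancel₀ (norm_ne_zero_iff.2 hξ)]
      simp [he] at this
  · obtain ⟨θ, hθ, hmin⟩ := (isCompact_sphere (0 : E n) 1).exists_isMinOn hne
      (continuous_absMoment hC zero_le_one).continuousOn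
    refine ⟨absMoment C 1 θ, absMoment_pos hC hr hrC zero_le_one ?_, fun ξ => ?_⟩
    · rintro rfl
      simp at hθ
    · rcases eq_or_ne ξ 0 with rfl | hξ
      · simp [absMoment_nonneg]
      · have h0 : 0 < ‖ξ‖ := norm_pos_iff.2 hξ
        have h1 : (‖ξ‖⁻¹ • ξ) ∈ sphere (0 : E n) 1 := by
          rw [mem_sphere_zero_iff_norm, norm_smul, norm_inv, norm_norm,
            inv_mul_cancel₀ h0.ne']
        have h2 := hmin h1
        rw [mem_ofPred_eq, absMoment_smul, Real.rpow_one, abs_of_pos (by positivity),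
          le_inv_mul_iff₀ h0, mul_comm] at h2
        exact h2

theorem isBounded_momentBody (hC : IsCompact C) (hC1 : (volume C).toReal = 1) {r : ℝ}
    (hr : 0 < r) (hrC : ball 0 r ⊆ C) {p : ℝ} (hp : 1 ≤ p) :
    Bornology.IsBounded (momentBody C p) := by
  obtain ⟨m, hm, h⟩ := exists_mul_norm_le_absMoment_one hC hr hrC
  refine isBounded_iff_forall_norm_le.2 ⟨m⁻¹, fun ξ hξ => ?_⟩
  have h1 := (h ξ).trans (absMoment_le_one_of_le hC hC1 zero_le_one (by linarith) hp hξ)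
  rwa [mul_comm, ← le_div_iff₀ hm, one_div] at h1

theorem setIntegral_rpow_sub_one_mul_le (hC : IsCompact C) {p : ℝ} (hp : 1 ≤ p) (ξ η : E n) :
    ∫ x in C, |⟪x, ξ⟫| ^ (p - 1) * |⟪x, η⟫| ≤
      (p - 1) / p * absMoment C p ξ + 1 / p * absMoment C p η := by
  have hp0 : 0 ≤ p := by linarith
  have h1 := (integrableOn_abs_inner_rpow hC hp0 ξ).const_mul ((p - 1) / p)
  have h2 := (integrableOn_abs_inner_rpow hC hp0 η).const_mul (1 / p)
  calc _ ≤ ∫ x in C, ((p - 1) / p * |⟪x, ξ⟫| ^ p + 1 / p * |⟪x, η⟫| ^ p) := by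
        refine setIntegral_mono ?_ (h1.add h2) fun x =>
          rpow_sub_one_mul_le hp (abs_nonneg _) (abs_nonneg _)
        exact ((continuous_abs_inner_rpow (sub_nonneg.2 hp) ξ).mul
          (by fun_prop)).continuousOn.integrableOn_compact hC
    _ = _ := by
        rw [integral_add h1 h2, integral_const_mul, integral_const_mul]
        rfl

theorem setIntegral_le_setIntegral_inter (hC : IsCompact C) {f g : E n → ℝ} (hf : Continuous f)
    (hg : Continuous g) {S : Set (E n)} (hS : MeasurableSet S) (h1 : ∀ x ∈ S, g x ≤ f x)
    (h2 : ∀ x, x ∉ S → g x ≤ 0) : ∫ x in C, g x ≤ ∫ x in C ∩ S, f x := by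
  rw [← setIntegral_indicator hS]
  refine setIntegral_mono (hg.continuousOn.integrableOn_compact hC)
    (Integrable.indicator (hf.continuousOn.integrableOn_compact hC) hS) fun x => ?_
  by_cases hx : x ∈ S
  · simpa [hx] using h1 x hx
  · simpa [hx] using h2 x hx

theorem volume_momentBody_one_sq_le (hn : 1 ≤ n) (hC : IsCompact C)
    (hC1 : (volume C).toReal = 1) {r : ℝ} (hr : 0 < r) (hrC : ball 0 r ⊆ C) :
    (volume (momentBody C 1)).toReal ^ 2 ≤ (2 ^ 53 / n) ^ n := by
  have hn0 : (0 : ℝ) < n := by exact_mod_cast hn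
  have : Nontrivial (E n) := by
    have : Nonempty (Fin n) := ⟨⟨0, hn⟩⟩
    infer_instance
  have hb := isBounded_momentBody hC hC1 hr hrC le_rfl
  have hm := (isClosed_momentBody hC zero_le_one).measurableSet
  have h := volume_mul_volume_mul_le_of_momentMap hn hr hC.measurableSet hC.isBounded hrC
    (ψ := Real.arctan) (ψ' := fun t => 1 / (1 + t ^ 2)) Real.hasDerivAt_arctan
    Real.arctan_strictMono (by fun_prop (disch := intro t; positivity))
    (fun t => by positivity) (fun t _ => by positivity)
    (W := 1) (μ := 1 / 32) (κ := 2) one_pos (by norm_num) two_pos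
    (S := momentBody C 1 \ {0}) (D := momentBody C 1) (hm.diff (measurableSet_singleton _))
    (hb.subset sdiff_subset) (by simp) hm hb ?_ ?_
  · rw [measure_sdiff_null (measure_singleton _), ← sq] at h
    have e : ((1 / 32 / (2 * 1)) ^ 2 * (1 / 32 / 40000) ^ n : ℝ) * (2 ^ 12 * 1280000 ^ n) = 1 := by
      rw [mul_mul_mul_comm, ← mul_pow]
      norm_num
    set V := (volume (momentBody C 1)).toReal
    calc V ^ 2 = ((1 / 32 / (2 * 1)) ^ 2 * (1 / 32 / 40000) ^ n : ℝ) * (2 ^ 12 * 1280000 ^ n) *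
          V ^ 2 := by rw [e, one_mul]
      _ = (2 ^ 12 * 1280000 ^ n : ℝ) * ((1 / 32 / (2 * 1)) ^ 2 * (1 / 32 / 40000) ^ n *
          V ^ 2) := by ring
      _ ≤ (2 ^ 12 * 1280000 ^ n : ℝ) * (20000 * 2 / n) ^ n := by gcongr
      _ ≤ ((2 ^ 12) ^ n * 1280000 ^ n : ℝ) * (20000 * 2 / n) ^ n := by
          gcongr
          exact le_self_pow₀ (by norm_num) (by omega)
      _ = (2 ^ 12 * 1280000 * (20000 * 2 / n) : ℝ) ^ n := by rw [← mul_pow, ← mul_pow]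
      _ = ((2 ^ 12 * 1280000 * (20000 * 2)) / n : ℝ) ^ n := by congr 1; ring
      _ ≤ (2 ^ 53 / n : ℝ) ^ n := by gcongr; norm_num
  · rintro ξ ⟨hξ, -⟩
    refine ⟨C ∩ {x | |⟪x, ξ⟫| ≤ 4}, inter_subset_left, ?_, fun x _ => ?_, ?_⟩
    · exact hC.measurableSet.inter (isClosed_le (by fun_prop) continuous_const).measurableSet
    · rw [div_le_one (by positivity)]
      linarith [sq_nonneg ⟪x, ξ⟫]
    · have hk : ∀ c : ℝ, IntegrableOn (fun _ : E n => c) C := fun c =>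
        integrableOn_const hC.measure_lt_top.ne
      refine le_trans ?_ (setIntegral_le_setIntegral_inter hC
        (g := fun x => 1 / 17 - 1 / 68 * |⟪x, ξ⟫| ^ (1 : ℝ))
        (show Continuous fun x : E n => 1 / (1 + ⟪x, ξ⟫ ^ 2) by
          fun_prop (disch := intro t; positivity))
        (by simp only [Real.rpow_one]; fun_prop)
        (isClosed_le (by fun_prop) continuous_const).measurableSet (fun x hx => ?_) fun x hx => ?_)
      · rw [integral_sub (hk _) ((integrableOn_abs_inner_rpow hC zero_le_one ξ).const_mul _),
          integral_const_mul,
          setIntegral_const, measureReal_def, hC1, one_smul]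
        have : ∫ x in C, |⟪x, ξ⟫| ^ (1 : ℝ) ≤ 1 := hξ
        linarith
      · have hx' : |⟪x, ξ⟫| ≤ 4 := hx
        have h1 : (1 / 17 : ℝ) ≤ 1 / (1 + ⟪x, ξ⟫ ^ 2) := by
          have : ⟪x, ξ⟫ ^ 2 ≤ 4 ^ 2 := sq_le_sq' (abs_le.1 hx').1 (abs_le.1 hx').2
          gcongr
          linarith
        have := abs_nonneg ⟪x, ξ⟫
        rw [Real.rpow_one]
        linarith
      · have hx' : 4 < |⟪x, ξ⟫| := not_le.1 hx
        rw [Real.rpow_one]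
        linarith
  · rintro ξ ⟨hξ, -⟩ η hη
    have h1 : ∀ x, |Real.arctan ⟪x, ξ⟫ * ⟪x, η⟫| ≤ 2 * |⟪x, η⟫| ^ (1 : ℝ) := fun x => by
      rw [abs_mul, Real.rpow_one]
      refine mul_le_mul_of_nonneg_right (abs_le.2 ⟨?_, ?_⟩) (abs_nonneg _)
      · linarith [Real.neg_pi_div_two_lt_arctan ⟪x, ξ⟫, Real.pi_lt_four]
      · linarith [Real.arctan_lt_pi_div_two ⟪x, ξ⟫, Real.pi_lt_four]
    calc |∫ x in C, Real.arctan ⟪x, ξ⟫ * ⟪x, η⟫|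
        ≤ ∫ x in C, |Real.arctan ⟪x, ξ⟫ * ⟪x, η⟫| := abs_integral_le_integral_abs
      _ ≤ ∫ x in C, 2 * |⟪x, η⟫| ^ (1 : ℝ) := by
          refine setIntegral_mono ?_ ((integrableOn_abs_inner_rpow hC zero_le_one η).const_mul _) h1
          exact (show Continuous _ by fun_prop).continuousOn.integrableOn_compact hC
      _ = 2 * absMoment C 1 η := integral_const_mul _ _
      _ ≤ 2 := by linarith [show absMoment C 1 η ≤ 1 from hη]

end AbsMoment

section EvenMoment

variable {n : ℕ} {C : Set (E n)}

theorem absMoment_natCast_of_even {m : ℕ} (hm : Even m) (ξ : E n) :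
    absMoment C m ξ = ∫ x in C, ⟪x, ξ⟫ ^ m := by
  simp only [absMoment, Real.rpow_natCast, hm.pow_abs]

theorem absMoment_zero_right {p : ℝ} (hp : p ≠ 0) : absMoment C p (0 : E n) = 0 := by
  simp [absMoment, Real.zero_rpow hp]

theorem le_setIntegral_pow_of_moments (hC : IsCompact C) (j : ℕ) {ξ : E n}
    (h1 : 1 / 4 ≤ absMoment C (2 * j + 2 : ℕ) ξ)
    (h2 : absMoment C (2 * (2 * j + 2) : ℕ) ξ ≤ 16 ^ (2 * j + 2)) :
    (2 * j + 1 : ℝ) * (1 / 2 ^ 17) ≤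
      ∫ x in C ∩ {x | |⟪x, ξ⟫| ≤ 128}, (2 * j + 1 : ℝ) * ⟪x, ξ⟫ ^ (2 * j) := by
  rw [integral_const_mul]
  refine mul_le_mul_of_nonneg_left ?_ (by positivity)
  rw [absMoment_natCast_of_even (by simp [parity_simps])] at h1 h2
  have hi : ∀ m : ℕ, IntegrableOn (fun x => ⟪x, ξ⟫ ^ m) C := fun m =>
    (show Continuous fun x : E n => ⟪x, ξ⟫ ^ m by fun_prop).continuousOn.integrableOn_compact hC
  refine le_trans ?_ (setIntegral_le_setIntegral_inter hC
    (g := fun x => 1 / 2 ^ 14 * (⟪x, ξ⟫ ^ (2 * j + 2) -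
      (1 / 128) ^ (2 * j + 2) * ⟪x, ξ⟫ ^ (2 * (2 * j + 2))))
    (show Continuous fun x : E n => ⟪x, ξ⟫ ^ (2 * j) by fun_prop)
    (by fun_prop) (isClosed_le (by fun_prop) continuous_const).measurableSet
    (fun x hx => ?_) fun x hx => ?_)
  · rw [integral_const_mul, integral_sub (hi _) ((hi _).const_mul _), integral_const_mul]
    have h3 : ((1 : ℝ) / 128) ^ (2 * j + 2) * ∫ x in C, ⟪x, ξ⟫ ^ (2 * (2 * j + 2)) ≤ 1 / 8 := by
      calc _ ≤ ((1 : ℝ) / 128) ^ (2 * j + 2) * 16 ^ (2 * j + 2) := by gcongr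
        _ = (1 / 8) ^ (2 * j + 2) := by rw [← mul_pow]; norm_num
        _ ≤ 1 / 8 := pow_le_of_le_one (by norm_num) (by norm_num) (by omega)
    calc (1 : ℝ) / 2 ^ 17 = 1 / 2 ^ 14 * (1 / 4 - 1 / 8) := by norm_num
      _ ≤ _ := by gcongr
  · have hx' : |⟪x, ξ⟫| ≤ 128 := hx
    have h0 : 0 ≤ ⟪x, ξ⟫ ^ (2 * j) := by rw [pow_mul]; positivity
    have h3 : ⟪x, ξ⟫ ^ 2 ≤ 128 ^ 2 := sq_le_sq' (abs_le.1 hx').1 (abs_le.1 hx').2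
    have h4 : 0 ≤ ((1 : ℝ) / 128) ^ (2 * j + 2) * ⟪x, ξ⟫ ^ (2 * (2 * j + 2)) := by
      rw [pow_mul]; positivity
    have h5 : ⟪x, ξ⟫ ^ (2 * j + 2) ≤ 2 ^ 14 * ⟪x, ξ⟫ ^ (2 * j) := by
      rw [pow_add, mul_comm]
      refine mul_le_mul_of_nonneg_right (h3.trans_eq (by norm_num)) h0
    linarith
  · have hx' : 128 ≤ |⟪x, ξ⟫| := (not_le.1 hx).le
    have h3 : (128 : ℝ) ^ (2 * j + 2) ≤ ⟪x, ξ⟫ ^ (2 * j + 2) := by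
      rw [← Even.pow_abs (n := 2 * j + 2) (by simp [parity_simps]) ⟪x, ξ⟫]
      gcongr
    have h4 : ⟪x, ξ⟫ ^ (2 * j + 2) ≤
        (1 / 128) ^ (2 * j + 2) * ⟪x, ξ⟫ ^ (2 * (2 * j + 2)) := by
      rw [one_div, inv_pow, le_inv_mul_iff₀ (by positivity),
        show ⟪x, ξ⟫ ^ (2 * (2 * j + 2)) = ⟪x, ξ⟫ ^ (2 * j + 2) * ⟪x, ξ⟫ ^ (2 * j + 2) by ring]
      exact mul_le_mul_of_nonneg_right h3 ((by positivity : (0 : ℝ) ≤ 128 ^ (2 * j + 2)).trans h3)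
    linarith

theorem volume_mul_volume_momentBody_le (hn : 1 ≤ n) (hC : IsCompact C)
    (hC1 : (volume C).toReal = 1) {r : ℝ} (hr : 0 < r) (hrC : ball 0 r ⊆ C) {j : ℕ}
    (hj : 2 * j + 2 ≤ n) {S : Set (E n)} (hS : MeasurableSet S)
    (hS1 : ∀ ξ ∈ S, absMoment C (2 * j + 2 : ℕ) ξ ≤ 1)
    (hS2 : ∀ ξ ∈ S, 1 / 4 ≤ absMoment C (2 * j + 2 : ℕ) ξ)
    (hS3 : ∀ ξ ∈ S, absMoment C (2 * (2 * j + 2) : ℕ) ξ ≤ 16 ^ (2 * j + 2)) :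
    (volume S).toReal * (volume (momentBody C (2 * j + 2 : ℕ))).toReal ≤
      (2 ^ 99 / (n * (2 * j + 2))) ^ n := by
  have hn0 : (0 : ℝ) < n := by exact_mod_cast hn
  have hp1 : (1 : ℝ) ≤ (2 * j + 2 : ℕ) := by exact_mod_cast (by omega : 1 ≤ 2 * j + 2)
  have hp0 : (0 : ℝ) ≤ (2 * j + 2 : ℕ) := by positivity
  have hb := isBounded_momentBody hC hC1 hr hrC hp1
  have hm := (isClosed_momentBody hC hp0).measurableSet
  have h := volume_mul_volume_mul_le_of_momentMap hn hr hC.measurableSet hC.isBounded hrC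
    (ψ := fun t => t ^ (2 * j + 1)) (ψ' := fun t => (2 * j + 1 : ℝ) * t ^ (2 * j))
    (fun t => by simpa using hasDerivAt_pow (2 * j + 1) t)
    (Odd.strictMono_pow (by simp [parity_simps])) (by fun_prop)
    (fun t => by rw [pow_mul]; positivity) (fun t ht => by rw [pow_mul]; positivity)
    (W := (2 * j + 1) * 128 ^ (2 * j)) (μ := (2 * j + 1 : ℝ) * (1 / 2 ^ 17)) (κ := 1)
    (by positivity) (by positivity) one_pos (S := S) (D := momentBody C (2 * j + 2 : ℕ)) hS
    (hb.subset hS1) (fun h0 => ?_) hm hb (fun ξ hξ => ?_) (fun ξ hξ η hη => ?_)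
  · set V := (volume S).toReal * (volume (momentBody C (2 * j + 2 : ℕ))).toReal with hV
    have hV0 : 0 ≤ V := by positivity
    have e1 : ((2 * j + 1 : ℝ) * (1 / 2 ^ 17) / (2 * ((2 * j + 1) * 128 ^ (2 * j)))) ^ 2 *
        2 ^ (36 + 28 * j) = 1 := by
      have : (128 : ℝ) ^ (2 * j) = 2 ^ (14 * j) := by
        rw [show (128 : ℝ) = 2 ^ 7 by norm_num, ← pow_mul]; ring_nf
      rw [this]
      field_simp
      rw [← pow_mul, ← pow_add]
      congr 1
      ring
    have e2 : ((2 * j + 1 : ℝ) * (1 / 2 ^ 17) / 40000) ^ n *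
        (2 ^ 17 * 40000 / (2 * j + 1)) ^ n = 1 := by
      rw [← mul_pow]
      field_simp
      norm_num
    have h3 : (2 : ℝ) ^ (36 + 28 * j) ≤ (2 ^ 50) ^ n := by
      rw [← pow_mul]
      exact pow_le_pow_right₀ (by norm_num) (by omega)
    have h4 : (2 ^ 17 * 40000 / (2 * j + 1) : ℝ) ≤ 2 ^ 34 / (2 * j + 2) := by
      rw [div_le_div_iff₀ (by positivity) (by positivity)]
      nlinarith [(Nat.cast_nonneg j : (0 : ℝ) ≤ j)]
    have e3 : (2 : ℝ) ^ 50 * (2 ^ 34 / (2 * j + 2)) * (2 ^ 15 / n) =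
        2 ^ 99 / (n * (2 * j + 2)) := by
      rw [← mul_div_assoc (2 ^ 50 : ℝ), div_mul_div_comm, mul_comm (n : ℝ)]
      norm_num
    calc V = (((2 * j + 1 : ℝ) * (1 / 2 ^ 17) / (2 * ((2 * j + 1) * 128 ^ (2 * j)))) ^ 2 *
          2 ^ (36 + 28 * j)) * (((2 * j + 1 : ℝ) * (1 / 2 ^ 17) / 40000) ^ n *
          (2 ^ 17 * 40000 / (2 * j + 1)) ^ n) * V := by rw [e1, e2]; ring
      _ = (2 ^ (36 + 28 * j) * (2 ^ 17 * 40000 / (2 * j + 1)) ^ n) *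
          ((((2 * j + 1 : ℝ) * (1 / 2 ^ 17) / (2 * ((2 * j + 1) * 128 ^ (2 * j)))) ^ 2 *
          ((2 * j + 1 : ℝ) * (1 / 2 ^ 17) / 40000) ^ n) * V) := by ring
      _ ≤ ((2 ^ 50) ^ n * (2 ^ 34 / (2 * j + 2)) ^ n) * (20000 * 1 / n) ^ n := by
          gcongr
      _ ≤ ((2 ^ 50) ^ n * (2 ^ 34 / (2 * j + 2)) ^ n) * (2 ^ 15 / n) ^ n := by
          gcongr
          norm_num
      _ = (2 ^ 99 / (n * (2 * j + 2))) ^ n := by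
          rw [← mul_pow, ← mul_pow, e3]
  · have := hS2 0 h0
    rw [absMoment_zero_right (by positivity)] at this
    norm_num at this
  · refine ⟨C ∩ {x | |⟪x, ξ⟫| ≤ 128}, inter_subset_left, ?_, fun x hx => ?_,
      le_setIntegral_pow_of_moments hC j (hS2 ξ hξ) (hS3 ξ hξ)⟩
    · exact hC.measurableSet.inter (isClosed_le (by fun_prop) continuous_const).measurableSet
    · have hx' : |⟪x, ξ⟫| ≤ 128 := hx.2
      rw [← Even.pow_abs (n := 2 * j) (by simp) ⟪x, ξ⟫]
      gcongr
  · have h1 := setIntegral_rpow_sub_one_mul_le hC hp1 ξ η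
    have h2 : ∀ x : E n, |⟪x, ξ⟫| ^ (((2 * j + 2 : ℕ) : ℝ) - 1) * |⟪x, η⟫| =
        |⟪x, ξ⟫ ^ (2 * j + 1) * ⟪x, η⟫| := fun x => by
      rw [abs_mul, abs_pow, ← Real.rpow_natCast]
      congr 2
      push_cast
      ring
    simp_rw [h2] at h1
    refine abs_integral_le_integral_abs.trans (h1.trans ?_)
    have h3 := hS1 ξ hξ
    have h4 : absMoment C (2 * j + 2 : ℕ) η ≤ 1 := hη
    set p := ((2 * j + 2 : ℕ) : ℝ)
    calc (p - 1) / p * absMoment C p ξ + 1 / p * absMoment C p η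
        ≤ (p - 1) / p * 1 + 1 / p * 1 := by
          have : 0 ≤ (p - 1) / p := div_nonneg (by linarith) hp0
          gcongr
      _ = 1 := by field_simp; ring

end EvenMoment

section MomentStep

variable {n : ℕ} {C : Set (E n)}

theorem one_fourth_le_one_sub_inv_pow (j : ℕ) :
    (1 / 4 : ℝ) ≤ (1 - 1 / ((2 * j + 2 : ℕ) : ℝ)) ^ (2 * j + 2) := by
  have h0 : (1 : ℝ) / ((2 * j + 2 : ℕ) : ℝ) ≤ 1 := by
    rw [div_le_one (by positivity)]
    exact_mod_cast (by omega : 1 ≤ 2 * j + 2)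
  have h := one_add_mul_le_pow (a := -(1 / ((2 * j + 2 : ℕ) : ℝ))) (by linarith) (j + 1)
  have h1 : 1 + ((j + 1 : ℕ) : ℝ) * -(1 / ((2 * j + 2 : ℕ) : ℝ)) = 1 / 2 := by
    push_cast
    field_simp
    ring
  rw [h1, ← sub_eq_add_neg] at h
  calc (1 / 4 : ℝ) = (1 / 2) ^ 2 := by norm_num
    _ ≤ ((1 - 1 / ((2 * j + 2 : ℕ) : ℝ)) ^ (j + 1)) ^ 2 := by gcongr
    _ = _ := by rw [← pow_mul]; congr 1; ring

theorem one_sub_inv_pow_le_half {p : ℕ} (hp : 1 ≤ p) (hpn : p ≤ n) :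
    (1 - 1 / (p : ℝ)) ^ n ≤ 1 / 2 := by
  have hp0 : (0 : ℝ) < p := by exact_mod_cast hp
  have h0 : 1 / (p : ℝ) ≤ 1 := by
    rw [div_le_one hp0]
    exact_mod_cast hp
  have h1 : 1 - 1 / (p : ℝ) ≤ Real.exp (-(1 / p)) := by
    linarith [Real.add_one_le_exp (-(1 / (p : ℝ)))]
  calc (1 - 1 / (p : ℝ)) ^ n ≤ (1 - 1 / (p : ℝ)) ^ p :=
        pow_le_pow_of_le_one (by linarith) (by linarith [one_div_pos.2 hp0]) hpn
    _ ≤ Real.exp (-(1 / p)) ^ p := pow_le_pow_left₀ (by linarith) h1 p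
    _ = Real.exp (-1) := by
        rw [← Real.exp_nat_mul]
        congr 1
        field_simp
    _ ≤ 1 / 2 := by
        rw [Real.exp_neg, ← one_div]
        exact one_div_le_one_div_of_le two_pos (by linarith [Real.add_one_le_exp (1 : ℝ)])

theorem absMoment_natCast_smul (m : ℕ) {a : ℝ} (ha : 0 ≤ a) (ξ : E n) :
    absMoment C m (a • ξ) = a ^ m * absMoment C m ξ := by
  rw [absMoment_smul, abs_of_nonneg ha, Real.rpow_natCast]

theorem volume_smul_toReal {a : ℝ} (ha : 0 ≤ a) (s : Set (E n)) :
    (volume (a • s)).toReal = a ^ n * (volume s).toReal := by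
  rw [Measure.addHaar_smul, finrank_euclideanSpace, Fintype.card_fin, ENNReal.toReal_mul,
    ENNReal.toReal_ofReal (abs_nonneg _), abs_of_nonneg (by positivity)]

theorem toReal_volume_le_add_of_subset_union {s t u : Set (E n)} (ht : Bornology.IsBounded t)
    (hu : Bornology.IsBounded u) (h : s ⊆ t ∪ u) :
    (volume s).toReal ≤ (volume t).toReal + (volume u).toReal := by
  rw [← ENNReal.toReal_add ht.measure_lt_top.ne hu.measure_lt_top.ne]
  exact ENNReal.toReal_mono (ENNReal.add_ne_top.2 ⟨ht.measure_lt_top.ne, hu.measure_lt_top.ne⟩)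
    ((measure_mono h).trans (measure_union_le _ _))

theorem volume_momentBody_le_add (hn : 1 ≤ n) (hC : IsCompact C)
    (hC1 : (volume C).toReal = 1) {r : ℝ} (hr : 0 < r) (hrC : ball 0 r ⊆ C) {j : ℕ}
    (hj : 2 * j + 2 ≤ n) : ∃ σ : ℝ, 0 ≤ σ ∧
      σ * (volume (momentBody C (2 * j + 2 : ℕ))).toReal ≤ (2 ^ 99 / (n * (2 * j + 2))) ^ n ∧
      (volume (momentBody C (2 * (2 * j + 2) : ℕ))).toReal ≤
        2 * σ + (1 / 4) ^ n * (volume (momentBody C (2 * j + 2 : ℕ))).toReal := by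
  have hp1 : (1 : ℝ) ≤ (2 * j + 2 : ℕ) := by exact_mod_cast (by omega : 1 ≤ 2 * j + 2)
  have hp0 : (0 : ℝ) ≤ (2 * j + 2 : ℕ) := by positivity
  have hb := isBounded_momentBody hC hC1 hr hrC hp1
  have hc1 := continuous_absMoment hC hp0
  have hc2 := continuous_absMoment hC (p := (2 * (2 * j + 2) : ℕ)) (by positivity)
  set p := 2 * j + 2 with hp
  set T : Set (E n) := {ξ | absMoment C p ξ ≤ 1 ∧
    absMoment C (2 * p : ℕ) ξ ≤ 16 ^ p * absMoment C p ξ ^ 2} with hT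
  have hTb : Bornology.IsBounded T := hb.subset fun ξ hξ => hξ.1
  have hTc : IsClosed T := (isClosed_le hc1 continuous_const).inter
    (isClosed_le hc2 (by fun_prop))
  set S : Set (E n) := T ∩ {ξ | 1 / 4 ≤ absMoment C p ξ} with hS
  have hSc : IsClosed S := hTc.inter (isClosed_le continuous_const hc1)
  have hSb : Bornology.IsBounded S := hTb.subset inter_subset_left
  set l : ℝ := 1 - 1 / (p : ℝ) with hl
  have hl4 : 1 / 4 ≤ l ^ p := one_fourth_le_one_sub_inv_pow j
  have hl0 : 0 < l := by
    rw [hl, sub_pos, div_lt_one (by positivity)]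
    exact_mod_cast (by omega : 1 < p)
  have hTS : T ⊆ S ∪ l • T := by
    intro ξ hξ
    rcases le_or_gt (1 / 4) (absMoment C p ξ) with h | h
    · exact .inl ⟨hξ, h⟩
    · right
      rw [mem_smul_set_iff_inv_smul_mem₀ hl0.ne']
      have hl0' := inv_pos.2 hl0
      refine ⟨?_, ?_⟩
      · rw [absMoment_natCast_smul p hl0'.le, inv_pow, inv_mul_le_iff₀ (by positivity)]
        linarith
      · rw [absMoment_natCast_smul _ hl0'.le, absMoment_natCast_smul _ hl0'.le]
        calc l⁻¹ ^ (2 * p) * absMoment C (2 * p : ℕ) ξ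
            ≤ l⁻¹ ^ (2 * p) * (16 ^ p * absMoment C p ξ ^ 2) := by
              gcongr
              exact hξ.2
          _ = _ := by ring
  have hvT : (volume T).toReal ≤ 2 * (volume S).toReal := by
    have h1 := toReal_volume_le_add_of_subset_union hSb (hTb.smul₀ l) hTS
    rw [volume_smul_toReal hl0.le] at h1
    have h2 : l ^ n * (volume T).toReal ≤ 1 / 2 * (volume T).toReal :=
      mul_le_mul_of_nonneg_right (one_sub_inv_pow_le_half (by omega) hj) (by positivity)
    linarith
  refine ⟨(volume S).toReal, by positivity, ?_, ?_⟩
  · refine volume_mul_volume_momentBody_le hn hC hC1 hr hrC hj hSc.measurableSet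
      (fun ξ hξ => hξ.1.1) (fun ξ hξ => hξ.2) fun ξ hξ => hξ.1.2.trans ?_
    have : absMoment C p ξ ^ 2 ≤ 1 := pow_le_one₀ (absMoment_nonneg _ _) hξ.1.1
    exact mul_le_of_le_one_right (by positivity) this
  · have hsub : momentBody C (2 * p : ℕ) ⊆ T ∪ (1 / 4 : ℝ) • momentBody C p := by
      intro ξ hξ
      have h1 : absMoment C p ξ ≤ 1 := absMoment_le_one_of_le hC hC1 hp0 (by positivity)
        (by push_cast; linarith) hξ
      rcases le_or_gt ((1 / 4 : ℝ) ^ p) (absMoment C p ξ) with h | h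
      · refine .inl ⟨h1, (show absMoment C (2 * p : ℕ) ξ ≤ 1 from hξ).trans ?_⟩
        calc (1 : ℝ) = 16 ^ p * ((1 / 4) ^ p) ^ 2 := by
              rw [← pow_mul, mul_comm p 2, pow_mul, ← mul_pow]; norm_num
          _ ≤ _ := by gcongr
      · right
        rw [mem_smul_set_iff_inv_smul_mem₀ (by norm_num)]
        change absMoment C p _ ≤ 1
        rw [absMoment_natCast_smul _ (by norm_num), inv_pow, inv_mul_le_iff₀ (by positivity)]
        linarith
    have h1 := toReal_volume_le_add_of_subset_union hTb (hb.smul₀ (1 / 4 : ℝ)) hsub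
    rw [volume_smul_toReal (by norm_num)] at h1
    linarith

theorem volume_momentBody_two_pow_sq_le (hn : 1 ≤ n) (hC : IsCompact C)
    (hC1 : (volume C).toReal = 1) {r : ℝ} (hr : 0 < r) (hrC : ball 0 r ⊆ C) (i : ℕ)
    (hi : 2 ^ i ≤ 2 * n) :
    (volume (momentBody C (2 ^ i : ℕ))).toReal ^ 2 ≤ (2 ^ 102 / (n * 2 ^ i)) ^ n := by
  have hn0 : (0 : ℝ) < n := by exact_mod_cast hn
  have hone := volume_momentBody_one_sq_le hn hC hC1 hr hrC
  have hmono : ∀ k : ℕ, 1 ≤ k → (volume (momentBody C (2 * k : ℕ))).toReal ≤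
      (volume (momentBody C k)).toReal := fun k hk =>
    ENNReal.toReal_mono
      (isBounded_momentBody hC hC1 hr hrC (by exact_mod_cast hk)).measure_lt_top.ne
      (measure_mono (momentBody_subset_of_le hC hC1 (by positivity)
        (by exact_mod_cast (by omega : 0 < 2 * k)) (by exact_mod_cast (by omega : k ≤ 2 * k))))
  induction i with
  | zero =>
    simp only [pow_zero, Nat.cast_one, mul_one]
    refine hone.trans ?_
    gcongr <;> norm_num
  | succ i ih =>
    have hi' : 2 ^ i ≤ n := by rw [pow_succ] at hi; omega
    have ih := ih (by omega)
    rw [show (2 : ℕ) ^ (i + 1) = 2 * 2 ^ i from pow_succ' _ _,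
      show (2 : ℝ) ^ (i + 1) = 2 * 2 ^ i from pow_succ' _ _]
    have hk := hmono (2 ^ i) Nat.one_le_two_pow
    rcases i with _ | i
    · simp only [pow_zero, Nat.cast_one] at hk ⊢
      calc _ ≤ (volume (momentBody C 1)).toReal ^ 2 := by gcongr
        _ ≤ (2 ^ 53 / n) ^ n := hone
        _ ≤ _ := by
          refine pow_le_pow_left₀ (by positivity) ?_ n
          rw [div_le_div_iff₀ (by positivity) (by positivity)]
          linarith
    · obtain ⟨j, hj⟩ : ∃ j, 2 ^ (i + 1) = 2 * j + 2 :=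
        ⟨2 ^ i - 1, by have := Nat.one_le_two_pow (n := i); rw [pow_succ]; omega⟩
      have hj' : (2 : ℝ) ^ (i + 1) = 2 * j + 2 := by exact_mod_cast hj
      rw [hj] at hi' ih hk ⊢
      rw [hj'] at ih ⊢
      obtain ⟨σ, hσ0, hσ1, hσ2⟩ := volume_momentBody_le_add hn hC hC1 hr hrC hi'
      set u := (volume (momentBody C (2 * j + 2 : ℕ))).toReal
      set v := (volume (momentBody C (2 * (2 * j + 2) : ℕ))).toReal
      have hu0 : 0 ≤ u := by positivity
      have hv0 : 0 ≤ v := by positivity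
      rcases le_total ((1 / 4) ^ n * u) (v / 2) with h | h
      · calc v ^ 2 = v * v := sq v
          _ ≤ (4 * σ) * u := by gcongr; linarith
          _ = 4 * (σ * u) := by ring
          _ ≤ 4 * (2 ^ 99 / (n * (2 * j + 2))) ^ n := by gcongr
          _ ≤ 4 ^ n * (2 ^ 99 / (n * (2 * j + 2))) ^ n := by
              gcongr
              exact le_self_pow₀ (by norm_num) (by omega)
          _ = (2 ^ 102 / (n * (2 * (2 * j + 2)))) ^ n := by
              have e : (4 : ℝ) * (2 ^ 99 / (n * (2 * j + 2))) =
                  2 ^ 102 / (n * (2 * (2 * j + 2))) := by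
                rw [← mul_div_assoc, div_eq_div_iff (by positivity) (by positivity)]
                ring
              rw [← mul_pow, e]
      · calc v ^ 2 ≤ (2 * ((1 / 4) ^ n * u)) ^ 2 := by gcongr; linarith
          _ = 4 * ((1 / 4) ^ 2) ^ n * u ^ 2 := by rw [← pow_mul]; ring
          _ ≤ 4 ^ n * ((1 / 4) ^ 2) ^ n * (2 ^ 102 / (n * (2 * j + 2))) ^ n := by
              gcongr
              exact le_self_pow₀ (by norm_num) (by omega)
          _ = ((1 / 4) * (2 ^ 102 / (n * (2 * j + 2)))) ^ n := by
              rw [← mul_pow, ← mul_pow]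
              norm_num
          _ ≤ (2 ^ 102 / (n * (2 * (2 * j + 2)))) ^ n := by
              refine pow_le_pow_left₀ (by positivity) ?_ n
              rw [div_mul_div_comm]
              gcongr ?_ / ?_
              · norm_num
              · nlinarith [(Nat.cast_nonneg j : (0 : ℝ) ≤ j), mul_nonneg hn0.le
                  (Nat.cast_nonneg j : (0 : ℝ) ≤ j)]

end MomentStep

theorem volume_momentBody_le {n : ℕ} {C : Set (E n)} (hn : 1 ≤ n) (hC : IsCompact C)
    (hC1 : (volume C).toReal = 1) {r : ℝ} (hr : 0 < r) (hrC : ball 0 r ⊆ C) {p : ℝ}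
    (hp : 1 ≤ p) :
    (volume (momentBody C p)).toReal ≤ (2 ^ 52 / n * √((n + p) / p)) ^ n := by
  have hn1 : (1 : ℝ) ≤ n := by exact_mod_cast hn
  set m : ℝ := min p n with hm
  have hm1 : 1 ≤ m := le_min hp hn1
  set k : ℕ := ⌊m⌋₊ with hk
  have hk0 : k ≠ 0 := (Nat.floor_pos.2 hm1).ne'
  set i : ℕ := Nat.log 2 k
  have hik : 2 ^ i ≤ k := Nat.pow_log_le_self 2 hk0
  have hki : k + 1 ≤ 2 ^ (i + 1) := Nat.lt_pow_succ_log_self one_lt_two k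
  have him : ((2 ^ i : ℕ) : ℝ) ≤ m :=
    le_trans (by exact_mod_cast hik) (Nat.floor_le (by linarith))
  have hmi : m ≤ 2 * 2 ^ i := by
    have h1 : ((k + 1 : ℕ) : ℝ) ≤ ((2 ^ (i + 1) : ℕ) : ℝ) := by exact_mod_cast hki
    have h2 := Nat.lt_floor_add_one m
    push_cast [pow_succ'] at h1
    linarith
  have hin : 2 ^ i ≤ n := by exact_mod_cast him.trans (min_le_right _ _)
  have hi1 : (1 : ℝ) ≤ (2 ^ i : ℕ) := by exact_mod_cast Nat.one_le_two_pow
  have hle : (volume (momentBody C p)).toReal ≤ (volume (momentBody C (2 ^ i : ℕ))).toReal :=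
    ENNReal.toReal_mono (isBounded_momentBody hC hC1 hr hrC hi1).measure_lt_top.ne
      (measure_mono (momentBody_subset_of_le hC hC1 (by positivity) (by linarith)
        (him.trans (min_le_left _ _))))
  have hpos : (0 : ℝ) < (n + p) / p := by positivity
  refine (pow_le_pow_iff_left₀ (by positivity) (by positivity) two_ne_zero).1 ?_
  calc (volume (momentBody C p)).toReal ^ 2
      ≤ (volume (momentBody C (2 ^ i : ℕ))).toReal ^ 2 := by gcongr
    _ ≤ ((2 : ℝ) ^ 102 / (n * 2 ^ i)) ^ n :=
        volume_momentBody_two_pow_sq_le hn hC hC1 hr hrC i (by omega)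
    _ ≤ ((2 ^ 52 / n) ^ 2 * ((n + p) / p)) ^ n := by
        refine pow_le_pow_left₀ (by positivity) ?_ n
        rw [div_pow, div_mul_div_comm, div_le_div_iff₀ (by positivity) (by positivity)]
        have h1 : n * p ≤ m * (n + p) := by
          rcases min_choice p n with h | h <;> rw [hm, h] <;> nlinarith
        have h2 : n * p ≤ 2 * 2 ^ i * (n + p) :=
          h1.trans (mul_le_mul_of_nonneg_right hmi (by positivity))
        have h3 : (0 : ℝ) ≤ 2 ^ i * (n + p) := by positivity
        calc (2 : ℝ) ^ 102 * (n ^ 2 * p) = 2 ^ 102 * n * (n * p) := by ring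
          _ ≤ 2 ^ 102 * n * (2 * 2 ^ i * (n + p)) := by gcongr
          _ ≤ 2 ^ 102 * n * (4 * 2 ^ i * (n + p)) := by gcongr; norm_num
          _ = _ := by ring
    _ = ((2 ^ 52 / n * √((n + p) / p)) ^ n) ^ 2 := by
        rw [← pow_mul, mul_comm n 2, pow_mul, mul_pow (2 ^ 52 / (n : ℝ)), Real.sq_sqrt hpos.le]

namespace IsSymmetricConvexBody

variable {n : ℕ} {K : Set (E n)}

theorem smul (hK : IsSymmetricConvexBody K) {a : ℝ} (ha : a ≠ 0) :
    IsSymmetricConvexBody (a • K) := by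
  refine ⟨hK.1.smul a, hK.2.1.smul a, ?_, ?_⟩
  · rw [← smul_zero a, interior_smul₀ ha]
    exact smul_mem_smul_set hK.2.2.1
  · rintro _ ⟨x, hx, rfl⟩
    exact ⟨-x, hK.2.2.2 x hx, smul_neg a x⟩

theorem polarSet_polarSet (hK : IsSymmetricConvexBody K) :
    _root_.polarSet (_root_.polarSet K) = K := by
  ext x
  refine ⟨fun hx => ?_, fun hx y hy => by rw [real_inner_comm]; exact hy x hx⟩
  by_contra hxK
  obtain ⟨f, u, hf, hu⟩ := geometric_hahn_banach_closed_point hK.2.1 hK.1.isClosed hxK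
  have hu0 : 0 < u := by simpa using hf 0 hK.zero_mem
  set y : E n := (InnerProductSpace.toDual ℝ (E n)).symm f
  have hy : ∀ z, ⟪y, z⟫ = f z := fun z => by simp [y]
  have h : u⁻¹ • y ∈ _root_.polarSet K := fun z hz => by
    rw [real_inner_smul_left, hy, inv_mul_le_one₀ hu0]
    exact (hf z hz).le
  have := hx _ h
  rw [real_inner_smul_right, real_inner_comm, hy, inv_mul_le_one₀ hu0] at this
  linarith

end IsSymmetricConvexBody

section MomentBall

variable {n : ℕ} {C : Set (E n)}

theorem convexOn_absMoment (hC : IsCompact C) {p : ℝ} (hp : 1 ≤ p) :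
    ConvexOn ℝ univ (absMoment C p) := by
  have hp0 : 0 ≤ p := by linarith
  refine ⟨convex_univ, fun ξ _ η _ s t hs ht hst => ?_⟩
  have hi := fun ζ => integrableOn_abs_inner_rpow hC hp0 ζ
  rw [smul_eq_mul, smul_eq_mul, absMoment, absMoment, absMoment, ← integral_const_mul,
    ← integral_const_mul, ← integral_add ((hi _).const_mul _) ((hi _).const_mul _)]
  refine integral_mono (hi _) (((hi _).const_mul _).add ((hi _).const_mul _)) fun x => ?_
  calc |⟪x, s • ξ + t • η⟫| ^ p ≤ (s * |⟪x, ξ⟫| + t * |⟪x, η⟫|) ^ p := by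
        gcongr
        rw [inner_add_right, real_inner_smul_right, real_inner_smul_right]
        refine (abs_add_le _ _).trans_eq ?_
        rw [abs_mul, abs_mul, abs_of_nonneg hs, abs_of_nonneg ht]
    _ ≤ _ := (convexOn_rpow hp).2 (mem_Ici.2 (abs_nonneg _)) (mem_Ici.2 (abs_nonneg _)) hs ht hst

theorem isSymmetricConvexBody_momentBody (hC : IsCompact C) (hC1 : (volume C).toReal = 1)
    {r : ℝ} (hr : 0 < r) (hrC : ball 0 r ⊆ C) {p : ℝ} (hp : 1 ≤ p) :
    IsSymmetricConvexBody (momentBody C p) := by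
  have hp0 : 0 ≤ p := by linarith
  refine ⟨Metric.isCompact_of_isClosed_isBounded (isClosed_momentBody hC hp0)
    (isBounded_momentBody hC hC1 hr hrC hp), ?_, ?_, fun x hx => ?_⟩
  · simpa [momentBody] using (convexOn_absMoment hC hp).convex_le 1
  · refine interior_maximal (t := {ξ | absMoment C p ξ < 1})
      (fun ξ (hξ : absMoment C p ξ < 1) => hξ.le)
      (isOpen_lt (continuous_absMoment hC hp0) continuous_const) ?_
    change absMoment C p 0 < 1
    rw [absMoment_zero_right (by linarith)]
    exact one_pos
  · change absMoment C p (-x) ≤ 1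
    rw [← neg_one_smul ℝ x, absMoment_smul]
    rw [abs_neg, abs_one, Real.one_rpow, one_mul]
    exact hx

theorem gauge_momentBody_rpow (hC : IsCompact C) (hC1 : (volume C).toReal = 1)
    {r : ℝ} (hr : 0 < r) (hrC : ball 0 r ⊆ C) {p : ℝ} (hp : 1 ≤ p) (x : E n) :
    gauge (momentBody C p) x ^ p = absMoment C p x := by
  have hp0 : 0 < p := by linarith
  have hM := isSymmetricConvexBody_momentBody hC hC1 hr hrC hp
  have key : ∀ s : ℝ, 0 < s → (gauge (momentBody C p) x ≤ s ↔ absMoment C p x ≤ s ^ p) := by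
    intro s hs
    have h1 : gauge (momentBody C p) (s⁻¹ • x) ≤ 1 ↔ absMoment C p (s⁻¹ • x) ≤ 1 :=
      hM.gauge_le_one_iff
    rw [hM.gauge_smul, absMoment_smul, abs_of_pos (inv_pos.2 hs), Real.inv_rpow hs.le,
      inv_mul_le_one₀ hs, inv_mul_le_one₀ (by positivity)] at h1
    exact h1
  rcases eq_or_ne x 0 with rfl | hx
  · rw [gauge_zero, Real.zero_rpow hp0.ne', absMoment_zero_right hp0.ne']
  have hpos := absMoment_pos hC hr hrC hp0.le hx
  have hg : 0 < gauge (momentBody C p) x :=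
    (gauge_nonneg x).lt_of_ne fun h => hx (hM.eq_zero_of_gauge_eq_zero h.symm)
  refine le_antisymm ?_ ((key _ hg).1 le_rfl)
  have h := (key (absMoment C p x ^ (1 / p)) (by positivity)).2
    (by rw [← Real.rpow_mul hpos.le, one_div_mul_cancel hp0.ne', Real.rpow_one])
  calc gauge (momentBody C p) x ^ p ≤ (absMoment C p x ^ (1 / p)) ^ p := by gcongr
    _ = _ := by rw [← Real.rpow_mul hpos.le, one_div_mul_cancel hp0.ne', Real.rpow_one]

theorem Zp_eq_polarSet_momentBody (hC : IsCompact C) (hC1 : (volume C).toReal = 1)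
    {r : ℝ} (hr : 0 < r) (hrC : ball 0 r ⊆ C) {p : ℝ} (hp : 1 ≤ p) :
    Zp n p C = polarSet (momentBody C p) := by
  have hp0 : 0 < p := by linarith
  have hM := isSymmetricConvexBody_momentBody hC hC1 hr hrC hp
  ext y
  refine ⟨fun hy θ hθ => (hy θ).trans
    (Real.rpow_le_one (absMoment_nonneg p θ) hθ (by positivity)), fun hy θ => ?_⟩
  have h := gauge_momentBody_rpow hC hC1 hr hrC hp θ
  calc ⟪y, θ⟫ ≤ gauge (momentBody C p) θ * gauge (polarSet (momentBody C p)) y :=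
        hM.inner_le_gauge_mul_gauge_polarSet hM.polarSet y θ
    _ ≤ gauge (momentBody C p) θ * 1 := by
        gcongr
        · exact gauge_nonneg θ
        · exact gauge_le_one_of_mem hy
    _ = (absMoment C p θ) ^ (1 / p) := by
        rw [← h, ← Real.rpow_mul (gauge_nonneg θ), mul_one_div_cancel hp0.ne', Real.rpow_one,
          mul_one]

theorem polarSet_Zp (hC : IsCompact C) (hC1 : (volume C).toReal = 1)
    {r : ℝ} (hr : 0 < r) (hrC : ball 0 r ⊆ C) {p : ℝ} (hp : 1 ≤ p) :
    polarSet (Zp n p C) = momentBody C p := by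
  rw [Zp_eq_polarSet_momentBody hC hC1 hr hrC hp,
    (isSymmetricConvexBody_momentBody hC hC1 hr hrC hp).polarSet_polarSet]

theorem exists_measure_sphere_integral_eq (hn : n ≠ 0) (hC : IsCompact C) {p : ℝ} (hp : 0 < p)
    {b : ℝ} (hb : 0 ≤ b) :
    ∃ ν : Measure (sphere (0 : E n) 1), IsFiniteMeasure ν ∧
      ∀ x : E n, b * absMoment C p x = ∫ θ : sphere (0 : E n) 1, |⟪x, (θ : E n)⟫| ^ p ∂ν := by
  have : Nonempty (Fin n) := ⟨⟨0, Nat.pos_of_ne_zero hn⟩⟩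
  obtain ⟨e, he⟩ := (NormedSpace.sphere_nonempty (E := E n) (x := 0) (r := 1)).2 zero_le_one
  have hmem : ∀ z : E n, (if z = 0 then e else ‖z‖⁻¹ • z) ∈ sphere (0 : E n) 1 := fun z => by
    split_ifs with h
    · exact he
    · rw [mem_sphere_zero_iff_norm, norm_smul, norm_inv, norm_norm,
        inv_mul_cancel₀ (norm_ne_zero_iff.2 h)]
  set N : E n → sphere (0 : E n) 1 := fun z => ⟨_, hmem z⟩ with hN
  have hNm : Measurable N := by
    refine Measurable.subtype_mk (Measurable.ite (measurableSet_singleton 0) measurable_const ?_)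
    fun_prop
  have hd : Measurable fun z : E n => (b * ‖z‖ ^ p).toNNReal := by fun_prop
  have hcont : Continuous fun z : E n => b * ‖z‖ ^ p :=
    continuous_const.mul (continuous_norm.rpow_const fun _ => .inr hp.le)
  refine ⟨((volume.restrict C).withDensity fun z => ((b * ‖z‖ ^ p).toNNReal : ℝ≥0∞)).map N,
    ?_, fun x => ?_⟩
  · have : IsFiniteMeasure ((volume.restrict C).withDensity
        fun z => ((b * ‖z‖ ^ p).toNNReal : ℝ≥0∞)) :=
      isFiniteMeasure_withDensity_ofReal
        (hcont.continuousOn.integrableOn_compact hC).hasFiniteIntegral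
    exact Measure.isFiniteMeasure_map _ _
  · rw [integral_map hNm.aemeasurable (by
      refine Continuous.aestronglyMeasurable ?_
      exact (continuous_const.inner continuous_subtype_val).abs.rpow_const fun _ => .inr hp.le),
      integral_withDensity_eq_integral_smul hd, absMoment, ← integral_const_mul]
    refine integral_congr_ae (.of_forall fun z => ?_)
    change b * |⟪z, x⟫| ^ p = (b * ‖z‖ ^ p).toNNReal • |⟪x, if z = 0 then e else ‖z‖⁻¹ • z⟫| ^ p
    rw [NNReal.smul_def, Real.coe_toNNReal _ (by positivity), smul_eq_mul]
    split_ifs with h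
    · simp [h, Real.zero_rpow hp.ne']
    · have hz : 0 < ‖z‖ := norm_pos_iff.2 h
      rw [real_inner_smul_right, abs_mul, abs_of_pos (inv_pos.2 hz),
        Real.mul_rpow (by positivity) (abs_nonneg _), Real.inv_rpow hz.le, real_inner_comm]
      have : ‖z‖ ^ p ≠ 0 := by positivity
      field_simp

theorem isLpBall_smul_momentBody (hn : n ≠ 0) (hC : IsCompact C) (hC1 : (volume C).toReal = 1)
    {r : ℝ} (hr : 0 < r) (hrC : ball 0 r ⊆ C) {p : ℝ} (hp : 1 ≤ p) {a : ℝ} (ha : 0 < a) :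
    IsLpBall n p (a • momentBody C p) := by
  obtain ⟨ν, hν, h⟩ := exists_measure_sphere_integral_eq hn hC (p := p) (b := (a ^ p)⁻¹)
    (by linarith) (by positivity)
  refine ⟨(isSymmetricConvexBody_momentBody hC hC1 hr hrC hp).smul ha.ne', ν, hν, fun x => ?_⟩
  rw [← h, gauge_smul_left_of_nonneg ha.le, Pi.smul_apply, smul_eq_mul,
    Real.mul_rpow (by positivity) (gauge_nonneg x), Real.inv_rpow ha.le,
    gauge_momentBody_rpow hC hC1 hr hrC hp]

end MomentBall

/-- Theorem 3 (upper bound): the outer volume ratio distance to unit balls of subspaces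
of L_p is at most c sqrt((n+p)/p), witnessed by the concrete body
L = |K°|^{-1/n} (Z_p(C))° with C = K°/|K°|^{1/n}. -/
theorem dovrLp_upper_bound :
    ∃ c : ℝ, 0 < c ∧ ∀ (n : ℕ), 2 ≤ n → ∀ p : ℝ, 1 ≤ p →
      ∀ K : Set (E n), IsSymmetricConvexBody K →
        dovrLp n p K ≤ c * Real.sqrt (((n : ℝ) + p) / p) ∧
        (∀ C L : Set (E n),
          C = (volume (polarSet K)).toReal ^ (-(1 : ℝ) / n) • polarSet K →
          L = (volume (polarSet K)).toReal ^ (-(1 : ℝ) / n) • polarSet (Zp n p C) →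
          K ⊆ L ∧ IsLpBall n p L ∧
            ((volume L).toReal / (volume K).toReal) ^ ((1 : ℝ) / n) ≤
              c * Real.sqrt (((n : ℝ) + p) / p)) := by
  refine ⟨2 ^ 54, by norm_num, fun n hn p hp K hK => ?_⟩
  set v := (volume (polarSet K)).toReal with hv
  have hv0 : 0 < v := hK.polarSet.volume_toReal_pos
  have hK0 : 0 < (volume K).toReal := hK.volume_toReal_pos
  have hn0 : (0 : ℝ) < n := by exact_mod_cast (by omega : 0 < n)
  set a := v ^ (-(1 : ℝ) / n) with ha
  have ha0 : 0 < a := by positivity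
  have han : a ^ n = v⁻¹ := by
    rw [ha, ← Real.rpow_natCast, ← Real.rpow_mul hv0.le, div_mul_cancel₀ _ hn0.ne',
      Real.rpow_neg_one]
  have hCK : IsSymmetricConvexBody (a • polarSet K) := hK.polarSet.smul ha0.ne'
  have hC1 : (volume (a • polarSet K)).toReal = 1 := by
    rw [volume_smul_toReal ha0.le, han, inv_mul_cancel₀ hv0.ne']
  obtain ⟨r, hr, hrC⟩ := Metric.mem_nhds_iff.1 hCK.mem_nhds_zero
  have hpolar := polarSet_Zp hCK.1 hC1 hr hrC hp
  have hsub : K ⊆ a • momentBody (a • polarSet K) p := by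
    intro x hx
    rw [mem_smul_set_iff_inv_smul_mem₀ ha0.ne']
    have hb : ∀ z ∈ a • polarSet K, |⟪z, a⁻¹ • x⟫| ^ p ≤ 1 := by
      rintro _ ⟨w, hw, rfl⟩
      refine Real.rpow_le_one (abs_nonneg _) ?_ (by linarith)
      change |⟪a • w, a⁻¹ • x⟫| ≤ 1
      rw [real_inner_smul_left, real_inner_smul_right, mul_inv_cancel_left₀ ha0.ne', abs_le]
      have h1 := hw x hx
      have h2 := hw _ (hK.2.2.2 x hx)
      rw [inner_neg_right] at h2
      constructor <;> linarith
    calc absMoment (a • polarSet K) p (a⁻¹ • x) ≤ ∫ _ in a • polarSet K, (1 : ℝ) :=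
          setIntegral_mono_on (integrableOn_abs_inner_rpow hCK.1 (by linarith) _)
            (integrableOn_const hCK.1.measure_lt_top.ne) hCK.1.measurableSet hb
      _ = 1 := by rw [setIntegral_const, smul_eq_mul, mul_one]; exact hC1
  have hball := isLpBall_smul_momentBody (by omega) hCK.1 hC1 hr hrC hp ha0
  have hratio : ((volume (a • momentBody (a • polarSet K) p)).toReal / (volume K).toReal) ^
      ((1 : ℝ) / n) ≤ 2 ^ 54 * √((n + p) / p) := by
    have h1 := volume_momentBody_le (by omega) hCK.1 hC1 hr hrC hp
    have h2 := pow_le_volume_mul_volume_polarSet (by omega) hK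
    rw [← hv, one_div, inv_pow, inv_le_iff_one_le_mul₀ (by positivity)] at h2
    have h3 : (volume (a • momentBody (a • polarSet K) p)).toReal / (volume K).toReal ≤
        (2 ^ 54 * √((n + p) / p)) ^ n := by
      rw [volume_smul_toReal ha0.le, han, div_le_iff₀ hK0, inv_mul_le_iff₀ hv0]
      calc (volume (momentBody (a • polarSet K) p)).toReal
          ≤ (2 ^ 52 / n * √((n + p) / p)) ^ n := h1
        _ = (2 ^ 52 / n * √((n + p) / p)) ^ n * 1 := (mul_one _).symm
        _ ≤ (2 ^ 52 / n * √((n + p) / p)) ^ n * ((volume K).toReal * v * (4 * n) ^ n) := by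
            gcongr
        _ = (2 ^ 52 / n * √((n + p) / p) * (4 * n)) ^ n * ((volume K).toReal * v) := by
            rw [mul_pow _ (4 * (n : ℝ))]
            ring
        _ = (2 ^ 54 * √((n + p) / p)) ^ n * ((volume K).toReal * v) := by
            have e : 2 ^ 52 / n * √((n + p) / p) * (4 * n) = 2 ^ 54 * √((n + p) / p) := by
              field_simp
              norm_num
            rw [e]
        _ = _ := by ring
    calc _ ≤ ((2 ^ 54 * √((n + p) / p)) ^ n) ^ ((1 : ℝ) / n) := by gcongr
      _ = _ := by
        rw [one_div, Real.pow_rpow_inv_natCast (by positivity) (by omega)]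
  refine ⟨?_, ?_⟩
  · refine le_trans (csInf_le ⟨0, ?_⟩ ⟨_, hsub, hball, rfl⟩) hratio
    rintro _ ⟨D, -, -, rfl⟩
    positivity
  · rintro _ _ rfl rfl
    rw [hpolar]
    exact ⟨hsub, hball, hratio⟩
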